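/- arXiv:2012.03102 — 2 statements merged into one kernel-verified Lean document; each statement's English description precedes it below -/
import Mathlib

section
/- Let g ∈ ℤ[x] be irreducible with degree d ≥ 2 and leading coefficient c, let α ∈ ℂ be a root of g, and let K = ℚ(α). Set 𝐃_g = |c|^{(d−1)(d−2)}·|D_g|. Then the Dedekind zeta residue κ_K satisfies 0.36232/√𝐃_g ≤ κ_K ≤ ( e·log 𝐃_g / (2(d−1)) )^{d−1}. -/
open Polynomial

/-- Sylvester matrix of `f` and `g` (columns of `f`-coefficients first). -/
noncomputable def sylvesterMat (f g : Polynomial ℤ) :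
    Matrix (Fin (g.natDegree + f.natDegree)) (Fin (g.natDegree + f.natDegree)) ℤ :=
  fun i j =>
    if (j : ℕ) < g.natDegree then
      (if (j : ℕ) ≤ (i : ℕ) ∧ (i : ℕ) ≤ (j : ℕ) + f.natDegree
        then f.coeff (f.natDegree + j - i) else 0)
    else
      (if (j : ℕ) - g.natDegree ≤ (i : ℕ) ∧ (i : ℕ) ≤ (j : ℕ)
        then g.coeff ((j : ℕ) - (i : ℕ)) else 0)

/-- The resultant `R(f,g)` of two integer polynomials: the determinant of the
Sylvester matrix. -/
noncomputable def resultantZ (f g : Polynomial ℤ) : ℤ := (sylvesterMat f g).det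

/-- The discriminant `D_f = ((-1)^(n(n-1)/2)/a_n) · R(f, f')` of an integer polynomial
(the division is exact). -/
noncomputable def polyDisc (f : Polynomial ℤ) : ℤ :=
  ((-1 : ℤ) ^ (f.natDegree * (f.natDegree - 1) / 2) * resultantZ f (derivative f))
    / f.leadingCoeff

/-- The residue at `s = 1` of the Dedekind zeta function of a number field `K`, given by the
analytic class number formula: `κ_K = 2^{r₁} (2π)^{r₂} h_K R_K / (w_K √|Δ_K|)`. -/
noncomputable def kappa (K : Type*) [Field K] [NumberField K] : ℝ :=
  2 ^ NumberField.InfinitePlace.nrRealPlaces K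
    * (2 * Real.pi) ^ NumberField.InfinitePlace.nrComplexPlaces K
    * NumberField.classNumber K * NumberField.Units.regulator K
    / (NumberField.Units.torsionOrder K * Real.sqrt |(NumberField.discr K : ℝ)|)

/-!
Both inequalities follow from bounds for `κ_K` in terms of `|Δ_K| ≤ 𝐃_g`, by integrating over the
Minkowski space of `K` and unfolding along the action of the units.

Lower bound: if units `u ≡ v` modulo `2` with `v ≠ ±u` both lie in a translate of the box
`|log |x|_w| ≤ 0.65`, then by the parallelogram law one of the nonzero integers `(u ± v) / 2` has a
trace form smaller than its norm allows. So every unit orbit meets the box at most `2 ^ (n + 1)`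
times, and unfolding gives a lower bound for `R_K / w_K`.

Upper bound: for an autocorrelation `φ`, Cauchy–Schwarz over a fundamental domain of the lattice of
an ideal `J` bounds `∑_{x ≠ 0} φ(y x)` from below by `(covolume)⁻¹ - φ(0)`, in place of Poisson
summation. Integrating against `|N y| ^ (s - 1)`, unfolding, and summing over the ideal classes
bounds `κ_K` by `ζ_K(s)` times Gamma factors and a power of `|Δ_K|`. Finally `ζ_K(s) ≤ ζ(s) ^ n`,
and `s = 1 + 2 (n - 1) / log |Δ_K|`.
-/

namespace DedekindResidue

open MeasureTheory Module NumberField NumberField.InfinitePlace NumberField.Units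
open NumberField.mixedEmbedding NumberField.mixedEmbedding.fundamentalCone
open scoped ENNReal nonZeroDivisors Pointwise

section ResultantDiscriminant

-- Reversing the order of both rows and columns turns one Sylvester matrix into the other.
lemma sylvesterMat_eq_submatrix_sylvester (f g : ℤ[X]) :
    sylvesterMat f g = (sylvester f g f.natDegree g.natDegree).submatrix
      ((finCongr (add_comm g.natDegree f.natDegree)).trans Fin.revPerm)
      ((finCongr (add_comm g.natDegree f.natDegree)).trans Fin.revPerm) := by
  ext ⟨i, hi⟩ ⟨j, hj⟩
  simp only [Matrix.submatrix_apply, sylvester, Matrix.of_apply, sylvesterMat, Equiv.trans_apply,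
    finCongr_apply, Fin.revPerm_apply]
  by_cases hjg : j < g.natDegree
  · have hcol : Fin.rev (Fin.cast (add_comm g.natDegree f.natDegree) ⟨j, hj⟩)
        = Fin.natAdd f.natDegree (⟨g.natDegree - 1 - j, by lia⟩ : Fin g.natDegree) := by
      ext; simp [Fin.val_rev]; lia
    rw [hcol, Fin.addCases_right]
    simp only [hjg, if_true, Fin.val_rev, Fin.val_cast, Set.mem_Icc]
    split_ifs <;> first | lia | (congr 1; lia)
  · have hcol : Fin.rev (Fin.cast (add_comm g.natDegree f.natDegree) ⟨j, hj⟩)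
        = Fin.castAdd g.natDegree
            (⟨g.natDegree + f.natDegree - 1 - j, by lia⟩ : Fin f.natDegree) := by
      ext; simp [Fin.val_rev]; lia
    rw [hcol, Fin.addCases_left]
    simp only [hjg, if_false, Fin.val_rev, Fin.val_cast, Set.mem_Icc]
    split_ifs <;> first | lia | (congr 1; lia)

lemma resultantZ_eq_resultant (f g : ℤ[X]) :
    resultantZ f g = resultant f g f.natDegree g.natDegree := by
  rw [resultantZ, sylvesterMat_eq_submatrix_sylvester, Matrix.det_submatrix_equiv_self, resultant]

lemma polyDisc_eq_discr {f : ℤ[X]} (hf : 0 < f.natDegree) : polyDisc f = f.discr := by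
  have hlead : f.leadingCoeff ≠ 0 := leadingCoeff_ne_zero.2 (ne_zero_of_natDegree_gt hf)
  have hsign : (-1 : ℤ) ^ (f.natDegree * (f.natDegree - 1) / 2) *
      ((-1) ^ (f.natDegree * (f.natDegree - 1) / 2) * f.leadingCoeff * f.discr) =
      f.leadingCoeff * f.discr := by
    rw [mul_assoc, ← mul_assoc, ← mul_pow]
    simp
  rw [polyDisc, resultantZ_eq_resultant, natDegree_derivative,
    resultant_deriv (natDegree_pos_iff_degree_pos.1 hf), hsign, Int.mul_ediv_cancel_left _ hlead]

variable {R S : Type*} [CommRing R] [CommRing S] [IsDomain S]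

lemma discr_map_of_injective {φ : R →+* S} (hφ : Function.Injective φ) {f : R[X]}
    (hf : 0 < f.natDegree) : (f.map φ).discr = φ f.discr := by
  have hdeg : (f.map φ).natDegree = f.natDegree := natDegree_map_eq_of_injective hφ f
  have hlead : (f.map φ).leadingCoeff ≠ 0 :=
    leadingCoeff_ne_zero.2 (ne_zero_of_natDegree_gt (hdeg ▸ hf))
  have hres := congrArg φ (resultant_deriv (natDegree_pos_iff_degree_pos.1 hf))
  rw [← resultant_map_map, ← derivative_map, ← hdeg,
    resultant_deriv (natDegree_pos_iff_degree_pos.1 (hdeg ▸ hf))] at hres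
  simp only [map_mul, map_pow, map_neg, map_one,
    ← leadingCoeff_map_of_injective hφ] at hres
  exact mul_left_cancel₀ (mul_ne_zero (by simp) hlead) hres

lemma discr_C_mul {c : S} (hc : c ≠ 0) {f : S[X]} (hf : 0 < f.natDegree) :
    (C c * f).discr = c ^ (2 * (f.natDegree - 1)) * f.discr := by
  have hdeg : (C c * f).natDegree = f.natDegree := natDegree_C_mul hc
  have hlead : f.leadingCoeff ≠ 0 := leadingCoeff_ne_zero.2 (ne_zero_of_natDegree_gt hf)
  have hres := resultant_deriv (natDegree_pos_iff_degree_pos.1 (hdeg ▸ hf))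
  rw [hdeg, derivative_C_mul, resultant_C_mul_left, resultant_C_mul_right,
    resultant_deriv (natDegree_pos_iff_degree_pos.1 hf), leadingCoeff_mul, leadingCoeff_C] at hres
  obtain ⟨e, he⟩ : ∃ e, f.natDegree = e + 1 := ⟨f.natDegree - 1, by lia⟩
  refine mul_left_cancel₀ (mul_ne_zero (a := (-1) ^ (f.natDegree * (f.natDegree - 1) / 2))
    (by simp) (mul_ne_zero hc hlead)) ?_
  rw [← hres, he, Nat.add_sub_cancel]
  ring

variable {F L : Type*} [Field F] [Field L] [Algebra F L] [Algebra.IsSeparable F L]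

lemma norm_aeval_gen_eq_resultant (pb : PowerBasis F L) {p : F[X]} {n : ℕ}
    (hp : p.natDegree ≤ n) :
    Algebra.norm F (aeval pb.gen p) =
      resultant (minpoly F pb.gen) p (minpoly F pb.gen).natDegree n := by
  classical
  have := pb.finite
  let E := AlgebraicClosure F
  let m := (minpoly F pb.gen).map (algebraMap F E)
  have hnodup : m.roots.Nodup :=
    nodup_roots (Separable.map (Algebra.IsSeparable.isSeparable F pb.gen))
  apply (algebraMap F E).injective
  calc algebraMap F E (Algebra.norm F (aeval pb.gen p))
      = ∏ σ : L →ₐ[F] E, aeval (σ pb.gen) p := by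
        simp only [Algebra.norm_eq_prod_embeddings, aeval_algHom_apply]
    _ = ∏ y : {y // y ∈ m.roots}, aeval (y : E) p :=
        Fintype.prod_equiv pb.liftEquiv' _ _ fun σ ↦ by simp [PowerBasis.liftEquiv'_apply_coe]
    _ = (m.roots.map (p.map (algebraMap F E)).eval).prod := by
        rw [Finset.prod_mem_multiset _ _ (fun y ↦ aeval y p) fun _ ↦ rfl,
          Finset.prod_eq_multiset_prod, Multiset.toFinset_val, Multiset.dedup_eq_self.2 hnodup]
        simp only [eval_map_algebraMap]
    _ = resultant m (p.map (algebraMap F E)) m.natDegree n := by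
        rw [resultant_eq_prod_eval _ _ _ (natDegree_map_le.trans hp) (IsAlgClosed.splits _),
          ((minpoly.monic pb.isIntegral_gen).map _).leadingCoeff, one_pow, one_mul]
    _ = _ := by rw [natDegree_map, resultant_map_map]

lemma discr_basis_eq_discr_minpoly (pb : PowerBasis F L) :
    Algebra.discr F pb.basis = (minpoly F pb.gen).discr := by
  have := pb.finite
  have hdeg : 0 < (minpoly F pb.gen).natDegree := minpoly.natDegree_pos pb.isIntegral_gen
  rw [Algebra.discr_powerBasis_eq_norm, norm_aeval_gen_eq_resultant pb (natDegree_derivative_le _),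
    resultant_deriv (natDegree_pos_iff_degree_pos.1 hdeg),
    (minpoly.monic pb.isIntegral_gen).leadingCoeff, mul_one, pb.finrank, pb.natDegree_minpoly,
    ← mul_assoc, ← mul_pow]
  simp

end ResultantDiscriminant

section FieldDiscriminant

lemma discr_smul {ι A B : Type*} [Fintype ι] [DecidableEq ι] [CommRing A] [CommRing B]
    [Algebra A B] (c : ι → A) (b : ι → B) :
    Algebra.discr A (fun i ↦ c i • b i) = (∏ i, c i) ^ 2 * Algebra.discr A b := by
  rw [← Matrix.det_diagonal, ← Algebra.discr_of_matrix_vecMul]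
  congr 1
  ext i
  rw [Matrix.diagonal_map (map_zero _), Matrix.vecMul_diagonal, Algebra.smul_def, mul_comm]

-- The transition matrix from an integral basis has integer entries, so its determinant is a
-- nonzero integer.
lemma abs_discr_le_of_isIntegral {K ι : Type*} [Field K] [NumberField K] [Fintype ι]
    [DecidableEq ι] (b : Basis ι ℚ K) (hb : ∀ i, IsIntegral ℤ (b i)) :
    |(discr K : ℚ)| ≤ |Algebra.discr ℚ b| := by
  let e := (integralBasis K).indexEquiv b
  let b₀ := (integralBasis K).reindex e
  let P : Matrix ι ι ℤ := fun j i ↦ (RingOfIntegers.basis K).repr ⟨b i, hb i⟩ (e.symm j)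
  have hP : P.map (algebraMap ℤ ℚ) = b₀.toMatrix b := by
    ext j i
    rw [Matrix.map_apply, Basis.toMatrix_apply, Basis.repr_reindex_apply]
    exact (integralBasis_repr_apply K ⟨b i, hb i⟩ (e.symm j)).symm
  have hb₀ : Algebra.discr ℚ b₀ = discr K := by
    rw [coe_discr, Basis.coe_reindex, Algebra.discr_reindex]
  have hdiscr : Algebra.discr ℚ b = (P.det : ℚ) ^ 2 * discr K := by
    have h := Algebra.discr_of_matrix_vecMul (A := ℚ) b₀ (b₀.toMatrix b)
    rw [Basis.toMatrix_map_vecMul, hb₀, ← hP] at h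
    simpa only [← RingHom.mapMatrix_apply, ← RingHom.map_det, algebraMap_int_eq, eq_intCast] using h
  have hdet : P.det ≠ 0 := by
    intro h
    exact Algebra.discr_not_zero_of_basis ℚ b (by simp [hdiscr, h])
  have hone : (1 : ℚ) ≤ |(P.det : ℚ) ^ 2| := by
    rw [abs_pow]
    exact one_le_pow₀ (by exact_mod_cast Int.one_le_abs hdet)
  rw [hdiscr, abs_mul]
  exact le_mul_of_one_le_left (abs_nonneg _) hone

lemma map_eq_C_leadingCoeff_mul_minpoly {A : Type*} [Ring A] [IsDomain A] [Algebra ℚ A] {g : ℤ[X]}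
    (hirr : Irreducible g) (hdeg : g.natDegree ≠ 0) {α : A} (hroot : aeval α g = 0) :
    g.map (algebraMap ℤ ℚ) = C (g.leadingCoeff : ℚ) * minpoly ℚ α := by
  have hlead : (g.leadingCoeff : ℚ) ≠ 0 := by
    exact_mod_cast leadingCoeff_ne_zero.2 hirr.ne_zero
  have hirrQ : Irreducible (g.map (algebraMap ℤ ℚ)) :=
    ((hirr.isPrimitive hdeg).irreducible_iff_irreducible_map_fraction_map (K := ℚ)).1 hirr
  have hmin := minpoly.eq_of_irreducible hirrQ (x := α) (by rwa [aeval_map_algebraMap])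
  rw [← hmin, leadingCoeff_map_of_injective (algebraMap ℤ ℚ).injective_int, algebraMap_int_eq,
    eq_intCast, mul_left_comm, ← C_mul, mul_inv_cancel₀ hlead, C_1, mul_one]

variable {K : Type*} [Field K] [NumberField K] {g : ℤ[X]} {α : K}

lemma exists_powerBasis_gen_eq (hgen : IntermediateField.adjoin ℚ {α} = ⊤) :
    ∃ pb : PowerBasis ℚ K, pb.gen = α := by
  have hint : IsIntegral ℚ α := Algebra.IsIntegral.isIntegral α
  refine ⟨PowerBasis.ofAdjoinEqTop hint ?_, PowerBasis.ofAdjoinEqTop_gen ..⟩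
  rw [← IntermediateField.adjoin_simple_toSubalgebra_of_isAlgebraic hint.isAlgebraic, hgen,
    IntermediateField.top_toSubalgebra]

lemma dim_eq_natDegree_of_aeval_gen_eq_zero (hirr : Irreducible g) (hdeg : g.natDegree ≠ 0)
    {pb : PowerBasis ℚ K} (hroot : aeval pb.gen g = 0) : pb.dim = g.natDegree := by
  have hlead : (g.leadingCoeff : ℚ) ≠ 0 := by
    exact_mod_cast leadingCoeff_ne_zero.2 hirr.ne_zero
  have hmap := congrArg natDegree (map_eq_C_leadingCoeff_mul_minpoly hirr hdeg hroot)
  rw [natDegree_map_eq_of_injective (algebraMap ℤ ℚ).injective_int, natDegree_C_mul hlead,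
    pb.natDegree_minpoly] at hmap
  exact hmap.symm

lemma finrank_eq_natDegree_of_irreducible (hirr : Irreducible g) (hdeg : g.natDegree ≠ 0)
    (hroot : aeval α g = 0) (hgen : IntermediateField.adjoin ℚ {α} = ⊤) :
    finrank ℚ K = g.natDegree := by
  obtain ⟨pb, rfl⟩ := exists_powerBasis_gen_eq hgen
  rw [pb.finrank, dim_eq_natDegree_of_aeval_gen_eq_zero hirr hdeg hroot]

lemma discr_eq_leadingCoeff_pow_mul_discr_basis (hirr : Irreducible g) (hdeg : g.natDegree ≠ 0)
    {pb : PowerBasis ℚ K} (hroot : aeval pb.gen g = 0) :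
    (g.discr : ℚ) = g.leadingCoeff ^ (2 * (g.natDegree - 1)) * Algebra.discr ℚ pb.basis := by
  have hlead : (g.leadingCoeff : ℚ) ≠ 0 := by
    exact_mod_cast leadingCoeff_ne_zero.2 hirr.ne_zero
  have hmin : 0 < (minpoly ℚ pb.gen).natDegree := minpoly.natDegree_pos pb.isIntegral_gen
  rw [← eq_intCast (algebraMap ℤ ℚ), ← discr_map_of_injective (algebraMap ℤ ℚ).injective_int
    (Nat.pos_of_ne_zero hdeg), map_eq_C_leadingCoeff_mul_minpoly hirr hdeg hroot,
    discr_C_mul hlead hmin, discr_basis_eq_discr_minpoly, pb.natDegree_minpoly,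
    dim_eq_natDegree_of_aeval_gen_eq_zero hirr hdeg hroot]

-- Compare `𝓞 K` with the order generated by the algebraic integer `c α`, where `c` is the leading
-- coefficient of `g`.
lemma abs_discr_le_leadingCoeff_pow_mul_abs_discr (hirr : Irreducible g) (hdeg : g.natDegree ≠ 0)
    (hroot : aeval α g = 0) (hgen : IntermediateField.adjoin ℚ {α} = ⊤) :
    |discr K| ≤ |g.leadingCoeff| ^ ((g.natDegree - 1) * (g.natDegree - 2)) * |g.discr| := by
  obtain ⟨pb, rfl⟩ := exists_powerBasis_gen_eq hgen
  have hlead : (g.leadingCoeff : ℚ) ≠ 0 := by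
    exact_mod_cast leadingCoeff_ne_zero.2 hirr.ne_zero
  have hunit (i : Fin pb.dim) : IsUnit ((g.leadingCoeff : ℚ) ^ (i : ℕ)) :=
    (pow_ne_zero _ hlead).isUnit
  let b := pb.basis.isUnitSMul hunit
  have hb : ⇑b = fun i : Fin pb.dim ↦ (g.leadingCoeff : ℚ) ^ (i : ℕ) • pb.basis i :=
    funext (Basis.isUnitSMul_apply hunit)
  have hint : ∀ i, IsIntegral ℤ (b i) := by
    intro i
    have hpow := (isIntegral_leadingCoeff_smul g pb.gen hroot).pow i
    simpa [hb, pb.basis_eq_pow, Algebra.smul_def, mul_pow] using hpow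
  have hdiscrb : Algebra.discr ℚ b =
      g.leadingCoeff ^ (pb.dim * (pb.dim - 1)) * Algebra.discr ℚ pb.basis := by
    rw [hb, discr_smul, Fin.prod_univ_eq_prod_range (fun i ↦ (g.leadingCoeff : ℚ) ^ i),
      Finset.prod_pow_eq_pow_sum, ← pow_mul, Finset.sum_range_id_mul_two]
  have hexp : pb.dim * (pb.dim - 1) =
      (g.natDegree - 1) * (g.natDegree - 2) + 2 * (g.natDegree - 1) := by
    rw [dim_eq_natDegree_of_aeval_gen_eq_zero hirr hdeg hroot]
    obtain ⟨n, hn⟩ : ∃ n, g.natDegree = n + 1 := ⟨g.natDegree - 1, by lia⟩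
    cases n <;> simp [hn]
    ring
  have hle := abs_discr_le_of_isIntegral b hint
  rw [hdiscrb, hexp, pow_add, mul_assoc,
    ← discr_eq_leadingCoeff_pow_mul_discr_basis hirr hdeg hroot, abs_mul, abs_pow] at hle
  exact_mod_cast hle

end FieldDiscriminant

section Lintegral

lemma lintegral_fin_prod_eq_prod {n : ℕ} {E : Fin n → Type*} [∀ i, MeasurableSpace (E i)]
    {μ : ∀ i, Measure (E i)} [∀ i, SigmaFinite (μ i)] {f : ∀ i, E i → ℝ≥0∞}
    (hf : ∀ i, Measurable (f i)) :
    ∫⁻ x, ∏ i, f i (x i) ∂(Measure.pi μ) = ∏ i, ∫⁻ x, f i x ∂(μ i) := by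
  induction n with
  | zero => simp
  | succ n ih =>
    have htail : Measurable fun y : (j : Fin n) → E j.succ ↦ ∏ j, f j.succ (y j) :=
      Finset.measurable_prod _ fun j _ ↦ (hf j.succ).comp (measurable_pi_apply j)
    rw [← (measurePreserving_piFinSuccAbove μ 0).symm.lintegral_comp_emb
      (MeasurableEquiv.measurableEmbedding _)]
    simp only [MeasurableEquiv.piFinSuccAbove_symm_apply, Fin.insertNthEquiv, Equiv.coe_fn_mk,
      Fin.insertNth_zero, Fin.prod_univ_succ, Fin.cons_zero, Fin.cons_succ]
    rw [← ih fun j ↦ hf j.succ]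
    exact lintegral_prod_mul (ν := Measure.pi fun j : Fin n ↦ μ j.succ) (hf 0).aemeasurable
      htail.aemeasurable

lemma lintegral_fintype_prod_eq_prod {ι : Type*} [Fintype ι] {E : ι → Type*}
    [∀ i, MeasurableSpace (E i)] {μ : ∀ i, Measure (E i)} [∀ i, SigmaFinite (μ i)]
    {f : ∀ i, E i → ℝ≥0∞} (hf : ∀ i, Measurable (f i)) :
    ∫⁻ x, ∏ i, f i (x i) ∂(Measure.pi μ) = ∏ i, ∫⁻ x, f i x ∂(μ i) := by
  let e := (Fintype.equivFin ι).symm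
  rw [← (measurePreserving_piCongrLeft _ e).lintegral_comp_emb
    (MeasurableEquiv.measurableEmbedding _)]
  simp_rw [← e.prod_comp, MeasurableEquiv.coe_piCongrLeft, Equiv.piCongrLeft_apply_apply]
  exact lintegral_fin_prod_eq_prod fun i ↦ hf (e i)

lemma lintegral_comp_abs (f : ℝ → ℝ≥0∞) :
    ∫⁻ x, f |x| = 2 * ∫⁻ x in Set.Ioi 0, f x := by
  have hpos : ∫⁻ x in Set.Ioi 0, f |x| = ∫⁻ x in Set.Ioi 0, f x :=
    setLIntegral_congr_fun measurableSet_Ioi fun x hx ↦ by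
      simp only [abs_of_pos (Set.mem_Ioi.1 hx)]
  have hneg : ∫⁻ x in Set.Iio 0, f |x| = ∫⁻ x in Set.Ioi 0, f |x| := by
    rw [← (Measure.measurePreserving_neg (volume : Measure ℝ)).setLIntegral_comp_preimage_emb
      (MeasurableEquiv.neg ℝ).measurableEmbedding (fun x ↦ f |x|) (Set.Ioi 0)]
    simp only [abs_neg, Set.neg_preimage, Set.neg_Ioi, neg_zero]
  rw [← lintegral_add_compl _ (measurableSet_Ioi (a := (0 : ℝ))), Set.compl_Ioi,
    setLIntegral_congr Iio_ae_eq_Iic.symm, hneg, hpos, two_mul]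

lemma lintegral_comp_norm_complex {f : ℝ → ℝ≥0∞} (hf : Measurable f) :
    ∫⁻ z : ℂ, f ‖z‖ =
      ENNReal.ofReal (2 * Real.pi) * ∫⁻ r in Set.Ioi 0, ENNReal.ofReal r * f r := by
  have hpolar : ∀ p ∈ Set.Ioi (0 : ℝ) ×ˢ Set.Ioo (-Real.pi) Real.pi,
      ENNReal.ofReal p.1 • f ‖Complex.polarCoord.symm p‖ = ENNReal.ofReal p.1 * f p.1 * 1 := by
    intro p hp
    rw [Complex.norm_polarCoord_symm, abs_of_pos hp.1, smul_eq_mul, mul_one]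
  rw [← Complex.lintegral_comp_polarCoord_symm, _root_.polarCoord_target,
    setLIntegral_congr_fun (measurableSet_Ioi.prod measurableSet_Ioo) hpolar,
    Measure.volume_eq_prod, ← Measure.prod_restrict,
    lintegral_prod_mul (f := fun r ↦ ENNReal.ofReal r * f r) (g := fun _ ↦ (1 : ℝ≥0∞))
      (by fun_prop) (by fun_prop), mul_comm]
  simp only [lintegral_const, MeasurableSet.univ, Measure.restrict_apply, Set.univ_inter,
    Real.volume_Ioo, one_mul, sub_neg_eq_add, two_mul]

end Lintegral

attribute [local instance] Classical.propDecidable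

section MixedSpace

variable {K : Type*} [Field K] [NumberField K]

lemma lintegral_mixedSpace_prod_mul_prod {f : {w : InfinitePlace K // IsReal w} → ℝ → ℝ≥0∞}
    {h : {w : InfinitePlace K // IsComplex w} → ℂ → ℝ≥0∞}
    (hf : ∀ w, Measurable (f w)) (hh : ∀ w, Measurable (h w)) :
    ∫⁻ x : mixedSpace K, (∏ w, f w (x.1 w)) * ∏ w, h w (x.2 w) =
      (∏ w, ∫⁻ t, f w t) * ∏ w, ∫⁻ z, h w z := by
  rw [← lintegral_fintype_prod_eq_prod hf, ← lintegral_fintype_prod_eq_prod hh]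
  exact lintegral_prod_mul
    (Finset.measurable_prod _ fun w _ ↦ (hf w).comp (measurable_pi_apply w)).aemeasurable
    (Finset.measurable_prod _ fun w _ ↦ (hh w).comp (measurable_pi_apply w)).aemeasurable

lemma norm_eq_prod_abs_mul_prod_norm_sq (x : mixedSpace K) :
    mixedEmbedding.norm x = (∏ w, |x.1 w|) * ∏ w, ‖x.2 w‖ ^ 2 := by
  rw [mixedEmbedding.norm_apply, prod_eq_prod_mul_prod]
  congr 1 <;> refine Finset.prod_congr rfl fun w _ ↦ ?_
  · rw [normAtPlace_apply_of_isReal w.2, mult_isReal, pow_one, Real.norm_eq_abs]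
  · rw [normAtPlace_apply_of_isComplex w.2, mult_isComplex]

/-- The function on the mixed space `ℝ^{r₁} × ℂ^{r₂}` that is the product over the infinite places
of `f` of the absolute value at each real place and `h` of the absolute value at each complex
place. Every test function below has this shape. -/
noncomputable def radialProd (f h : ℝ → ℝ≥0∞) (x : mixedSpace K) : ℝ≥0∞ :=
  (∏ w, f |x.1 w|) * ∏ w, h ‖x.2 w‖

lemma measurable_radialProd {f h : ℝ → ℝ≥0∞} (hf : Measurable f) (hh : Measurable h) :
    Measurable (radialProd (K := K) f h) := by
  unfold radialProd
  fun_prop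

lemma lintegral_radialProd {f h : ℝ → ℝ≥0∞} (hf : Measurable f) (hh : Measurable h) :
    ∫⁻ x : mixedSpace K, radialProd f h x =
      (2 * ∫⁻ r in Set.Ioi 0, f r) ^ nrRealPlaces K *
      (ENNReal.ofReal (2 * Real.pi) * ∫⁻ r in Set.Ioi 0, ENNReal.ofReal r * h r) ^
        nrComplexPlaces K := by
  unfold radialProd
  rw [lintegral_mixedSpace_prod_mul_prod (f := fun _ t ↦ f |t|) (h := fun _ z ↦ h ‖z‖)
    (fun _ ↦ by fun_prop) (fun _ ↦ by fun_prop), lintegral_comp_abs, lintegral_comp_norm_complex hh]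
  simp only [Finset.prod_const, Finset.card_univ, nrRealPlaces, nrComplexPlaces]

lemma radialProd_mul_norm_rpow (f h : ℝ → ℝ≥0∞) (s : ℝ) (x : mixedSpace K) :
    radialProd f h x * ENNReal.ofReal (mixedEmbedding.norm x ^ s) =
      radialProd (fun r ↦ f r * ENNReal.ofReal (r ^ s))
        (fun r ↦ h r * ENNReal.ofReal ((r ^ 2) ^ s)) x := by
  unfold radialProd
  rw [norm_eq_prod_abs_mul_prod_norm_sq, Real.mul_rpow (by positivity) (by positivity),
    ← Real.finsetProd_rpow _ _ fun w _ ↦ abs_nonneg _,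
    ← Real.finsetProd_rpow _ _ fun w _ ↦ by positivity,
    ENNReal.ofReal_mul (by positivity), ENNReal.ofReal_prod_of_nonneg fun w _ ↦ by positivity,
    ENNReal.ofReal_prod_of_nonneg fun w _ ↦ by positivity, Finset.prod_mul_distrib,
    Finset.prod_mul_distrib, mul_mul_mul_comm]

lemma lintegral_radialProd_mul_norm_rpow {f h : ℝ → ℝ≥0∞} (hf : Measurable f)
    (hh : Measurable h) (s : ℝ) :
    ∫⁻ x : mixedSpace K, radialProd f h x * ENNReal.ofReal (mixedEmbedding.norm x ^ (s - 1)) =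
      (2 * ∫⁻ r in Set.Ioi 0, f r * ENNReal.ofReal (r ^ (s - 1))) ^ nrRealPlaces K *
      (ENNReal.ofReal (2 * Real.pi) *
        ∫⁻ r in Set.Ioi 0, h r * ENNReal.ofReal (r ^ (2 * s - 1))) ^ nrComplexPlaces K := by
  simp_rw [radialProd_mul_norm_rpow]
  rw [lintegral_radialProd (by fun_prop) (by fun_prop)]
  congr 3
  refine setLIntegral_congr_fun measurableSet_Ioi fun r hr ↦ ?_
  have hr : 0 < r := hr
  have hpow : r * (r ^ 2) ^ (s - 1) = r ^ (2 * s - 1) := by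
    nth_rw 1 [← Real.rpow_one r]
    rw [← Real.rpow_natCast r 2, ← Real.rpow_mul hr.le, ← Real.rpow_add hr]
    congr 1
    push_cast
    ring
  rw [mul_left_comm, ← ENNReal.ofReal_mul hr.le, hpow]

lemma abs_det_mulLeft (c : mixedSpace K) :
    |LinearMap.det (LinearMap.mulLeft ℝ c)| = mixedEmbedding.norm c := by
  have hblock : LinearMap.mulLeft ℝ c = LinearMap.prodMap
      (LinearMap.pi fun w ↦ LinearMap.mulLeft ℝ (c.1 w) ∘ₗ LinearMap.proj w)
      (LinearMap.pi fun w ↦ LinearMap.mulLeft ℝ (c.2 w) ∘ₗ LinearMap.proj w) := by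
    ext <;> simp
  have hcomplex (z : ℂ) : LinearMap.det (LinearMap.mulLeft ℝ z) = ‖z‖ ^ 2 := by
    rw [← Complex.normSq_eq_norm_sq, ← Algebra.norm_complex_apply]
    rfl
  rw [hblock, LinearMap.det_prodMap, LinearMap.det_pi, LinearMap.det_pi,
    norm_eq_prod_abs_mul_prod_norm_sq, abs_mul, Finset.abs_prod, Finset.abs_prod]
  simp [hcomplex]

lemma lintegral_comp_mul_left {c : mixedSpace K} (hc : mixedEmbedding.norm c ≠ 0)
    {f : mixedSpace K → ℝ≥0∞} (hf : Measurable f) :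
    ∫⁻ x, f (c * x) = ENNReal.ofReal (mixedEmbedding.norm c)⁻¹ * ∫⁻ x, f x := by
  have hdet : LinearMap.det (LinearMap.mulLeft ℝ c) ≠ 0 := by
    rwa [← abs_ne_zero, abs_det_mulLeft]
  have hmeas : Measurable (LinearMap.mulLeft ℝ c) :=
    (LinearMap.continuous_of_finiteDimensional _).measurable
  have hmap := lintegral_map (μ := volume) hf hmeas
  rw [Measure.map_linearMap_addHaar_eq_smul_addHaar _ hdet, lintegral_smul_measure, abs_inv,
    abs_det_mulLeft] at hmap
  exact hmap.symm

lemma ae_normAtPlace_ne_zero (w : InfinitePlace K) :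
    ∀ᵐ y : mixedSpace K, normAtPlace w y ≠ 0 := by
  change volume {y | ¬ normAtPlace w y ≠ 0} = 0
  obtain hw | hw := w.isReal_or_isComplex
  · simpa [normAtPlace_apply_of_isReal hw] using mixedEmbedding.volume_eq_zero ⟨w, hw⟩
  · let p : Submodule ℝ (mixedSpace K) :=
      LinearMap.ker (LinearMap.proj ⟨w, hw⟩ ∘ₗ LinearMap.snd ℝ ({w // IsReal w} → ℝ) _)
    have hp : {y : mixedSpace K | ¬ normAtPlace w y ≠ 0} = p := by
      ext x
      simp [normAtPlace_apply_of_isComplex hw, p]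
    rw [hp]
    refine Measure.addHaar_submodule volume p fun htop ↦ ?_
    have hone : (1 : mixedSpace K) ∈ p := htop ▸ Submodule.mem_top
    simp [p] at hone

lemma ae_norm_ne_zero : ∀ᵐ y : mixedSpace K, mixedEmbedding.norm y ≠ 0 := by
  filter_upwards [ae_all_iff.2 ae_normAtPlace_ne_zero] with y hy
  exact mixedEmbedding.norm_ne_zero_iff.2 hy

lemma measurePreserving_unit_smul (u : (𝓞 K)ˣ) :
    MeasurePreserving (fun x : mixedSpace K ↦ u • x) := by
  have hmeas : Measurable (fun x : mixedSpace K ↦ u • x) :=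
    (LinearMap.continuous_of_finiteDimensional
      (LinearMap.mulLeft ℝ (mixedEmbedding K (u : K)))).measurable
  have hnorm : mixedEmbedding.norm (mixedEmbedding K (u : K)) = 1 := norm_unit u
  refine ⟨hmeas, Measure.ext fun s hs ↦ ?_⟩
  have h := lintegral_comp_mul_left (by rw [hnorm]; exact one_ne_zero)
    (measurable_one.indicator hs)
  rw [hnorm, inv_one, ENNReal.ofReal_one, one_mul, lintegral_indicator_one hs] at h
  rw [Measure.map_apply hmeas hs, ← lintegral_indicator_one (hmeas hs)]
  exact h

end MixedSpace

section Unfolding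

variable {K : Type*} [Field K] [NumberField K]

instance countable_units : Countable (𝓞 K)ˣ :=
  have : Countable (𝓞 K) := Finsupp.Countable.of_moduleFinite (R := ℤ)
  Units.val_injective.countable

lemma tsum_indicator_fundamentalCone_unit_smul {x : mixedSpace K}
    (hx : mixedEmbedding.norm x ≠ 0) :
    ∑' u : (𝓞 K)ˣ, (fundamentalCone K).indicator (1 : mixedSpace K → ℝ≥0∞) (u • x) =
      torsionOrder K := by
  obtain ⟨v, hv⟩ := exists_unit_smul_mem hx
  have hmem (u : (𝓞 K)ˣ) : (fundamentalCone K).indicator (1 : mixedSpace K → ℝ≥0∞) (u • v • x) =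
      (torsion K : Set (𝓞 K)ˣ).indicator 1 u := by
    simp only [Set.indicator_apply, unit_smul_mem_iff_mem_torsion hv u, SetLike.mem_coe,
      Pi.one_apply]
  rw [← (Equiv.mulRight v).tsum_eq]
  simp only [Equiv.coe_mulRight, mul_smul, hmem]
  rw [← tsum_subtype]
  have : Fintype (torsion K) := Fintype.ofFinite _
  simp only [Pi.one_apply, SetLike.coe_sort_coe, tsum_fintype, Finset.sum_const, nsmul_eq_mul,
    mul_one, Finset.card_univ, torsionOrder, Nat.card_eq_fintype_card]

lemma torsionOrder_mul_lintegral_eq {μ : Measure (mixedSpace K)}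
    (hinv : ∀ u : (𝓞 K)ˣ, MeasurePreserving (fun x ↦ u • x) μ μ)
    (hnorm : ∀ᵐ y ∂μ, mixedEmbedding.norm y ≠ 0) {G : mixedSpace K → ℝ≥0∞} (hG : Measurable G) :
    (torsionOrder K : ℝ≥0∞) * ∫⁻ y, G y ∂μ =
      ∫⁻ y in fundamentalCone K, ∑' u : (𝓞 K)ˣ, G (u • y) ∂μ := by
  have hsmul (u : (𝓞 K)ˣ) : Measurable fun x : mixedSpace K ↦ u • x := (hinv u).measurable
  set χ : mixedSpace K → ℝ≥0∞ := (fundamentalCone K).indicator 1 with hχ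
  have hχ_meas : Measurable χ := measurable_one.indicator (measurableSet_fundamentalCone K)
  have hχG_meas (u : (𝓞 K)ˣ) : Measurable fun y ↦ χ y * G (u • y) :=
    hχ_meas.mul (hG.comp (hsmul u))
  calc (torsionOrder K : ℝ≥0∞) * ∫⁻ y, G y ∂μ
      = ∫⁻ y, ∑' u : (𝓞 K)ˣ, χ (u • y) * G y ∂μ := by
        rw [← lintegral_const_mul _ hG]
        refine lintegral_congr_ae ?_
        filter_upwards [hnorm] with y hy
        rw [ENNReal.tsum_mul_right, tsum_indicator_fundamentalCone_unit_smul hy]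
    _ = ∑' u : (𝓞 K)ˣ, ∫⁻ y, χ (u • y) * G y ∂μ :=
        lintegral_tsum fun u ↦ ((hχ_meas.comp (hsmul u)).mul hG).aemeasurable
    _ = ∑' u : (𝓞 K)ˣ, ∫⁻ y, χ y * G (u⁻¹ • y) ∂μ := by
        refine tsum_congr fun u ↦ ?_
        rw [← (hinv u).lintegral_comp (hχG_meas u⁻¹)]
        simp only [inv_smul_smul]
    _ = ∑' u : (𝓞 K)ˣ, ∫⁻ y, χ y * G (u • y) ∂μ :=
        (Equiv.inv (𝓞 K)ˣ).tsum_eq fun u ↦ ∫⁻ y, χ y * G (u • y) ∂μ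
    _ = ∫⁻ y, χ y * ∑' u : (𝓞 K)ˣ, G (u • y) ∂μ := by
        rw [← lintegral_tsum fun u ↦ (hχG_meas u).aemeasurable]
        simp_rw [ENNReal.tsum_mul_left]
    _ = ∫⁻ y in fundamentalCone K, ∑' u : (𝓞 K)ˣ, G (u • y) ∂μ := by
        rw [← lintegral_indicator (measurableSet_fundamentalCone K)]
        refine lintegral_congr fun y ↦ ?_
        by_cases hy : y ∈ fundamentalCone K <;> simp [hχ, hy]

lemma volume_fundamentalCone_inter_norm_le (t : ℝ) :
    volume (fundamentalCone K ∩ {x | mixedEmbedding.norm x ≤ t}) =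
      ENNReal.ofReal t * volume (normLeOne K) := by
  obtain ht | ht := le_or_gt t 0
  · have hempty : fundamentalCone K ∩ {x | mixedEmbedding.norm x ≤ t} = ∅ :=
      Set.eq_empty_iff_forall_notMem.2 fun x hx ↦
        (norm_pos_of_mem hx.1).not_ge (hx.2.trans ht)
    rw [ENNReal.ofReal_of_nonpos ht, zero_mul, hempty, measure_empty]
  · obtain ⟨r, hr, hrt⟩ : ∃ r : ℝ, 0 < r ∧ r ^ finrank ℚ K = t :=
      ⟨t ^ (finrank ℚ K : ℝ)⁻¹, by positivity, Real.rpow_inv_natCast_pow ht.le finrank_pos.ne'⟩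
    have hscale : fundamentalCone K ∩ {x | mixedEmbedding.norm x ≤ t} = r • normLeOne K := by
      ext x
      rw [Set.mem_smul_set_iff_inv_smul_mem₀ hr.ne', mem_normLeOne,
        smul_mem_iff_mem (inv_ne_zero hr.ne'), mixedEmbedding.norm_smul,
        abs_of_pos (inv_pos.2 hr), inv_pow, hrt, inv_mul_le_iff₀ ht, mul_one]
      rfl
    rw [hscale, Measure.addHaar_smul, mixedEmbedding.finrank, hrt, abs_of_pos ht]

lemma map_norm_restrict_fundamentalCone :
    (volume.restrict (fundamentalCone K)).map mixedEmbedding.norm =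
      volume (normLeOne K) • (volume.restrict (Set.Ioi 0) : Measure ℝ) := by
  have hmeas : Measurable (mixedEmbedding.norm (K := K)) :=
    (mixedEmbedding.continuous_norm K).measurable
  set ν := (volume.restrict (fundamentalCone K)).map (mixedEmbedding.norm (K := K)) with hν
  set ν' := volume (normLeOne K) • (volume.restrict (Set.Ioi 0) : Measure ℝ) with hν'
  have hIic (t : ℝ) : ν (Set.Iic t) = ENNReal.ofReal t * volume (normLeOne K) := by
    rw [hν, Measure.map_apply hmeas measurableSet_Iic,
      Measure.restrict_apply (hmeas measurableSet_Iic), Set.inter_comm]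
    exact volume_fundamentalCone_inter_norm_le t
  have hIic' (t : ℝ) : ν' (Set.Iic t) = ENNReal.ofReal t * volume (normLeOne K) := by
    rw [hν', Measure.smul_apply, Measure.restrict_apply measurableSet_Iic, Set.inter_comm,
      Set.Ioi_inter_Iic, Real.volume_Ioc, sub_zero, smul_eq_mul, mul_comm]
  have hfin (t : ℝ) : ENNReal.ofReal t * volume (normLeOne K) ≠ ⊤ := by
    rw [volume_normLeOne]
    finiteness
  have : IsLocallyFiniteMeasure ν :=
    ⟨fun x ↦ ⟨Set.Iic (x + 1), Iic_mem_nhds (by simp), by rw [hIic]; exact (hfin _).lt_top⟩⟩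
  refine Measure.ext_of_Ioc _ _ fun a b hab ↦ ?_
  rw [← Set.Iic_sdiff_Iic,
    measure_sdiff (Set.Iic_subset_Iic.2 hab.le) nullMeasurableSet_Iic (by rw [hIic]; exact hfin _),
    measure_sdiff (Set.Iic_subset_Iic.2 hab.le) nullMeasurableSet_Iic (by rw [hIic']; exact hfin _),
    hIic, hIic, hIic', hIic']

lemma lintegral_fundamentalCone_comp_norm {k : ℝ → ℝ≥0∞} (hk : Measurable k) :
    ∫⁻ y in fundamentalCone K, k (mixedEmbedding.norm y) =
      volume (normLeOne K) * ∫⁻ t in Set.Ioi 0, k t := by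
  rw [← lintegral_map hk (mixedEmbedding.continuous_norm K).measurable,
    map_norm_restrict_fundamentalCone, lintegral_smul_measure, smul_eq_mul]

end Unfolding

section UnitsInBox

variable {K : Type*} [Field K] [NumberField K] {t : InfinitePlace K → ℝ}

/-- The trace form `x ↦ ∑ w, [K_w : ℝ] |x|_w²` of `K`, rescaled by `t w` at each infinite
place `w`. -/
noncomputable def scaledTraceForm (t : InfinitePlace K → ℝ) (x : K) : ℝ :=
  ∑ w : InfinitePlace K, mult w * (t w * w x) ^ 2

/-- The logarithm of the norm `∏ w, t w ^ [K_w : ℝ]` of a family of positive scaling factors. -/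
noncomputable def logNorm (t : InfinitePlace K → ℝ) : ℝ :=
  ∑ w : InfinitePlace K, mult w * Real.log (t w)

lemma scaledTraceForm_add_add_scaledTraceForm_sub (t : InfinitePlace K → ℝ) (x y : K) :
    scaledTraceForm t (x + y) + scaledTraceForm t (x - y) =
      2 * (scaledTraceForm t x + scaledTraceForm t y) := by
  unfold scaledTraceForm
  rw [← Finset.sum_add_distrib, ← Finset.sum_add_distrib, Finset.mul_sum]
  refine Finset.sum_congr rfl fun w _ ↦ ?_
  have hpar := parallelogram_law_with_norm ℝ (w.embedding x) (w.embedding y)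
  rw [← map_add, ← map_sub] at hpar
  simp only [norm_embedding_eq] at hpar
  linear_combination (mult w : ℝ) * t w ^ 2 * hpar

lemma sum_mult_cast : ∑ w : InfinitePlace K, (mult w : ℝ) = finrank ℚ K := by
  exact_mod_cast sum_mult_eq

lemma sum_mult_mul_log_nonneg {a : 𝓞 K} (ha : a ≠ 0) :
    0 ≤ ∑ w : InfinitePlace K, (mult w : ℝ) * Real.log (w (a : K)) := by
  have hlog : ∑ w : InfinitePlace K, (mult w : ℝ) * Real.log (w (a : K)) =
      Real.log (∏ w : InfinitePlace K, w (a : K) ^ mult w) := by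
    rw [Real.log_prod fun w _ ↦ (pow_pos (pos_iff.2 (by simpa using ha)) _).ne']
    simp_rw [Real.log_pow]
  rw [hlog, prod_eq_abs_norm, ← Algebra.coe_norm_int]
  exact Real.log_nonneg (mod_cast Int.one_le_abs (Algebra.norm_ne_zero_iff.2 ha))

/-- By Jensen's inequality for `exp`, since a nonzero integer has norm at least `1`. -/
lemma finrank_mul_exp_le_scaledTraceForm (ht : ∀ w, 0 < t w) {a : 𝓞 K} (ha : a ≠ 0) :
    finrank ℚ K * Real.exp (2 * logNorm t / finrank ℚ K) ≤ scaledTraceForm t a := by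
  have hn : (0 : ℝ) < finrank ℚ K := mod_cast finrank_pos
  have hpos (w : InfinitePlace K) : 0 < t w * w (a : K) :=
    mul_pos (ht w) (pos_iff.2 (by simpa using ha))
  have hjensen := convexOn_exp.map_sum_le (t := Finset.univ)
    (w := fun w : InfinitePlace K ↦ (mult w : ℝ) / finrank ℚ K)
    (p := fun w ↦ 2 * Real.log (t w * w (a : K))) (fun _ _ ↦ by positivity)
    (by rw [← Finset.sum_div, sum_mult_cast, div_self hn.ne']) fun _ _ ↦ Set.mem_univ _
  have hmean : 2 * logNorm t / finrank ℚ K ≤ ∑ w : InfinitePlace K,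
      (mult w / finrank ℚ K : ℝ) • (2 * Real.log (t w * w (a : K))) := by
    have hsum : ∑ w : InfinitePlace K, (mult w / finrank ℚ K : ℝ) • (2 * Real.log (t w * w (a : K)))
        = 2 * (logNorm t + ∑ w : InfinitePlace K, (mult w : ℝ) * Real.log (w (a : K))) /
          finrank ℚ K := by
      rw [logNorm, ← Finset.sum_add_distrib, Finset.mul_sum, Finset.sum_div]
      refine Finset.sum_congr rfl fun w _ ↦ ?_
      rw [Real.log_mul (ht w).ne' (pos_iff.2 (by simpa using ha)).ne', smul_eq_mul]
      ring
    rw [hsum]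
    gcongr
    linarith [sum_mult_mul_log_nonneg ha]
  have hexp (w : InfinitePlace K) :
      Real.exp (2 * Real.log (t w * w (a : K))) = (t w * w (a : K)) ^ 2 := by
    rw [two_mul, Real.exp_add, Real.exp_log (hpos w), sq]
  calc finrank ℚ K * Real.exp (2 * logNorm t / finrank ℚ K)
      ≤ finrank ℚ K * ∑ w : InfinitePlace K,
          (mult w / finrank ℚ K : ℝ) • Real.exp (2 * Real.log (t w * w (a : K))) := by
        gcongr
        exact (Real.exp_le_exp.2 hmean).trans hjensen
    _ = scaledTraceForm t a := by
        rw [scaledTraceForm, Finset.mul_sum]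
        refine Finset.sum_congr rfl fun w _ ↦ ?_
        rw [hexp, smul_eq_mul]
        field_simp

lemma cosh_lt_two_and_sinh_lt : Real.cosh 1.3 < 2 ∧ Real.sinh 1.3 < 1.9 := by
  have hlt : Real.exp 0.65 < 1.91556 := by
    refine (Real.exp_bound' (n := 7) (by norm_num) (by norm_num) (by norm_num)).trans_lt ?_
    norm_num [Finset.sum_range_succ, Nat.factorial]
  have hgt : 1.9155 < Real.exp 0.65 := by
    refine lt_of_lt_of_le ?_ (Real.sum_le_exp_of_nonneg (by norm_num) 8)
    norm_num [Finset.sum_range_succ, Nat.factorial]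
  have hsq : Real.exp 1.3 = Real.exp 0.65 ^ 2 := by
    rw [← Real.exp_nat_mul]
    norm_num
  have hinv : Real.exp (-1.3) < 0.273 := by
    rw [Real.exp_neg, inv_lt_comm₀ (by positivity) (by norm_num), hsq]
    nlinarith
  rw [Real.cosh_eq, Real.sinh_eq]
  constructor <;> nlinarith [Real.exp_pos (-1.3)]

lemma exp_mul_le_cosh_add_sinh {b s : ℝ} (hb : 0 < b) (hs : |s| ≤ b) (c : ℝ) :
    Real.exp (c * s) ≤ Real.cosh (c * b) + s / b * Real.sinh (c * b) := by
  have hs' : |s / b| ≤ 1 := by rwa [abs_div, abs_of_pos hb, div_le_one hb]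
  obtain ⟨hlo, hhi⟩ := abs_le.1 hs'
  have hconv := convexOn_exp.2 (Set.mem_univ (c * b)) (Set.mem_univ (-(c * b)))
    (show 0 ≤ (1 + s / b) / 2 by linarith) (show 0 ≤ (1 - s / b) / 2 by linarith) (by ring)
  have harg : ((1 + s / b) / 2) • (c * b) + ((1 - s / b) / 2) • (-(c * b)) = c * s := by
    simp only [smul_eq_mul]
    field_simp
    ring
  rw [harg, smul_eq_mul, smul_eq_mul] at hconv
  rw [Real.cosh_eq, Real.sinh_eq]
  linarith

lemma scaledTraceForm_unit_lt (ht : ∀ w, 0 < t w) (htn : 0 ≤ logNorm t) {u : (𝓞 K)ˣ}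
    (hu : ∀ w : InfinitePlace K, |Real.log (t w * w (u : K))| ≤ 0.65) :
    scaledTraceForm t (u : K) < 2 * (finrank ℚ K * Real.exp (2 * logNorm t / finrank ℚ K)) := by
  have hn : (0 : ℝ) < finrank ℚ K := mod_cast finrank_pos
  have hw (w : InfinitePlace K) : 0 < w (u : K) := pos_iff.2 (coe_ne_zero u)
  obtain ⟨hcosh, hsinh⟩ := cosh_lt_two_and_sinh_lt
  have hterm (w : InfinitePlace K) : (mult w : ℝ) * (t w * w (u : K)) ^ 2 ≤
      mult w * (Real.cosh 1.3 + Real.log (t w * w (u : K)) / 0.65 * Real.sinh 1.3) := by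
    have hchord := exp_mul_le_cosh_add_sinh (by norm_num) (hu w) 2
    rw [two_mul (Real.log _), Real.exp_add, Real.exp_log (mul_pos (ht w) (hw w)), ← sq,
      show (2 * 0.65 : ℝ) = 1.3 by norm_num] at hchord
    gcongr
  calc scaledTraceForm t (u : K)
      ≤ ∑ w : InfinitePlace K,
          mult w * (Real.cosh 1.3 + Real.log (t w * w (u : K)) / 0.65 * Real.sinh 1.3) :=
        Finset.sum_le_sum fun w _ ↦ hterm w
    _ = finrank ℚ K * Real.cosh 1.3 + (logNorm t +
          ∑ w : InfinitePlace K, (mult w : ℝ) * Real.log (w (u : K))) * (Real.sinh 1.3 / 0.65) := by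
        rw [logNorm, ← sum_mult_cast, ← Finset.sum_add_distrib, Finset.sum_mul, Finset.sum_mul,
          ← Finset.sum_add_distrib]
        refine Finset.sum_congr rfl fun w _ ↦ ?_
        rw [Real.log_mul (ht w).ne' (hw w).ne']
        ring
    _ = finrank ℚ K * Real.cosh 1.3 + logNorm t * (Real.sinh 1.3 / 0.65) := by
        rw [Units.sum_mult_mul_log u, add_zero]
    _ < finrank ℚ K * 2 + logNorm t * 4 := by
        have : Real.sinh 1.3 / 0.65 ≤ 4 := by
          rw [div_le_iff₀ (by norm_num)]
          linarith
        exact add_lt_add_of_lt_of_le (by gcongr) (by gcongr)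
    _ = 2 * (finrank ℚ K * (2 * logNorm t / finrank ℚ K + 1)) := by field_simp; ring
    _ ≤ 2 * (finrank ℚ K * Real.exp (2 * logNorm t / finrank ℚ K)) := by
        gcongr
        exact Real.add_one_le_exp _

/-- If `u ≡ v` modulo `2` and `v ≠ ±u`, then `(u + v) / 2` and `(u - v) / 2` are nonzero integers
whose trace forms are too small, by the parallelogram law. -/
lemma unit_eq_or_eq_neg_of_sub_mem (ht : ∀ w, 0 < t w) (htn : 0 ≤ logNorm t) {u v : (𝓞 K)ˣ}
    (hu : ∀ w : InfinitePlace K, |Real.log (t w * w (u : K))| ≤ 0.65)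
    (hv : ∀ w : InfinitePlace K, |Real.log (t w * w (v : K))| ≤ 0.65)
    (huv : (u : 𝓞 K) - v ∈ Ideal.span {(2 : 𝓞 K)}) : v = u ∨ v = -u := by
  by_contra! hne
  obtain ⟨a, ha⟩ := Ideal.mem_span_singleton'.1 huv
  obtain ⟨b, hb⟩ : ∃ b, b = a + (v : 𝓞 K) := ⟨_, rfl⟩
  have hu_eq : (u : 𝓞 K) = b + a := by rw [hb]; linear_combination -ha
  have hv_eq : (v : 𝓞 K) = b - a := by rw [hb]; ring
  have ha0 : a ≠ 0 := by
    rintro rfl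
    exact hne.1 (Units.ext (by rw [hu_eq, hv_eq]; ring))
  have hb0 : b ≠ 0 := by
    rintro rfl
    exact hne.2 (Units.ext (by rw [Units.val_neg, hu_eq, hv_eq]; ring))
  have hpar := scaledTraceForm_add_add_scaledTraceForm_sub t (b : K) (a : K)
  rw [← map_add, ← map_sub, ← hu_eq, ← hv_eq] at hpar
  linarith [finrank_mul_exp_le_scaledTraceForm ht ha0, finrank_mul_exp_le_scaledTraceForm ht hb0,
    scaledTraceForm_unit_lt ht htn hu, scaledTraceForm_unit_lt ht htn hv]

lemma card_quotient_span_two : Nat.card (𝓞 K ⧸ Ideal.span {(2 : 𝓞 K)}) = 2 ^ finrank ℚ K := by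
  change Ideal.absNorm (Ideal.span {(2 : 𝓞 K)}) = _
  rw [Ideal.absNorm_span_singleton, ← map_ofNat (algebraMap ℤ (𝓞 K)), Algebra.norm_algebraMap,
    RingOfIntegers.rank, Int.natAbs_pow]
  rfl

lemma card_units_le_of_logNorm_nonneg (ht : ∀ w, 0 < t w) (htn : 0 ≤ logNorm t)
    {F : Finset (𝓞 K)ˣ}
    (hF : ∀ u ∈ F, ∀ w : InfinitePlace K, |Real.log (t w * w (u : K))| ≤ 0.65) :
    F.card ≤ 2 ^ (finrank ℚ K + 1) := by
  have : Finite (𝓞 K ⧸ Ideal.span {(2 : 𝓞 K)}) :=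
    Nat.finite_of_card_ne_zero (by rw [card_quotient_span_two]; positivity)
  have : Fintype (𝓞 K ⧸ Ideal.span {(2 : 𝓞 K)}) := Fintype.ofFinite _
  rw [pow_succ', ← card_quotient_span_two, Nat.card_eq_fintype_card, ← Finset.card_univ]
  refine Finset.card_le_mul_card_image_of_maps_to
    (f := fun u : (𝓞 K)ˣ ↦ Ideal.Quotient.mk (Ideal.span {(2 : 𝓞 K)}) u)
    (fun _ _ ↦ Finset.mem_univ _) 2 fun c _ ↦ ?_
  obtain hempty | ⟨u, hu⟩ := (F.filter fun u : (𝓞 K)ˣ ↦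
    Ideal.Quotient.mk (Ideal.span {(2 : 𝓞 K)}) (u : 𝓞 K) = c).eq_empty_or_nonempty
  · simp [hempty]
  · refine (Finset.card_le_card fun v hv ↦ ?_).trans (Finset.card_le_two (a := u) (b := -u))
    rw [Finset.mem_filter] at hu hv
    rw [Finset.mem_insert, Finset.mem_singleton]
    exact unit_eq_or_eq_neg_of_sub_mem ht htn (hF u hu.1) (hF v hv.1)
      (Ideal.Quotient.eq.1 (hu.2.trans hv.2.symm))

lemma card_units_le_of_abs_log_le (ht : ∀ w, 0 < t w) {F : Finset (𝓞 K)ˣ}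
    (hF : ∀ u ∈ F, ∀ w : InfinitePlace K, |Real.log (t w * w (u : K))| ≤ 0.65) :
    F.card ≤ 2 ^ (finrank ℚ K + 1) := by
  obtain htn | htn := le_total 0 (logNorm t)
  · exact card_units_le_of_logNorm_nonneg ht htn hF
  · have hinv : logNorm (fun w ↦ (t w)⁻¹) = -logNorm t := by
      simp only [logNorm, Real.log_inv, mul_neg, Finset.sum_neg_distrib]
    rw [← Finset.card_image_of_injective F inv_injective]
    refine card_units_le_of_logNorm_nonneg (t := fun w ↦ (t w)⁻¹) (fun w ↦ inv_pos.2 (ht w))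
      (by linarith) fun u hu w ↦ ?_
    obtain ⟨v, hv, rfl⟩ := Finset.mem_image.1 hu
    have hval : (t w)⁻¹ * w ((v⁻¹ : (𝓞 K)ˣ) : K) = (t w * w (v : K))⁻¹ := by
      rw [mul_inv, ← map_inv₀]
      simp
    rw [hval, Real.log_inv, abs_neg]
    exact hF v hv w

end UnitsInBox

section LowerBound

lemma six_pow_mul_factorial_le (n : ℕ) : 6 ^ n * n.factorial ≤ (2 * n + 1).factorial := by
  induction n with
  | zero => simp
  | succ k ih =>
    calc 6 ^ (k + 1) * (k + 1).factorial = (6 * (k + 1)) * (6 ^ k * k.factorial) := by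
          rw [Nat.factorial_succ, pow_succ]; ring
      _ ≤ ((2 * k + 3) * (2 * k + 2)) * (2 * k + 1).factorial := by
          gcongr ?_ * ?_
          nlinarith
      _ = (2 * (k + 1) + 1).factorial := by
          rw [show 2 * (k + 1) + 1 = (2 * k + 2) + 1 by ring, Nat.factorial_succ (2 * k + 2),
            Nat.factorial_succ (2 * k + 1)]
          ring

lemma sinh_le_mul_exp_sq_div_six {x : ℝ} (hx : 0 ≤ x) :
    Real.sinh x ≤ x * Real.exp (x ^ 2 / 6) := by
  have hexp : HasSum (fun n : ℕ ↦ x * ((x ^ 2 / 6) ^ n / n.factorial))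
      (x * Real.exp (x ^ 2 / 6)) := by
    rw [Real.exp_eq_exp_ℝ]
    exact (NormedSpace.expSeries_div_hasSum_exp (x ^ 2 / 6)).mul_left x
  refine hasSum_le (fun n ↦ ?_) (Real.hasSum_sinh x) hexp
  have hfact : (6 : ℝ) ^ n * n.factorial ≤ (2 * n + 1).factorial :=
    mod_cast six_pow_mul_factorial_le n
  calc x ^ (2 * n + 1) / (2 * n + 1).factorial
      ≤ x ^ (2 * n + 1) / (6 ^ n * n.factorial) := by gcongr
    _ = x * ((x ^ 2 / 6) ^ n / n.factorial) := by
        rw [div_pow, pow_succ, pow_mul]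
        field_simp

lemma lintegral_Ioi_zero_eq_lintegral_exp (f : ℝ → ℝ≥0∞) :
    ∫⁻ t in Set.Ioi 0, f t = ∫⁻ x, ENNReal.ofReal (Real.exp x) * f (Real.exp x) := by
  have h := lintegral_image_eq_lintegral_abs_deriv_mul MeasurableSet.univ
    (fun x _ ↦ (Real.hasDerivAt_exp x).hasDerivWithinAt) Real.exp_injective.injOn f
  simpa only [Set.image_univ, Real.range_exp, Real.abs_exp, Measure.restrict_univ] using h

lemma lintegral_Icc_ofReal {f : ℝ → ℝ} {a b : ℝ} (hab : a ≤ b) (hf : Continuous f)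
    (hpos : ∀ x ∈ Set.Icc a b, 0 ≤ f x) :
    ∫⁻ x in Set.Icc a b, ENNReal.ofReal (f x) = ENNReal.ofReal (∫ x in a..b, f x) := by
  rw [intervalIntegral.integral_of_le hab, ← integral_Icc_eq_integral_Ioc,
    ofReal_integral_eq_lintegral_ofReal hf.continuousOn.integrableOn_Icc]
  filter_upwards [ae_restrict_mem measurableSet_Icc] with x hx using hpos x hx

lemma integral_exp_const_mul_le {b : ℝ} (hb : 0 ≤ b) (a : ℝ) :
    ∫ x in -b..b, Real.exp (a * x) ≤ 2 * b * Real.exp ((a * b) ^ 2 / 6) := by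
  rcases eq_or_ne a 0 with rfl | ha
  · simp [two_mul]
  have : 0 < |a| := abs_pos.2 ha
  have heven : Real.sinh (a * b) / a = Real.sinh (|a| * b) / |a| := by
    rcases abs_choice a with h | h <;> rw [h]
    rw [neg_mul, Real.sinh_neg, neg_div_neg_eq]
  calc ∫ x in -b..b, Real.exp (a * x) = 2 * (Real.sinh (a * b) / a) := by
        rw [intervalIntegral.integral_comp_mul_left _ ha, integral_exp, smul_eq_mul,
          Real.sinh_eq, mul_neg]
        field_simp
    _ ≤ 2 * (|a| * b * Real.exp ((|a| * b) ^ 2 / 6) / |a|) := by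
        rw [heven]
        gcongr
        exact sinh_le_mul_exp_sq_div_six (by positivity)
    _ = 2 * b * Real.exp ((a * b) ^ 2 / 6) := by
        rw [mul_pow, sq_abs, ← mul_pow]
        field_simp

lemma integral_cosh (a b : ℝ) : ∫ x in a..b, Real.cosh x = Real.sinh b - Real.sinh a :=
  intervalIntegral.integral_eq_sub_of_hasDerivAt (fun x _ ↦ Real.hasDerivAt_sinh x)
    (Real.continuous_cosh.intervalIntegrable _ _)

/-- The indicator function of the condition `|log r| ≤ b` on `r > 0`. -/
noncomputable def logBox (b : ℝ) : ℝ → ℝ≥0∞ :=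
  (Set.Icc (Real.exp (-b)) (Real.exp b)).indicator 1

lemma measurable_logBox (b : ℝ) : Measurable (logBox b) :=
  measurable_one.indicator measurableSet_Icc

lemma logBox_le_one (b r : ℝ) : logBox b r ≤ 1 :=
  Set.indicator_le' (fun _ _ ↦ le_rfl) (fun _ _ ↦ zero_le_one) r

lemma abs_log_le_of_logBox_ne_zero {b r : ℝ} (h : logBox b r ≠ 0) : |Real.log r| ≤ b := by
  obtain ⟨hlo, hhi⟩ := Set.mem_of_indicator_ne_zero h
  have hr : 0 < r := (Real.exp_pos _).trans_le hlo
  exact abs_le.2 ⟨(Real.le_log_iff_exp_le hr).2 hlo, (Real.log_le_iff_le_exp hr).2 hhi⟩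

lemma lintegral_logBox_mul_rpow {b : ℝ} (hb : 0 ≤ b) (a : ℝ) :
    ∫⁻ r in Set.Ioi 0, logBox b r * ENNReal.ofReal (r ^ (a - 1)) =
      ENNReal.ofReal (∫ x in -b..b, Real.exp (a * x)) := by
  rw [lintegral_Ioi_zero_eq_lintegral_exp, ← lintegral_Icc_ofReal (by linarith) (by fun_prop)
    (fun x _ ↦ (Real.exp_pos _).le), ← lintegral_indicator measurableSet_Icc]
  refine lintegral_congr fun x ↦ ?_
  have hpow : Real.exp x * Real.exp x ^ (a - 1) = Real.exp (a * x) := by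
    rw [← Real.exp_mul, ← Real.exp_add]
    ring_nf
  rw [mul_left_comm, ← ENNReal.ofReal_mul (Real.exp_pos x).le, hpow]
  simp only [logBox, Set.indicator_apply, Set.mem_Icc, Real.exp_le_exp, Pi.one_apply, ite_mul,
    one_mul, zero_mul]

/-- A bump around `t = 1`, supported on `|log t| ≤ 1 / τ`: its multiplicative integral is
elementary, and against `logBox` it only costs the powers `t ^ (± τ - 1)`. -/
noncomputable def coshBump (τ t : ℝ) : ℝ≥0∞ :=
  ENNReal.ofReal ((Real.cosh 1 - Real.cosh (τ * Real.log t)) / t)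

lemma measurable_coshBump (τ : ℝ) : Measurable (coshBump τ) := by
  have := Real.continuous_cosh.measurable
  unfold coshBump
  fun_prop

lemma ofReal_cosh_one_sub_cosh_eq_indicator {τ : ℝ} (hτ : 0 < τ) (x : ℝ) :
    ENNReal.ofReal (Real.cosh 1 - Real.cosh (τ * x)) =
      (Set.Icc (-(1 / τ)) (1 / τ)).indicator
        (fun x ↦ ENNReal.ofReal (Real.cosh 1 - Real.cosh (τ * x))) x := by
  by_cases hx : x ∈ Set.Icc (-(1 / τ)) (1 / τ)
  · rw [Set.indicator_of_mem hx]
  · rw [Set.indicator_of_notMem hx, ENNReal.ofReal_eq_zero, sub_nonpos, Real.cosh_le_cosh,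
      abs_one, abs_mul, abs_of_pos hτ, ← div_le_iff₀' hτ]
    rw [Set.mem_Icc, ← abs_le] at hx
    exact (not_le.1 hx).le

lemma lintegral_coshBump {τ : ℝ} (hτ : 0 < τ) :
    ∫⁻ t in Set.Ioi 0, coshBump τ t = ENNReal.ofReal (2 / τ * Real.exp (-1)) := by
  have hsubst (x : ℝ) : ENNReal.ofReal (Real.exp x) * coshBump τ (Real.exp x) =
      ENNReal.ofReal (Real.cosh 1 - Real.cosh (τ * x)) := by
    rw [coshBump, ← ENNReal.ofReal_mul (Real.exp_pos x).le, Real.log_exp,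
      mul_div_cancel₀ _ (Real.exp_ne_zero x)]
  have hle : -(1 / τ) ≤ 1 / τ := neg_le_self (by positivity)
  rw [lintegral_Ioi_zero_eq_lintegral_exp]
  simp_rw [hsubst]
  rw [lintegral_congr (ofReal_cosh_one_sub_cosh_eq_indicator hτ),
    lintegral_indicator measurableSet_Icc, lintegral_Icc_ofReal hle (by fun_prop)]
  · congr 1
    rw [intervalIntegral.integral_sub (by simp)
      (Continuous.intervalIntegrable (by fun_prop) _ _), intervalIntegral.integral_const,
      intervalIntegral.integral_comp_mul_left _ hτ.ne', integral_cosh, mul_neg,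
      mul_one_div_cancel hτ.ne', Real.sinh_neg, ← Real.cosh_sub_sinh, smul_eq_mul, smul_eq_mul]
    field_simp
    ring
  · intro x hx
    rw [sub_nonneg, Real.cosh_le_cosh, abs_one, abs_mul, abs_of_pos hτ, ← le_div_iff₀' hτ]
    exact abs_le.2 hx

variable {K : Type*} [Field K] [NumberField K]

lemma lintegral_radialProd_logBox_mul_norm_rpow_le {b : ℝ} (hb : 0 ≤ b) (a : ℝ) :
    ∫⁻ x : mixedSpace K, radialProd (logBox b) (logBox b) x *
        ENNReal.ofReal (mixedEmbedding.norm x ^ (a - 1)) ≤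
      ENNReal.ofReal ((4 * b) ^ nrRealPlaces K * (4 * Real.pi * b) ^ nrComplexPlaces K *
        Real.exp ((a * b) ^ 2 * (nrRealPlaces K + 4 * nrComplexPlaces K) / 6)) := by
  have hexp : Real.exp ((a * b) ^ 2 * (nrRealPlaces K + 4 * nrComplexPlaces K) / 6) =
      Real.exp ((a * b) ^ 2 / 6) ^ nrRealPlaces K *
        Real.exp ((2 * a * b) ^ 2 / 6) ^ nrComplexPlaces K := by
    rw [← Real.exp_nat_mul, ← Real.exp_nat_mul, ← Real.exp_add]
    ring_nf
  have hint (a : ℝ) : ENNReal.ofReal (∫ x in -b..b, Real.exp (a * x)) ≤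
      ENNReal.ofReal (2 * b * Real.exp ((a * b) ^ 2 / 6)) :=
    ENNReal.ofReal_le_ofReal (integral_exp_const_mul_le hb a)
  rw [lintegral_radialProd_mul_norm_rpow (measurable_logBox b) (measurable_logBox b),
    lintegral_logBox_mul_rpow hb, lintegral_logBox_mul_rpow hb]
  grw [hint a, hint (2 * a)]
  rw [← ENNReal.ofReal_ofNat 2, ← ENNReal.ofReal_mul (by norm_num),
    ← ENNReal.ofReal_mul (by positivity), ← ENNReal.ofReal_pow (by positivity),
    ← ENNReal.ofReal_pow (by positivity), ← ENNReal.ofReal_mul (by positivity), hexp,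
    mul_mul_mul_comm ((4 * b) ^ _), ← mul_pow, ← mul_pow]
  ring_nf
  rfl

lemma lintegral_radialProd_logBox_mul_norm_rpow_zero_sub_one {b : ℝ} (hb : 0 ≤ b) :
    ∫⁻ x : mixedSpace K, radialProd (logBox b) (logBox b) x *
        ENNReal.ofReal (mixedEmbedding.norm x ^ (0 - 1 : ℝ)) =
      ENNReal.ofReal ((4 * b) ^ nrRealPlaces K * (4 * Real.pi * b) ^ nrComplexPlaces K) := by
  have hint : ∫ x in -b..b, Real.exp (0 * x) = 2 * b := by simp [two_mul]
  rw [lintegral_radialProd_mul_norm_rpow (measurable_logBox b) (measurable_logBox b),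
    mul_zero, lintegral_logBox_mul_rpow hb, hint, ← ENNReal.ofReal_ofNat 2,
    ← ENNReal.ofReal_mul (by norm_num), ← ENNReal.ofReal_mul (by positivity),
    ← ENNReal.ofReal_pow (by positivity), ← ENNReal.ofReal_pow (by positivity),
    ← ENNReal.ofReal_mul (by positivity)]
  ring_nf

lemma radialProd_le_one {f h : ℝ → ℝ≥0∞} (hf : ∀ r, f r ≤ 1) (hh : ∀ r, h r ≤ 1)
    (x : mixedSpace K) : radialProd f h x ≤ 1 :=
  mul_le_one' (Finset.prod_le_one' fun _ _ ↦ hf _) (Finset.prod_le_one' fun _ _ ↦ hh _)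

lemma apply_normAtPlace_ne_zero_of_radialProd_ne_zero {f : ℝ → ℝ≥0∞} {x : mixedSpace K}
    (hx : radialProd f f x ≠ 0) (w : InfinitePlace K) : f (normAtPlace w x) ≠ 0 := by
  obtain ⟨hreal, hcomplex⟩ := mul_ne_zero_iff.1 hx
  rw [Finset.prod_ne_zero_iff] at hreal hcomplex
  by_cases hw : IsReal w
  · rw [normAtPlace_apply_of_isReal hw]
    exact hreal ⟨w, hw⟩ (Finset.mem_univ _)
  · rw [not_isReal_iff_isComplex] at hw
    rw [normAtPlace_apply_of_isComplex hw]
    exact hcomplex ⟨w, hw⟩ (Finset.mem_univ _)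

lemma tsum_radialProd_logBox_unit_smul_le {y : mixedSpace K} (hy : mixedEmbedding.norm y ≠ 0) :
    ∑' u : (𝓞 K)ˣ, radialProd (logBox 0.65) (logBox 0.65) (u • y) ≤ 2 ^ (finrank ℚ K + 1) := by
  rw [ENNReal.tsum_eq_iSup_sum]
  refine iSup_le fun s ↦ ?_
  rw [← Finset.sum_filter_ne_zero]
  have hpos (w : InfinitePlace K) : 0 < normAtPlace w y :=
    (normAtPlace_nonneg w y).lt_of_ne' (mixedEmbedding.norm_ne_zero_iff.1 hy w)
  have hcard : (s.filter fun u ↦ radialProd (logBox 0.65) (logBox 0.65) (u • y) ≠ 0).card ≤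
      2 ^ (finrank ℚ K + 1) := by
    refine card_units_le_of_abs_log_le hpos fun u hu w ↦ ?_
    have hbox := abs_log_le_of_logBox_ne_zero <|
      apply_normAtPlace_ne_zero_of_radialProd_ne_zero (Finset.mem_filter.1 hu).2 w
    rwa [unitSMul_smul, map_mul, normAtPlace_apply, mul_comm] at hbox
  refine (Finset.sum_le_card_nsmul _ _ 1 fun u _ ↦
    radialProd_le_one (logBox_le_one _) (logBox_le_one _) _).trans ?_
  rw [nsmul_one]
  exact_mod_cast hcard

lemma torsionOrder_mul_lintegral_logBox_mul_coshBump_le {τ : ℝ} (hτ : 0 < τ) :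
    (torsionOrder K : ℝ≥0∞) * ∫⁻ y : mixedSpace K,
        radialProd (logBox 0.65) (logBox 0.65) y * coshBump τ (mixedEmbedding.norm y) ≤
      2 ^ (finrank ℚ K + 1) *
        (volume (normLeOne K) * ENNReal.ofReal (2 / τ * Real.exp (-1))) := by
  have hbox := measurable_radialProd (K := K) (measurable_logBox 0.65) (measurable_logBox 0.65)
  have hbump : Measurable fun y : mixedSpace K ↦ coshBump τ (mixedEmbedding.norm y) :=
    (measurable_coshBump τ).comp (mixedEmbedding.continuous_norm K).measurable
  rw [torsionOrder_mul_lintegral_eq (G := fun y ↦ radialProd (logBox 0.65) (logBox 0.65) y *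
    coshBump τ (mixedEmbedding.norm y)) measurePreserving_unit_smul ae_norm_ne_zero
    (hbox.mul hbump)]
  calc _ ≤ ∫⁻ y in fundamentalCone K,
          2 ^ (finrank ℚ K + 1) * coshBump τ (mixedEmbedding.norm y) := by
        refine lintegral_mono_ae ?_
        filter_upwards [ae_restrict_of_ae ae_norm_ne_zero] with y hy
        simp_rw [norm_unit_smul]
        rw [ENNReal.tsum_mul_right]
        gcongr
        exact tsum_radialProd_logBox_unit_smul_le hy
    _ = _ := by
        rw [lintegral_const_mul _ hbump, lintegral_fundamentalCone_comp_norm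
          (measurable_coshBump τ), lintegral_coshBump hτ]

lemma ofReal_cosh_one_mul_rpow_le_coshBump_add {N : ℝ} (hN : 0 < N) (τ : ℝ) :
    ENNReal.ofReal (Real.cosh 1) * ENNReal.ofReal (N ^ (0 - 1 : ℝ)) ≤
      coshBump τ N + (ENNReal.ofReal (1 / 2) * ENNReal.ofReal (N ^ (τ - 1)) +
        ENNReal.ofReal (1 / 2) * ENNReal.ofReal (N ^ (-τ - 1))) := by
  have hsplit : Real.cosh 1 * N ^ (0 - 1 : ℝ) =
      (Real.cosh 1 - Real.cosh (τ * Real.log N)) / N +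
        (1 / 2 * N ^ (τ - 1) + 1 / 2 * N ^ (-τ - 1)) := by
    rw [Real.rpow_sub hN, Real.rpow_sub hN, Real.rpow_sub hN, Real.rpow_one, Real.rpow_zero,
      Real.rpow_def_of_pos hN, Real.rpow_def_of_pos hN, Real.cosh_eq (τ * Real.log N),
      mul_neg, mul_comm (Real.log N) τ]
    ring
  rw [← ENNReal.ofReal_mul (Real.cosh_pos 1).le, ← ENNReal.ofReal_mul (by norm_num),
    ← ENNReal.ofReal_mul (by norm_num), hsplit]
  exact ENNReal.ofReal_add_le.trans (add_le_add_right ENNReal.ofReal_add_le _)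

lemma ofReal_le_lintegral_logBox_mul_coshBump {b : ℝ} (hb : 0 ≤ b) (τ : ℝ) :
    ENNReal.ofReal ((Real.cosh 1 -
        Real.exp ((τ * b) ^ 2 * (nrRealPlaces K + 4 * nrComplexPlaces K) / 6)) *
        ((4 * b) ^ nrRealPlaces K * (4 * Real.pi * b) ^ nrComplexPlaces K)) ≤
      ∫⁻ y : mixedSpace K,
        radialProd (logBox b) (logBox b) y * coshBump τ (mixedEmbedding.norm y) := by
  have hbox := measurable_radialProd (K := K) (measurable_logBox b) (measurable_logBox b)
  have hnorm := (mixedEmbedding.continuous_norm K).measurable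
  have hbump := (measurable_coshBump τ).comp hnorm
  have hplus := lintegral_radialProd_logBox_mul_norm_rpow_le (K := K) hb τ
  have hminus := lintegral_radialProd_logBox_mul_norm_rpow_le (K := K) hb (-τ)
  rw [neg_mul, neg_sq] at hminus
  set V : ℝ := (4 * b) ^ nrRealPlaces K * (4 * Real.pi * b) ^ nrComplexPlaces K with hV
  set E : ℝ := Real.exp ((τ * b) ^ 2 * (nrRealPlaces K + 4 * nrComplexPlaces K) / 6)
  have hhalves : ENNReal.ofReal (1 / 2) * (∫⁻ x : mixedSpace K,
        radialProd (logBox b) (logBox b) x * ENNReal.ofReal (mixedEmbedding.norm x ^ (τ - 1))) +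
      ENNReal.ofReal (1 / 2) * (∫⁻ x : mixedSpace K,
        radialProd (logBox b) (logBox b) x * ENNReal.ofReal (mixedEmbedding.norm x ^ (-τ - 1))) ≤
      ENNReal.ofReal (V * E) := by
    grw [hplus, hminus]
    rw [← add_mul, ← ENNReal.ofReal_add (by norm_num) (by norm_num)]
    norm_num
  rw [sub_mul, ENNReal.ofReal_sub _ (by positivity), mul_comm E, tsub_le_iff_right,
    ENNReal.ofReal_mul (Real.cosh_pos 1).le, hV,
    ← lintegral_radialProd_logBox_mul_norm_rpow_zero_sub_one hb, ← hV]
  grw [← hhalves]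
  rw [← lintegral_const_mul _ (by fun_prop), ← lintegral_const_mul _ (by fun_prop),
    ← lintegral_const_mul _ (by fun_prop), ← lintegral_add_left (by fun_prop),
    ← lintegral_add_left (f := fun y ↦ radialProd (logBox b) (logBox b) y *
      coshBump τ (mixedEmbedding.norm y)) (hbox.mul hbump)]
  refine lintegral_mono_ae ?_
  filter_upwards [ae_norm_ne_zero] with y hy
  have hN : 0 < mixedEmbedding.norm y := (mixedEmbedding.norm_nonneg y).lt_of_ne' hy
  have h := mul_le_mul_right (ofReal_cosh_one_mul_rpow_le_coshBump_add hN τ)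
    (radialProd (logBox b) (logBox b) y)
  convert h using 1 <;> ring

lemma volume_normLeOne_eq_ofReal : volume (normLeOne K) =
    ENNReal.ofReal (2 ^ nrRealPlaces K * Real.pi ^ nrComplexPlaces K * regulator K) := by
  rw [volume_normLeOne, ENNReal.ofReal_mul (by positivity), ENNReal.ofReal_mul (by positivity),
    ENNReal.ofReal_pow (by norm_num), ENNReal.ofReal_pow Real.pi_pos.le, ENNReal.ofReal_ofNat,
    ← NNReal.coe_real_pi, ENNReal.ofReal_coe_nnreal]

lemma torsionOrder_mul_le_regulator {τ : ℝ} (hτ : 0 < τ) :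
    (torsionOrder K : ℝ) * ((Real.cosh 1 -
        Real.exp ((τ * 0.65) ^ 2 * (nrRealPlaces K + 4 * nrComplexPlaces K) / 6)) *
        ((4 * 0.65) ^ nrRealPlaces K * (4 * Real.pi * 0.65) ^ nrComplexPlaces K)) ≤
      2 ^ (finrank ℚ K + 1) * ((2 ^ nrRealPlaces K * Real.pi ^ nrComplexPlaces K * regulator K) *
        (2 / τ * Real.exp (-1))) := by
  have hR := regulator_pos K
  have h := (mul_le_mul_right (ofReal_le_lintegral_logBox_mul_coshBump (K := K)
    (b := 0.65) (by norm_num) τ) (torsionOrder K : ℝ≥0∞)).trans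
    (torsionOrder_mul_lintegral_logBox_mul_coshBump_le hτ)
  rw [volume_normLeOne_eq_ofReal, ← ENNReal.ofReal_mul (by positivity), ← ENNReal.ofReal_natCast,
    ← ENNReal.ofReal_mul (by positivity), ← ENNReal.ofReal_ofNat 2,
    ← ENNReal.ofReal_pow (by norm_num), ← ENNReal.ofReal_mul (by positivity)] at h
  exact (ENNReal.ofReal_le_ofReal_iff (by positivity)).1 h

lemma nat_add_four_mul_le_pow_mul_pow (r s : ℕ) : (r + 4 * s : ℝ) ≤ 1.69 ^ r * 16 ^ s := by
  have hone : (1 : ℝ) ≤ 1.69 ^ r := one_le_pow₀ (by norm_num)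
  have hr : (r : ℝ) ≤ 1.69 ^ r := by
    rcases r with _ | _ | k
    · norm_num
    · norm_num
    · have := one_add_mul_le_pow (a := (0.69 : ℝ)) (by norm_num) k
      norm_num [pow_succ] at this ⊢
      linarith [(Nat.cast_nonneg k : (0 : ℝ) ≤ k)]
  have hs : (1 + 15 * s : ℝ) ≤ 16 ^ s := by
    have := one_add_mul_le_pow (a := (15 : ℝ)) (by norm_num) s
    norm_num at this
    linarith
  calc (r + 4 * s : ℝ) ≤ 1.69 ^ r * (1 + 15 * s) := by
        nlinarith [(Nat.cast_nonneg s : (0 : ℝ) ≤ s)]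
    _ ≤ 1.69 ^ r * 16 ^ s := by gcongr

lemma sqrt_nat_add_four_mul_le (r s : ℕ) :
    √(r + 4 * s : ℝ) ≤ 1.3 ^ r * (1.3 * Real.pi) ^ s := by
  have hpi : (4 : ℝ) ≤ 1.3 * Real.pi := by linarith [Real.pi_gt_d2]
  refine Real.sqrt_le_iff.2 ⟨by positivity, ?_⟩
  calc (r + 4 * s : ℝ) ≤ 1.69 ^ r * 16 ^ s := nat_add_four_mul_le_pow_mul_pow r s
    _ = (1.3 ^ r * 4 ^ s) ^ 2 := by
        rw [mul_pow, ← pow_mul, ← pow_mul, mul_comm r, mul_comm s, pow_mul, pow_mul]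
        norm_num
    _ ≤ (1.3 ^ r * (1.3 * Real.pi) ^ s) ^ 2 := by gcongr

lemma exp_one_mul_cosh_one_sub_exp_ge :
    0.983 ≤ Real.exp 1 * (Real.cosh 1 - Real.exp (1 / 6)) := by
  have hsixth : Real.exp (1 / 6) < 1.18137 := by
    refine (Real.exp_bound' (x := 1 / 6) (by norm_num) (by norm_num) (n := 6)
      (by norm_num)).trans_lt ?_
    norm_num [Finset.sum_range_succ, Nat.factorial]
  have hinv : Real.exp 1 * Real.exp (-1) = 1 := by rw [← Real.exp_add]; norm_num
  rw [Real.cosh_eq]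
  nlinarith [Real.exp_one_gt_d9, Real.exp_one_lt_d9]

lemma torsionOrder_mul_le_regulator_mul_sqrt :
    (torsionOrder K : ℝ) * ((Real.cosh 1 - Real.exp (1 / 6)) *
        ((4 * 0.65) ^ nrRealPlaces K * (4 * Real.pi * 0.65) ^ nrComplexPlaces K)) ≤
      2 ^ (finrank ℚ K + 1) * ((2 ^ nrRealPlaces K * Real.pi ^ nrComplexPlaces K * regulator K) *
        (1.3 * √(nrRealPlaces K + 4 * nrComplexPlaces K : ℝ) * Real.exp (-1))) := by
  have hq : (0 : ℝ) < nrRealPlaces K + 4 * nrComplexPlaces K := by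
    have hn := card_add_two_mul_card_eq_rank K
    have := finrank_pos (R := ℚ) (M := K)
    exact_mod_cast (by lia : 0 < nrRealPlaces K + 4 * nrComplexPlaces K)
  have hQ := Real.sqrt_pos.2 hq
  have hQsq := Real.sq_sqrt hq.le
  set Q := √(nrRealPlaces K + 4 * nrComplexPlaces K : ℝ)
  have hmain := torsionOrder_mul_le_regulator (K := K) (τ := 1 / (0.65 * Q)) (by positivity)
  have hloss : (1 / (0.65 * Q) * 0.65) ^ 2 * (nrRealPlaces K + 4 * nrComplexPlaces K) / 6 =
      1 / 6 := by
    rw [← hQsq]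
    field_simp
  have hwidth : 2 / (1 / (0.65 * Q)) = 1.3 * Q := by
    field_simp
    norm_num
  rwa [hloss, hwidth] at hmain

lemma torsionOrder_mul_pow_mul_pow_le :
    0.983 * torsionOrder K * (1.3 ^ nrRealPlaces K * (1.3 * Real.pi) ^ nrComplexPlaces K) ≤
      2.6 * (2 ^ nrRealPlaces K * (2 * Real.pi) ^ nrComplexPlaces K * regulator K) *
        √(nrRealPlaces K + 4 * nrComplexPlaces K : ℝ) := by
  have hn : nrRealPlaces K + 2 * nrComplexPlaces K = finrank ℚ K :=
    card_add_two_mul_card_eq_rank K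
  have hmain := torsionOrder_mul_le_regulator_mul_sqrt (K := K)
  rw [← hn] at hmain
  set Q := √(nrRealPlaces K + 4 * nrComplexPlaces K : ℝ)
  set r := nrRealPlaces K
  set s := nrComplexPlaces K
  have hbox : ((4 : ℝ) * 0.65) ^ r * (4 * Real.pi * 0.65) ^ s =
      2 ^ (r + s) * (1.3 ^ r * (1.3 * Real.pi) ^ s) := by
    rw [pow_add, mul_mul_mul_comm, ← mul_pow, ← mul_pow]
    ring_nf
  have hvol : (2 : ℝ) ^ (r + 2 * s + 1) * (2 ^ r * Real.pi ^ s) =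
      2 ^ (r + s) * (2 * (2 ^ r * (2 * Real.pi) ^ s)) := by
    rw [mul_pow 2 Real.pi]
    ring
  have hexp : Real.exp 1 * Real.exp (-1) = 1 := by rw [← Real.exp_add]; norm_num
  refine le_of_mul_le_mul_left ?_ (by positivity : (0 : ℝ) < 2 ^ (r + s))
  calc 2 ^ (r + s) * (0.983 * torsionOrder K * (1.3 ^ r * (1.3 * Real.pi) ^ s))
      ≤ 2 ^ (r + s) * (Real.exp 1 * (Real.cosh 1 - Real.exp (1 / 6)) * torsionOrder K *
          (1.3 ^ r * (1.3 * Real.pi) ^ s)) := by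
        gcongr
        exact exp_one_mul_cosh_one_sub_exp_ge
    _ = Real.exp 1 * (torsionOrder K * ((Real.cosh 1 - Real.exp (1 / 6)) *
          ((4 * 0.65) ^ r * (4 * Real.pi * 0.65) ^ s))) := by
        rw [hbox]
        ring
    _ ≤ Real.exp 1 * (2 ^ (r + 2 * s + 1) * (2 ^ r * Real.pi ^ s * regulator K *
          (1.3 * Q * Real.exp (-1)))) := by gcongr
    _ = 2 ^ (r + s) * (2.6 * (2 ^ r * (2 * Real.pi) ^ s * regulator K) * Q) := by
        linear_combination (Real.exp 1 * Real.exp (-1) * regulator K * 1.3 * Q) * hvol +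
          (2 ^ (r + s) * (2 * (2 ^ r * (2 * Real.pi) ^ s)) * regulator K * 1.3 * Q) * hexp

variable (K) in
theorem le_kappa : 0.36232 / √|(discr K : ℝ)| ≤ kappa K := by
  set P : ℝ := 2 ^ nrRealPlaces K * (2 * Real.pi) ^ nrComplexPlaces K * regulator K with hP
  have hP_pos : 0 < P := mul_pos (by positivity) (regulator_pos K)
  have hw : (0 : ℝ) < torsionOrder K := mod_cast torsionOrder_pos K
  have hclass : (1 : ℝ) ≤ classNumber K := mod_cast Nat.one_le_iff_ne_zero.2 Fintype.card_ne_zero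
  set A : ℝ := 1.3 ^ nrRealPlaces K * (1.3 * Real.pi) ^ nrComplexPlaces K
  have hA : 0 < A := by positivity
  have hreg : 0.983 * torsionOrder K * A ≤ 2.6 * P * A := by
    refine torsionOrder_mul_pow_mul_pow_le.trans ?_
    gcongr
    exact sqrt_nat_add_four_mul_le _ _
  have hle : 0.36232 * torsionOrder K ≤ P * classNumber K := by
    nlinarith [le_of_mul_le_mul_right hreg hA]
  calc 0.36232 / √|(discr K : ℝ)| ≤ P * classNumber K / torsionOrder K / √|(discr K : ℝ)| := by
        gcongr
        rwa [le_div_iff₀ hw]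
    _ = kappa K := by
        rw [kappa, hP, div_div]
        ring

end LowerBound

section Autocorrelation

lemma sq_lintegral_le_measure_univ_mul {X : Type*} [MeasurableSpace X] {μ : Measure X}
    {f : X → ℝ≥0∞} (hf : Measurable f) :
    (∫⁻ x, f x ∂μ) ^ 2 ≤ μ Set.univ * ∫⁻ x, f x ^ 2 ∂μ := by
  have hHolder := ENNReal.lintegral_mul_le_Lp_mul_Lq μ Real.HolderConjugate.two_two
    hf.aemeasurable (measurable_one (α := ℝ≥0∞) (β := X)).aemeasurable
  simp only [Pi.mul_apply, Pi.one_apply, mul_one, ENNReal.one_rpow, lintegral_const, one_mul]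
    at hHolder
  calc (∫⁻ x, f x ∂μ) ^ 2
      ≤ ((∫⁻ x, f x ^ (2 : ℝ) ∂μ) ^ (1 / (2 : ℝ)) * μ Set.univ ^ (1 / (2 : ℝ))) ^ 2 := by gcongr
    _ = μ Set.univ * ∫⁻ x, f x ^ 2 ∂μ := by
        rw [← ENNReal.rpow_natCast, ENNReal.mul_rpow_of_nonneg _ _ (by norm_num),
          ← ENNReal.rpow_mul, ← ENNReal.rpow_mul]
        norm_num [mul_comm]

/-- Apply Cauchy–Schwarz on `D` to the periodization of `φ`. -/
lemma sq_lintegral_le_measure_mul_tsum_autocorrelation {Γ E : Type*} [AddGroup Γ] [Countable Γ]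
    [AddAction Γ E] [MeasurableSpace E] [MeasurableConstVAdd Γ E] {μ : Measure E}
    [VAddInvariantMeasure Γ E μ] {D : Set E} (hD : IsAddFundamentalDomain Γ D μ)
    {φ : E → ℝ≥0∞} (hφ : Measurable φ) :
    (∫⁻ x, φ x ∂μ) ^ 2 ≤ μ D * ∑' l : Γ, ∫⁻ x, φ x * φ (l +ᵥ x) ∂μ := by
  set Φ : E → ℝ≥0∞ := fun x ↦ ∑' l : Γ, φ (l +ᵥ x) with hΦ
  have htrans (l : Γ) : Measurable fun x ↦ φ (l +ᵥ x) := hφ.comp (measurable_const_vadd l)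
  have hΦ_meas : Measurable Φ := Measurable.tsum htrans
  have hΦ_inv (l : Γ) (x : E) : Φ (l +ᵥ x) = Φ x := by
    simp only [hΦ, vadd_vadd]
    exact (Equiv.addRight l).tsum_eq fun m ↦ φ (m +ᵥ x)
  have hfold : ∫⁻ x, φ x ∂μ = ∫⁻ x in D, Φ x ∂μ := by
    rw [hD.lintegral_eq_tsum'', hΦ, lintegral_tsum fun l ↦ (htrans l).aemeasurable]
  have hfold_sq : ∫⁻ x in D, Φ x ^ 2 ∂μ = ∫⁻ x, φ x * Φ x ∂μ := by
    rw [hD.lintegral_eq_tsum'']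
    simp_rw [hΦ_inv]
    rw [← lintegral_tsum fun l ↦ by fun_prop]
    simp_rw [ENNReal.tsum_mul_right, sq]
    rfl
  have hexpand : ∫⁻ x, φ x * Φ x ∂μ = ∑' l : Γ, ∫⁻ x, φ x * φ (l +ᵥ x) ∂μ := by
    rw [← lintegral_tsum fun l ↦ by fun_prop]
    simp_rw [hΦ, ENNReal.tsum_mul_left]
  rw [hfold, ← hexpand, ← hfold_sq, ← Measure.restrict_apply_univ D]
  exact sq_lintegral_le_measure_univ_mul hΦ_meas

lemma lintegral_rpow_mul_exp_neg_mul_sq {b s : ℝ} (hb : 0 < b) (hs : 0 < s) :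
    ∫⁻ r in Set.Ioi (0 : ℝ), ENNReal.ofReal (r ^ (2 * s - 1) * Real.exp (-b * r ^ 2)) =
      ENNReal.ofReal (b ^ (-s) * Real.Gamma s / 2) := by
  have hint := integral_rpow_mul_exp_neg_mul_rpow (p := 2) (q := 2 * s - 1) (by norm_num)
    (by linarith) hb
  have hintegrable := integrableOn_rpow_mul_exp_neg_mul_rpow (p := 2) (s := 2 * s - 1)
    (by linarith) (by norm_num) hb
  simp only [Real.rpow_two] at hint hintegrable
  rw [← ofReal_integral_eq_lintegral_ofReal hintegrable, hint]
  · ring_nf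
  · filter_upwards [ae_restrict_mem measurableSet_Ioi] with r (hr : 0 < r)
    positivity

lemma lintegral_mul_exp_neg_mul_sq {b : ℝ} (hb : 0 < b) :
    ∫⁻ r in Set.Ioi (0 : ℝ), ENNReal.ofReal r * ENNReal.ofReal (Real.exp (-b * r ^ 2)) =
      ENNReal.ofReal (1 / (2 * b)) := by
  have hgamma := lintegral_rpow_mul_exp_neg_mul_sq hb one_pos
  rw [Real.Gamma_one, Real.rpow_neg_one, show b⁻¹ * 1 / 2 = 1 / (2 * b) by field_simp] at hgamma
  rw [← hgamma]
  refine setLIntegral_congr_fun measurableSet_Ioi fun r (hr : 0 < r) ↦ ?_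
  rw [← ENNReal.ofReal_mul hr.le]
  norm_num

lemma lintegral_complex_gaussian {b : ℝ} (hb : 0 < b) :
    ∫⁻ z : ℂ, ENNReal.ofReal (Real.exp (-b * ‖z‖ ^ 2)) = ENNReal.ofReal (Real.pi / b) := by
  rw [lintegral_comp_norm_complex (f := fun r ↦ ENNReal.ofReal (Real.exp (-b * r ^ 2)))
    (by fun_prop), lintegral_mul_exp_neg_mul_sq hb, ← ENNReal.ofReal_mul (by positivity)]
  congr 1
  field_simp

/-- The real factor of the test function: the indicator of an interval of length one, as a
function of the absolute value. -/
noncomputable def halfBox : ℝ → ℝ≥0∞ := (Set.Iic (1 / 2)).indicator 1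

/-- The Gaussian `exp (-b r²)`, as a function of the absolute value at a complex place. -/
noncomputable def gaussian (b r : ℝ) : ℝ≥0∞ := ENNReal.ofReal (Real.exp (-b * r ^ 2))

/-- The tent `max (1 - r) 0`, the autocorrelation of `halfBox` as a function of the absolute
value. -/
noncomputable def tent (r : ℝ) : ℝ≥0∞ := ENNReal.ofReal (1 - r)

lemma measurable_halfBox : Measurable halfBox := measurable_one.indicator measurableSet_Iic

lemma measurable_gaussian (b : ℝ) : Measurable (gaussian b) := by
  unfold gaussian
  fun_prop

lemma measurable_tent : Measurable tent := by
  unfold tent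
  fun_prop

lemma lintegral_halfBox_mul_halfBox_add_le (v : ℝ) :
    ∫⁻ x : ℝ, halfBox |x| * halfBox |v + x| ≤ tent |v| := by
  have hprod (x : ℝ) : halfBox |x| * halfBox |v + x| =
      (Set.Icc (-(1 / 2) : ℝ) (1 / 2) ∩ Set.Icc (-(1 / 2) - v) (1 / 2 - v)).indicator 1 x := by
    rw [Set.inter_indicator_one, Pi.mul_apply]
    congr 1 <;> simp only [halfBox, Set.indicator_apply, Set.mem_Iic, Set.mem_Icc, abs_le,
      sub_le_iff_le_add', le_sub_iff_add_le', Pi.one_apply]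
  simp_rw [hprod]
  rw [lintegral_indicator_one (measurableSet_Icc.inter measurableSet_Icc), Set.Icc_inter_Icc,
    Real.volume_Icc]
  refine ENNReal.ofReal_le_ofReal ?_
  grind

/-- Completing the square: `‖x‖² + ‖v + x‖² = 2 ‖x + v / 2‖² + ‖v‖² / 2`. -/
lemma lintegral_gaussian_mul_gaussian_add {b : ℝ} (hb : 0 < b) (v : ℂ) :
    ∫⁻ x : ℂ, gaussian b ‖x‖ * gaussian b ‖v + x‖ =
      ENNReal.ofReal (Real.pi / (2 * b)) * gaussian (b / 2) ‖v‖ := by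
  have hsquare (x : ℂ) : gaussian b ‖x‖ * gaussian b ‖v + x‖ =
      gaussian (b / 2) ‖v‖ * ENNReal.ofReal (Real.exp (-(2 * b) * ‖x + v / 2‖ ^ 2)) := by
    unfold gaussian
    rw [← ENNReal.ofReal_mul (Real.exp_pos _).le, ← ENNReal.ofReal_mul (Real.exp_pos _).le,
      ← Real.exp_add, ← Real.exp_add]
    congr 2
    have hparallelogram := parallelogram_law_with_norm ℝ (x + v / 2) (v / 2)
    rw [show x + v / 2 + v / 2 = v + x by ring, add_sub_cancel_right, norm_div,
      Complex.norm_ofNat] at hparallelogram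
    linear_combination (-b) * hparallelogram
  simp_rw [hsquare]
  rw [lintegral_const_mul _ (by fun_prop), lintegral_add_right_eq_self
    (fun x : ℂ ↦ ENNReal.ofReal (Real.exp (-(2 * b) * ‖x‖ ^ 2))),
    lintegral_complex_gaussian (by positivity), mul_comm]

variable {K : Type*} [Field K] [NumberField K]

lemma lintegral_radialProd_halfBox_gaussian {b : ℝ} (hb : 0 < b) :
    ∫⁻ x : mixedSpace K, radialProd halfBox (gaussian b) x =
      ENNReal.ofReal (Real.pi / b) ^ nrComplexPlaces K := by
  have hreal : 2 * ∫⁻ r in Set.Ioi (0 : ℝ), halfBox r = 1 := by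
    rw [halfBox, lintegral_indicator_one measurableSet_Iic,
      Measure.restrict_apply measurableSet_Iic, Set.Iic_inter_Ioi, Real.volume_Ioc,
      ← ENNReal.ofReal_ofNat 2, ← ENNReal.ofReal_mul (by norm_num)]
    norm_num
  have hcomplex : ENNReal.ofReal (2 * Real.pi) *
      ∫⁻ r in Set.Ioi (0 : ℝ), ENNReal.ofReal r * gaussian b r = ENNReal.ofReal (Real.pi / b) := by
    unfold gaussian
    rw [lintegral_mul_exp_neg_mul_sq hb, ← ENNReal.ofReal_mul (by positivity)]
    congr 1
    field_simp
  rw [lintegral_radialProd measurable_halfBox (measurable_gaussian b), hreal, hcomplex, one_pow,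
    one_mul]

lemma lintegral_radialProd_autocorrelation_le {b : ℝ} (hb : 0 < b) (v : mixedSpace K) :
    ∫⁻ x : mixedSpace K, radialProd halfBox (gaussian b) x *
        radialProd halfBox (gaussian b) (v + x) ≤
      ENNReal.ofReal (Real.pi / (2 * b)) ^ nrComplexPlaces K *
        radialProd tent (gaussian (b / 2)) v := by
  have hhalf := measurable_halfBox
  have hgauss := measurable_gaussian b
  have hsplit (x : mixedSpace K) :
      radialProd halfBox (gaussian b) x * radialProd halfBox (gaussian b) (v + x) =
        (∏ w, halfBox |x.1 w| * halfBox |v.1 w + x.1 w|) *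
          ∏ w, gaussian b ‖x.2 w‖ * gaussian b ‖v.2 w + x.2 w‖ := by
    rw [Finset.prod_mul_distrib, Finset.prod_mul_distrib, mul_mul_mul_comm]
    rfl
  simp_rw [hsplit]
  rw [lintegral_mixedSpace_prod_mul_prod (f := fun w y ↦ halfBox |y| * halfBox |v.1 w + y|)
    (h := fun w z ↦ gaussian b ‖z‖ * gaussian b ‖v.2 w + z‖) (fun _ ↦ by fun_prop)
    (fun _ ↦ by fun_prop)]
  simp_rw [lintegral_gaussian_mul_gaussian_add hb]
  rw [Finset.prod_mul_distrib, Finset.prod_const, Finset.card_univ, mul_left_comm]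
  unfold radialProd
  gcongr
  exact lintegral_halfBox_mul_halfBox_add_le _

end Autocorrelation

section Theta

variable {K : Type*} [Field K] [NumberField K]

/-- The test function `max (1 - |x|) 0` at the real places times `exp (-2π|z|²)` at the complex
ones; its sums over the nonzero points of a lattice play the role of a theta function. -/
noncomputable def thetaKernel : mixedSpace K → ℝ≥0∞ := radialProd tent (gaussian (2 * Real.pi))

@[fun_prop]
lemma measurable_thetaKernel : Measurable (thetaKernel (K := K)) :=
  measurable_radialProd measurable_tent (measurable_gaussian _)

lemma thetaKernel_zero : thetaKernel (0 : mixedSpace K) = 1 := by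
  simp [thetaKernel, radialProd, tent, gaussian]

/-- A function whose autocorrelation is dominated by a multiple of `thetaKernel`. -/
noncomputable def thetaRoot : mixedSpace K → ℝ≥0∞ := radialProd halfBox (gaussian (4 * Real.pi))

@[fun_prop]
lemma measurable_thetaRoot : Measurable (thetaRoot (K := K)) :=
  measurable_radialProd measurable_halfBox (measurable_gaussian _)

lemma lintegral_thetaRoot_comp_mul_left {y : mixedSpace K} (hy : mixedEmbedding.norm y ≠ 0) :
    ∫⁻ x, thetaRoot (y * x) =
      ENNReal.ofReal ((mixedEmbedding.norm y)⁻¹ * (1 / 4) ^ nrComplexPlaces K) := by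
  rw [lintegral_comp_mul_left hy measurable_thetaRoot, thetaRoot,
    lintegral_radialProd_halfBox_gaussian (by positivity), ← ENNReal.ofReal_pow (by positivity),
    ← ENNReal.ofReal_mul (inv_nonneg.2 (mixedEmbedding.norm_nonneg y))]
  congr 3
  field_simp

lemma lintegral_thetaRoot_autocorrelation_le {y : mixedSpace K} (hy : mixedEmbedding.norm y ≠ 0)
    (v : mixedSpace K) :
    ∫⁻ x, thetaRoot (y * x) * thetaRoot (y * (v + x)) ≤
      ENNReal.ofReal ((mixedEmbedding.norm y)⁻¹ * (1 / 8) ^ nrComplexPlaces K) *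
        thetaKernel (y * v) := by
  simp_rw [mul_add]
  rw [lintegral_comp_mul_left (f := fun x ↦ thetaRoot x * thetaRoot (y * v + x)) hy (by fun_prop),
    ENNReal.ofReal_mul (inv_nonneg.2 (mixedEmbedding.norm_nonneg y)),
    ENNReal.ofReal_pow (by positivity), mul_assoc]
  gcongr
  refine (lintegral_radialProd_autocorrelation_le (by positivity) (y * v)).trans_eq ?_
  rw [show Real.pi / (2 * (4 * Real.pi)) = 1 / 8 by field_simp; norm_num,
    show 4 * Real.pi / 2 = 2 * Real.pi by ring, thetaKernel]

lemma ofReal_le_volume_mul_tsum_thetaKernel {L : Submodule ℤ (mixedSpace K)} [Countable L]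
    {D : Set (mixedSpace K)} (hD : IsAddFundamentalDomain L D) {y : mixedSpace K}
    (hy : mixedEmbedding.norm y ≠ 0) :
    ENNReal.ofReal ((mixedEmbedding.norm y)⁻¹ * 2⁻¹ ^ nrComplexPlaces K) ≤
      volume D * ∑' l : L, thetaKernel (y * (l : mixedSpace K)) := by
  have : VAddInvariantMeasure L (mixedSpace K) volume :=
    ⟨fun c s _ ↦ measure_preimage_add volume (c : mixedSpace K) s⟩
  have hy_pos : 0 < mixedEmbedding.norm y := (mixedEmbedding.norm_nonneg y).lt_of_ne' hy
  have hsum := (sq_lintegral_le_measure_mul_tsum_autocorrelation hD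
    (φ := fun x ↦ thetaRoot (y * x)) (by fun_prop)).trans (mul_le_mul_right
    (ENNReal.tsum_le_tsum fun l : L ↦ lintegral_thetaRoot_autocorrelation_le hy l) _)
  set C := (mixedEmbedding.norm y)⁻¹ * (1 / 8) ^ nrComplexPlaces K
  have hC : 0 < C := by positivity
  have hsq : ((mixedEmbedding.norm y)⁻¹ * (1 / 4) ^ nrComplexPlaces K) ^ 2 =
      C * ((mixedEmbedding.norm y)⁻¹ * 2⁻¹ ^ nrComplexPlaces K) := by
    rw [mul_pow, ← pow_mul, mul_comm _ 2, pow_mul, mul_mul_mul_comm, ← mul_pow, ← sq]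
    norm_num
  rwa [lintegral_thetaRoot_comp_mul_left hy, ENNReal.tsum_mul_left,
    mul_left_comm (volume D), ← ENNReal.ofReal_pow (by positivity), hsq,
    ENNReal.ofReal_mul hC.le, ENNReal.mul_le_mul_iff_right (by simpa using hC)
    ENNReal.ofReal_ne_top] at hsum

lemma absNorm_pos (J : (Ideal (𝓞 K))⁰) : (0 : ℝ) < Ideal.absNorm (J : Ideal (𝓞 K)) := by
  exact_mod_cast Nat.pos_of_ne_zero (Ideal.absNorm_ne_zero_of_nonZeroDivisors J)

lemma sqrt_abs_discr_pos : 0 < √|(discr K : ℝ)| :=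
  Real.sqrt_pos.2 (abs_pos.2 (by exact_mod_cast discr_ne_zero K))

lemma volume_fundamentalDomain_idealLattice (J : (Ideal (𝓞 K))⁰) :
    volume (ZSpan.fundamentalDomain (fractionalIdealLatticeBasis K (FractionalIdeal.mk0 K J))) =
      ENNReal.ofReal
        (Ideal.absNorm (J : Ideal (𝓞 K)) * 2⁻¹ ^ nrComplexPlaces K * √|(discr K : ℝ)|) := by
  have hnorm : (FractionalIdeal.absNorm (FractionalIdeal.mk0 K J : FractionalIdeal (𝓞 K)⁰ K) : ℝ) =
      Ideal.absNorm (J : Ideal (𝓞 K)) := by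
    rw [FractionalIdeal.coe_mk0, FractionalIdeal.coeIdeal_absNorm, Rat.cast_natCast]
  rw [← hnorm, ← covolume_idealLattice, ZLattice.covolume_eq_measure_fundamentalDomain _ _
    (fundamentalDomain_idealLattice K _),
    ofReal_measureReal (ZSpan.fundamentalDomain_isBounded _).measure_lt_top.ne]

/-- The counting measure on the nonzero points of the image of the ideal `J` in the mixed space,
so that sums over lattice points can be unfolded along the units like integrals. -/
noncomputable def idealCount (J : (Ideal (𝓞 K))⁰) : Measure (mixedSpace K) :=
  Measure.count.restrict ((idealLattice K (FractionalIdeal.mk0 K J) : Set (mixedSpace K)) \ {0})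

lemma countable_idealLattice (J : (Ideal (𝓞 K))⁰) :
    (idealLattice K (FractionalIdeal.mk0 K J) : Set (mixedSpace K)).Countable :=
  Set.countable_coe_iff.1 (inferInstanceAs (Countable (idealLattice K (FractionalIdeal.mk0 K J))))

lemma tsum_idealLattice_eq_add_lintegral (J : (Ideal (𝓞 K))⁰) (f : mixedSpace K → ℝ≥0∞) :
    ∑' l : idealLattice K (FractionalIdeal.mk0 K J), f l = f 0 + ∫⁻ x, f x ∂idealCount J := by
  rw [idealCount, lintegral_countable f ((countable_idealLattice J).mono Set.sdiff_subset)]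
  simp only [Measure.count_singleton, mul_one]
  rw [← tsum_singleton (0 : mixedSpace K) f, ← ENNReal.summable.tsum_union_disjoint
    Set.disjoint_sdiff_right ENNReal.summable, Set.union_sdiff_cancel (by simp)]
  rfl

lemma ofReal_sub_one_le_lintegral_thetaKernel (J : (Ideal (𝓞 K))⁰) {y : mixedSpace K}
    (hy : mixedEmbedding.norm y ≠ 0) :
    ENNReal.ofReal (1 / (Ideal.absNorm (J : Ideal (𝓞 K)) * √|(discr K : ℝ)|) /
      mixedEmbedding.norm y - 1) ≤ ∫⁻ x, thetaKernel (y * x) ∂idealCount J := by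
  have hJ := absNorm_pos J
  have hd := sqrt_abs_discr_pos (K := K)
  set covol := Ideal.absNorm (J : Ideal (𝓞 K)) * 2⁻¹ ^ nrComplexPlaces K * √|(discr K : ℝ)|
    with hcovol
  have hcovol_pos : 0 < covol := by positivity
  have hlattice := ofReal_le_volume_mul_tsum_thetaKernel
    (fundamentalDomain_idealLattice K (FractionalIdeal.mk0 K J)) hy
  have hfactor : (mixedEmbedding.norm y)⁻¹ * 2⁻¹ ^ nrComplexPlaces K =
      covol * (1 / (Ideal.absNorm (J : Ideal (𝓞 K)) * √|(discr K : ℝ)|) /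
        mixedEmbedding.norm y) := by
    rw [hcovol]
    field_simp
  rw [volume_fundamentalDomain_idealLattice, hfactor, ENNReal.ofReal_mul hcovol_pos.le,
    ENNReal.mul_le_mul_iff_right (by simpa using hcovol_pos) ENNReal.ofReal_ne_top,
    tsum_idealLattice_eq_add_lintegral J fun l ↦ thetaKernel (y * l), mul_zero, thetaKernel_zero,
    add_comm] at hlattice
  rwa [ENNReal.ofReal_sub _ zero_le_one, ENNReal.ofReal_one, tsub_le_iff_right]

lemma div_sub_one_mul_rpow {t : ℝ} (ht : 0 < t) (c s : ℝ) :
    (c / t - 1) * t ^ (s - 1) = c * t ^ (s - 2) - t ^ (s - 1) := by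
  rw [show s - 2 = (s - 1) - 1 by ring, Real.rpow_sub_one ht.ne' (s - 1)]
  ring

lemma setLIntegral_Ioi_ofReal_div_sub_one_mul_rpow (c s : ℝ) :
    ∫⁻ t in Set.Ioi 0, ENNReal.ofReal (c / t - 1) * ENNReal.ofReal (t ^ (s - 1)) =
      ∫⁻ t in Set.Ioc 0 c, ENNReal.ofReal (c * t ^ (s - 2) - t ^ (s - 1)) := by
  rw [← Set.Ioi_inter_Iic, Set.inter_comm, ← setLIntegral_indicator measurableSet_Iic]
  refine setLIntegral_congr_fun measurableSet_Ioi fun t (ht : 0 < t) ↦ ?_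
  rw [← ENNReal.ofReal_mul' (Real.rpow_nonneg ht.le _), div_sub_one_mul_rpow ht]
  rcases le_or_gt t c with htc | htc
  · rw [Set.indicator_of_mem (Set.mem_Iic.2 htc)]
  · rw [Set.indicator_of_notMem (mt Set.mem_Iic.1 htc.not_ge), ENNReal.ofReal_eq_zero,
      ← div_sub_one_mul_rpow ht]
    exact mul_nonpos_of_nonpos_of_nonneg (by simpa using (div_le_one ht).2 htc.le)
      (Real.rpow_nonneg ht.le _)

lemma lintegral_ofReal_div_sub_one_mul_rpow {c s : ℝ} (hc : 0 < c) (hs : 1 < s) :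
    ∫⁻ t in Set.Ioi 0, ENNReal.ofReal (c / t - 1) * ENNReal.ofReal (t ^ (s - 1)) =
      ENNReal.ofReal (c ^ s / (s * (s - 1))) := by
  have hint₁ : IntervalIntegrable (fun t : ℝ ↦ c * t ^ (s - 2)) volume 0 c :=
    (intervalIntegral.intervalIntegrable_rpow' (by linarith)).const_mul c
  have hint₂ : IntervalIntegrable (fun t : ℝ ↦ t ^ (s - 1)) volume 0 c :=
    intervalIntegral.intervalIntegrable_rpow' (by linarith)
  have hnonneg : 0 ≤ᵐ[volume.restrict (Set.Ioc 0 c)] fun t ↦ c * t ^ (s - 2) - t ^ (s - 1) := by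
    filter_upwards [ae_restrict_mem measurableSet_Ioc] with t ht
    rw [← div_sub_one_mul_rpow ht.1]
    exact mul_nonneg (by simpa using (one_le_div ht.1).2 ht.2) (Real.rpow_nonneg ht.1.le _)
  rw [setLIntegral_Ioi_ofReal_div_sub_one_mul_rpow, ← ofReal_integral_eq_lintegral_ofReal
    ((intervalIntegrable_iff_integrableOn_Ioc_of_le hc.le).1 (hint₁.sub hint₂)) hnonneg,
    ← intervalIntegral.integral_of_le hc.le, intervalIntegral.integral_sub hint₁ hint₂,
    intervalIntegral.integral_const_mul, integral_rpow (Or.inl (by linarith)),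
    integral_rpow (Or.inl (by linarith)), Real.zero_rpow (by linarith),
    Real.zero_rpow (by linarith), show s - 2 + 1 = s - 1 by ring, sub_add_cancel,
    Real.rpow_sub_one hc.ne']
  congr 1
  have : s - 1 ≠ 0 := by linarith
  have : s ≠ 0 := by linarith
  field_simp
  ring

lemma lintegral_tent_mul_rpow {s : ℝ} (hs : 0 < s) :
    ∫⁻ r in Set.Ioi 0, tent r * ENNReal.ofReal (r ^ (s - 1)) =
      ENNReal.ofReal (1 / (s * (s + 1))) := by
  have hshift := lintegral_ofReal_div_sub_one_mul_rpow one_pos (lt_add_of_pos_left 1 hs)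
  rw [Real.one_rpow, add_sub_cancel_right, mul_comm (s + 1)] at hshift
  rw [← hshift]
  refine setLIntegral_congr_fun measurableSet_Ioi fun r (hr : 0 < r) ↦ ?_
  rw [tent, ← ENNReal.ofReal_mul' (by positivity), ← ENNReal.ofReal_mul' (by positivity),
    Real.rpow_sub_one hr.ne']
  congr 1
  field_simp

lemma lintegral_thetaKernel_mul_norm_rpow {s : ℝ} (hs : 0 < s) :
    ∫⁻ y : mixedSpace K, thetaKernel y * ENNReal.ofReal (mixedEmbedding.norm y ^ (s - 1)) =
      ENNReal.ofReal ((2 / (s * (s + 1))) ^ nrRealPlaces K *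
        (Real.pi * ((2 * Real.pi) ^ (-s) * Real.Gamma s)) ^ nrComplexPlaces K) := by
  have := Real.Gamma_pos_of_pos hs
  have hgauss : ∫⁻ r in Set.Ioi 0, gaussian (2 * Real.pi) r * ENNReal.ofReal (r ^ (2 * s - 1)) =
      ENNReal.ofReal ((2 * Real.pi) ^ (-s) * Real.Gamma s / 2) := by
    rw [← lintegral_rpow_mul_exp_neg_mul_sq (by positivity) hs]
    refine setLIntegral_congr_fun measurableSet_Ioi fun r _ ↦ ?_
    rw [gaussian, mul_comm, ENNReal.ofReal_mul' (by positivity)]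
  simp only [thetaKernel]
  rw [lintegral_radialProd_mul_norm_rpow measurable_tent (measurable_gaussian _),
    lintegral_tent_mul_rpow hs, hgauss, ← ENNReal.ofReal_ofNat,
    ← ENNReal.ofReal_mul (by positivity), ← ENNReal.ofReal_mul (by positivity),
    ← ENNReal.ofReal_pow (by positivity), ← ENNReal.ofReal_pow (by positivity),
    ← ENNReal.ofReal_mul (by positivity)]
  congr 3 <;> ring

lemma volume_normLeOne_mul_le_lintegral_fundamentalCone {s : ℝ} (hs : 1 < s)
    (J : (Ideal (𝓞 K))⁰) :
    volume (normLeOne K) * ENNReal.ofReal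
        ((1 / (Ideal.absNorm (J : Ideal (𝓞 K)) * √|(discr K : ℝ)|)) ^ s / (s * (s - 1))) ≤
      ∫⁻ y in fundamentalCone K, (∫⁻ x, thetaKernel (y * x) ∂idealCount J) *
        ENNReal.ofReal (mixedEmbedding.norm y ^ (s - 1)) := by
  have hJ := absNorm_pos J
  have hd := sqrt_abs_discr_pos (K := K)
  rw [← lintegral_ofReal_div_sub_one_mul_rpow (by positivity) hs,
    ← lintegral_fundamentalCone_comp_norm (by fun_prop)]
  refine lintegral_mono_ae ?_
  filter_upwards [ae_restrict_of_ae ae_norm_ne_zero] with y hy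
  gcongr
  exact ofReal_sub_one_le_lintegral_thetaKernel J hy

end Theta

section ClassSums

variable {K : Type*} [Field K] [NumberField K]

lemma mem_idealLattice_mk0 {J : (Ideal (𝓞 K))⁰} {x : mixedSpace K} :
    x ∈ idealLattice K (FractionalIdeal.mk0 K J) ↔
      ∃ a ∈ (J : Ideal (𝓞 K)), mixedEmbedding K (a : K) = x := by
  rw [mem_idealLattice, FractionalIdeal.coe_mk0]
  exact ⟨fun ⟨_, ⟨a, ha, rfl⟩, hx⟩ ↦ ⟨a, ha, hx⟩, fun ⟨a, ha, hx⟩ ↦ ⟨_, ⟨a, ha, rfl⟩, hx⟩⟩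

lemma measurableSet_idealLattice_diff_zero (J : (Ideal (𝓞 K))⁰) : MeasurableSet
    ((idealLattice K (FractionalIdeal.mk0 K J) : Set (mixedSpace K)) \ {0}) :=
  ((countable_idealLattice J).mono Set.sdiff_subset).measurableSet

lemma setLIntegral_fundamentalCone_idealCount (J : (Ideal (𝓞 K))⁰) (f : mixedSpace K → ℝ≥0∞) :
    ∫⁻ x in fundamentalCone K, f x ∂idealCount J = ∑' b : idealSet K J, f b := by
  have hinter : fundamentalCone K ∩
      ((idealLattice K (FractionalIdeal.mk0 K J) : Set (mixedSpace K)) \ {0}) = idealSet K J := by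
    rw [← Set.inter_sdiff_assoc]
    refine Set.sdiff_singleton_eq_self fun h ↦ h.1.2 (by simp)
  rw [idealCount, Measure.restrict_restrict (measurableSet_fundamentalCone K), hinter,
    lintegral_countable (s := idealSet K J) f
      ((countable_idealLattice J).mono Set.inter_subset_right)]
  simp only [Measure.count_singleton, mul_one]

lemma unit_smul_mem_idealLattice_iff (J : (Ideal (𝓞 K))⁰) (u : (𝓞 K)ˣ) {x : mixedSpace K} :
    u • x ∈ idealLattice K (FractionalIdeal.mk0 K J) ↔
      x ∈ idealLattice K (FractionalIdeal.mk0 K J) := by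
  have hsmul (v : (𝓞 K)ˣ) {z : mixedSpace K}
      (hz : z ∈ idealLattice K (FractionalIdeal.mk0 K J)) :
      v • z ∈ idealLattice K (FractionalIdeal.mk0 K J) := by
    obtain ⟨a, ha, rfl⟩ := mem_idealLattice_mk0.1 hz
    refine mem_idealLattice_mk0.2 ⟨v * a, Ideal.mul_mem_left _ _ ha, ?_⟩
    rw [unitSMul_smul, ← map_mul]
    rfl
  exact ⟨fun h ↦ inv_smul_smul u x ▸ hsmul u⁻¹ h, hsmul u⟩

lemma measurePreserving_unit_smul_idealCount (J : (Ideal (𝓞 K))⁰) (u : (𝓞 K)ˣ) :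
    MeasurePreserving (fun x : mixedSpace K ↦ u • x) (idealCount J) (idealCount J) := by
  have hmeas : Measurable fun x : mixedSpace K ↦ u • x := (measurePreserving_unit_smul u).measurable
  have hbij : Function.Bijective fun x : mixedSpace K ↦ u • x := MulAction.bijective u
  have hcount : MeasurePreserving (fun x : mixedSpace K ↦ u • x) Measure.count Measure.count := by
    refine ⟨hmeas, Measure.ext fun s hs ↦ ?_⟩
    rw [Measure.map_apply hmeas hs, Measure.count_apply (hmeas hs), Measure.count_apply hs,
      Set.encard_preimage_of_bijective hbij]
  have hzero : u • (0 : mixedSpace K) = 0 := by rw [unitSMul_smul, mul_zero]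
  have hpreimage : (fun x : mixedSpace K ↦ u • x) ⁻¹'
      ((idealLattice K (FractionalIdeal.mk0 K J) : Set (mixedSpace K)) \ {0}) =
      (idealLattice K (FractionalIdeal.mk0 K J) : Set (mixedSpace K)) \ {0} := by
    ext x
    simp only [Set.mem_preimage, Set.mem_sdiff, SetLike.mem_coe, Set.mem_singleton_iff,
      unit_smul_mem_idealLattice_iff, (hbij.1.eq_iff' hzero : u • x = 0 ↔ x = 0)]
  simpa only [idealCount, hpreimage] using
    hcount.restrict_preimage (measurableSet_idealLattice_diff_zero J)

lemma ae_norm_ne_zero_idealCount (J : (Ideal (𝓞 K))⁰) :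
    ∀ᵐ x ∂idealCount J, mixedEmbedding.norm x ≠ 0 := by
  filter_upwards [ae_restrict_mem (measurableSet_idealLattice_diff_zero J)] with x hx
  obtain ⟨a, _, rfl⟩ := mem_idealLattice_mk0.1 hx.1
  rw [norm_eq_norm]
  simpa using hx.2

lemma lintegral_comp_mul_right_mul_norm_rpow {F : mixedSpace K → ℝ≥0∞} (hF : Measurable F)
    {b : mixedSpace K} (hb : mixedEmbedding.norm b ≠ 0) (s : ℝ) :
    ∫⁻ y, F (y * b) * ENNReal.ofReal (mixedEmbedding.norm y ^ (s - 1)) =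
      ENNReal.ofReal (mixedEmbedding.norm b ^ (-s)) *
        ∫⁻ y, F y * ENNReal.ofReal (mixedEmbedding.norm y ^ (s - 1)) := by
  have hb_pos : 0 < mixedEmbedding.norm b := (mixedEmbedding.norm_nonneg b).lt_of_ne' hb
  have hnorm := (mixedEmbedding.continuous_norm K).measurable
  have hpow (y : mixedSpace K) : mixedEmbedding.norm y ^ (s - 1) =
      mixedEmbedding.norm b ^ (1 - s) * mixedEmbedding.norm (b * y) ^ (s - 1) := by
    rw [map_mul, Real.mul_rpow hb_pos.le (mixedEmbedding.norm_nonneg y), ← mul_assoc,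
      ← Real.rpow_add hb_pos]
    simp
  have hscale (y : mixedSpace K) :
      F (y * b) * ENNReal.ofReal (mixedEmbedding.norm y ^ (s - 1)) =
        ENNReal.ofReal (mixedEmbedding.norm b ^ (1 - s)) *
          (F (b * y) * ENNReal.ofReal (mixedEmbedding.norm (b * y) ^ (s - 1))) := by
    rw [hpow, ENNReal.ofReal_mul (by positivity), mul_comm y b]
    ring
  simp_rw [hscale]
  rw [lintegral_const_mul' _ _ ENNReal.ofReal_ne_top, lintegral_comp_mul_left
    (f := fun y ↦ F y * ENNReal.ofReal (mixedEmbedding.norm y ^ (s - 1))) hb (by fun_prop),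
    ← mul_assoc, ← ENNReal.ofReal_mul (by positivity), ← Real.rpow_neg_one,
    ← Real.rpow_add hb_pos]
  ring_nf

lemma torsionOrder_mul_lintegral_idealCount (J : (Ideal (𝓞 K))⁰) {F : mixedSpace K → ℝ≥0∞}
    (hF : Measurable F) (s : ℝ) (y : mixedSpace K) :
    torsionOrder K * ((∫⁻ x, F (y * x) ∂idealCount J) *
        ENNReal.ofReal (mixedEmbedding.norm y ^ (s - 1))) =
      ∑' b : idealSet K J, ∑' u : (𝓞 K)ˣ,
        F (u • y * b) * ENNReal.ofReal (mixedEmbedding.norm (u • y) ^ (s - 1)) := by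
  have hcomm (u : (𝓞 K)ˣ) (b : mixedSpace K) : y * u • b = u • y * b := by
    rw [unitSMul_smul, unitSMul_smul]
    ring
  simp only [norm_unit_smul, ENNReal.tsum_mul_right]
  rw [← mul_assoc, torsionOrder_mul_lintegral_eq (G := fun x ↦ F (y * x))
    (measurePreserving_unit_smul_idealCount J) (ae_norm_ne_zero_idealCount J) (by fun_prop),
    setLIntegral_fundamentalCone_idealCount]
  simp only [hcomm]

lemma setLIntegral_fundamentalCone_lintegral_idealCount (J : (Ideal (𝓞 K))⁰)
    {F : mixedSpace K → ℝ≥0∞} (hF : Measurable F) (s : ℝ) :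
    ∫⁻ y in fundamentalCone K, (∫⁻ x, F (y * x) ∂idealCount J) *
        ENNReal.ofReal (mixedEmbedding.norm y ^ (s - 1)) =
      (∑' b : idealSet K J, ENNReal.ofReal (mixedEmbedding.norm (b : mixedSpace K) ^ (-s))) *
        ∫⁻ y, F y * ENNReal.ofReal (mixedEmbedding.norm y ^ (s - 1)) := by
  have hnorm := (mixedEmbedding.continuous_norm K).measurable
  have hsmul (u : (𝓞 K)ˣ) := (measurePreserving_unit_smul (K := K) u).measurable
  have : Countable (idealSet K J) :=
    ((countable_idealLattice J).mono Set.inter_subset_right).to_subtype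
  have htorsion : (torsionOrder K : ℝ≥0∞) ≠ 0 := by exact_mod_cast (torsionOrder_pos K).ne'
  have hmeas (b : mixedSpace K) : Measurable fun y : mixedSpace K ↦
      F (y * b) * ENNReal.ofReal (mixedEmbedding.norm y ^ (s - 1)) := by fun_prop
  rw [← ENNReal.mul_right_inj htorsion (ENNReal.natCast_ne_top _),
    ← lintegral_const_mul' _ _ (ENNReal.natCast_ne_top _)]
  simp_rw [torsionOrder_mul_lintegral_idealCount J hF s]
  have hsum (b : idealSet K J) : AEMeasurable (fun y : mixedSpace K ↦ ∑' u : (𝓞 K)ˣ,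
      F (u • y * b) * ENNReal.ofReal (mixedEmbedding.norm (u • y) ^ (s - 1)))
      (volume.restrict (fundamentalCone K)) :=
    (Measurable.tsum fun u ↦ (hmeas b).comp (hsmul u)).aemeasurable
  rw [lintegral_tsum hsum, ← ENNReal.tsum_mul_right, ← ENNReal.tsum_mul_left]
  refine tsum_congr fun b ↦ ?_
  rw [← lintegral_comp_mul_right_mul_norm_rpow hF b.2.1.2]
  exact (torsionOrder_mul_lintegral_eq measurePreserving_unit_smul ae_norm_ne_zero (hmeas b)).symm

lemma exists_mul_eq_integerSetEquiv {J : (Ideal (𝓞 K))⁰} {C : ClassGroup (𝓞 K)}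
    (hJ : ClassGroup.mk0 J = C⁻¹) (b : idealSet K J) :
    ∃ I : {I : (Ideal (𝓞 K))⁰ // ClassGroup.mk0 I = C},
      J * I = (integerSetEquiv K (idealSetMap K J b)).1.1 := by
  set P := (integerSetEquiv K (idealSetMap K J b)).1 with hP
  obtain ⟨I, hI⟩ : (J : Ideal (𝓞 K)) ∣ P.1 := by
    rw [hP, integerSetEquiv_apply_fst, Ideal.dvd_span_singleton]
    exact preimage_of_IdealSetMap K J b
  have hI_ne : I ≠ 0 := by
    rintro rfl
    exact nonZeroDivisors.ne_zero P.1.2 (by rw [hI, mul_zero])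
  have hmul : J * ⟨I, mem_nonZeroDivisors_of_ne_zero hI_ne⟩ = P.1 := Subtype.ext hI.symm
  refine ⟨⟨⟨I, mem_nonZeroDivisors_of_ne_zero hI_ne⟩, ?_⟩, hmul⟩
  have hprincipal : ClassGroup.mk0 P.1 = 1 := (ClassGroup.mk0_eq_one_iff P.1.2).2 P.2
  rw [← hmul, map_mul, hJ, inv_mul_eq_one] at hprincipal
  exact hprincipal.symm

lemma exists_injective_idealSet_norm_eq {J : (Ideal (𝓞 K))⁰} {C : ClassGroup (𝓞 K)}
    (hJ : ClassGroup.mk0 J = C⁻¹) :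
    ∃ f : idealSet K J → {I : (Ideal (𝓞 K))⁰ // ClassGroup.mk0 I = C} × torsion K,
      Function.Injective f ∧ ∀ b : idealSet K J,
        mixedEmbedding.norm (b : mixedSpace K) =
          Ideal.absNorm (J : Ideal (𝓞 K)) * Ideal.absNorm ((f b).1.1 : Ideal (𝓞 K)) := by
  choose cofactor hcofactor using exists_mul_eq_integerSetEquiv hJ
  refine ⟨fun b ↦ (cofactor b, (integerSetEquiv K (idealSetMap K J b)).2),
    fun b b' h ↦ ?_, fun b ↦ ?_⟩
  · obtain ⟨hfst, hsnd⟩ := Prod.mk.inj h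
    have hgen : integerSetEquiv K (idealSetMap K J b) = integerSetEquiv K (idealSetMap K J b') :=
      Prod.ext (Subtype.ext (by rw [← hcofactor, ← hcofactor, hfst])) hsnd
    have hmap := congrArg (Subtype.val (p := (· ∈ integerSet K)))
      ((integerSetEquiv K).injective hgen)
    exact Subtype.ext hmap
  · have hmul := congrArg (fun I : (Ideal (𝓞 K))⁰ ↦ Ideal.absNorm (I : Ideal (𝓞 K))) (hcofactor b)
    simp only [Submonoid.coe_mul, map_mul, integerSetEquiv_apply_fst,
      Ideal.absNorm_span_singleton] at hmul
    rw [← idealSetMap_apply, ← intNorm_coe, intNorm, ← Nat.cast_mul, hmul]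

lemma tsum_idealSet_norm_rpow_le (s : ℝ) {J : (Ideal (𝓞 K))⁰} {C : ClassGroup (𝓞 K)}
    (hJ : ClassGroup.mk0 J = C⁻¹) :
    ∑' b : idealSet K J, ENNReal.ofReal (mixedEmbedding.norm (b : mixedSpace K) ^ (-s)) ≤
      torsionOrder K * (ENNReal.ofReal ((Ideal.absNorm (J : Ideal (𝓞 K)) : ℝ) ^ (-s)) *
        ∑' I : {I : (Ideal (𝓞 K))⁰ // ClassGroup.mk0 I = C},
          ENNReal.ofReal ((Ideal.absNorm (I.1 : Ideal (𝓞 K)) : ℝ) ^ (-s))) := by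
  obtain ⟨f, hf_inj, hf_norm⟩ := exists_injective_idealSet_norm_eq hJ
  calc ∑' b : idealSet K J, ENNReal.ofReal (mixedEmbedding.norm (b : mixedSpace K) ^ (-s))
      = ∑' b : idealSet K J, ENNReal.ofReal ((Ideal.absNorm (J : Ideal (𝓞 K)) : ℝ) ^ (-s)) *
          ENNReal.ofReal ((Ideal.absNorm ((f b).1.1 : Ideal (𝓞 K)) : ℝ) ^ (-s)) := by
        refine tsum_congr fun b ↦ ?_
        rw [hf_norm, Real.mul_rpow (by positivity) (by positivity),
          ENNReal.ofReal_mul (by positivity)]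
    _ ≤ ∑' p : {I : (Ideal (𝓞 K))⁰ // ClassGroup.mk0 I = C} × torsion K,
          ENNReal.ofReal ((Ideal.absNorm (J : Ideal (𝓞 K)) : ℝ) ^ (-s)) *
            ENNReal.ofReal ((Ideal.absNorm (p.1.1 : Ideal (𝓞 K)) : ℝ) ^ (-s)) :=
        ENNReal.tsum_comp_le_tsum_of_injective hf_inj fun p ↦
          ENNReal.ofReal ((Ideal.absNorm (J : Ideal (𝓞 K)) : ℝ) ^ (-s)) *
            ENNReal.ofReal ((Ideal.absNorm (p.1.1 : Ideal (𝓞 K)) : ℝ) ^ (-s))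
    _ = _ := by
        rw [ENNReal.tsum_mul_left, ENNReal.tsum_prod']
        simp only [ENNReal.tsum_const, ENNReal.tsum_mul_left, torsionOrder,
          ENat.card_eq_coe_natCard, ENat.toENNReal_coe]
        ring

/-- The Dirichlet series `∑ N(I)⁻ˢ` over the nonzero ideals, with values in `ℝ≥0∞` so that
rearrangements need no convergence hypotheses. -/
noncomputable def dedekindSeries (K : Type*) [Field K] [NumberField K] (s : ℝ) : ℝ≥0∞ :=
  ∑' I : (Ideal (𝓞 K))⁰, ENNReal.ofReal ((Ideal.absNorm (I : Ideal (𝓞 K)) : ℝ) ^ (-s))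

lemma sum_classGroup_tsum_eq_dedekindSeries (s : ℝ) :
    ∑ C : ClassGroup (𝓞 K), ∑' I : {I : (Ideal (𝓞 K))⁰ // ClassGroup.mk0 I = C},
      ENNReal.ofReal ((Ideal.absNorm (I.1 : Ideal (𝓞 K)) : ℝ) ^ (-s)) = dedekindSeries K s := by
  rw [← tsum_fintype (L := .unconditional _), dedekindSeries, ← (Equiv.sigmaFiberEquiv
    (ClassGroup.mk0 : (Ideal (𝓞 K))⁰ → ClassGroup (𝓞 K))).tsum_eq, ENNReal.tsum_sigma']
  rfl

lemma volume_normLeOne_mul_le_torsionOrder_mul_tsum {s : ℝ} (hs : 1 < s)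
    (C : ClassGroup (𝓞 K)) :
    volume (normLeOne K) * ENNReal.ofReal ((1 / √|(discr K : ℝ)|) ^ s / (s * (s - 1))) ≤
      torsionOrder K * ENNReal.ofReal ((2 / (s * (s + 1))) ^ nrRealPlaces K *
          (Real.pi * ((2 * Real.pi) ^ (-s) * Real.Gamma s)) ^ nrComplexPlaces K) *
        ∑' I : {I : (Ideal (𝓞 K))⁰ // ClassGroup.mk0 I = C},
          ENNReal.ofReal ((Ideal.absNorm (I.1 : Ideal (𝓞 K)) : ℝ) ^ (-s)) := by
  obtain ⟨J, hJ⟩ := ClassGroup.mk0_surjective C⁻¹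
  have hbound := volume_normLeOne_mul_le_lintegral_fundamentalCone hs J
  rw [setLIntegral_fundamentalCone_lintegral_idealCount J measurable_thetaKernel,
    lintegral_thetaKernel_mul_norm_rpow (zero_lt_one.trans hs)] at hbound
  replace hbound := hbound.trans (mul_le_mul_left (tsum_idealSet_norm_rpow_le s hJ) _)
  have hN := absNorm_pos J
  set N : ℝ := (Ideal.absNorm (J : Ideal (𝓞 K)) : ℝ)
  have hNs : 0 < N ^ (-s) := by positivity
  have hsplit : (1 / (N * √|(discr K : ℝ)|)) ^ s / (s * (s - 1)) =
      N ^ (-s) * ((1 / √|(discr K : ℝ)|) ^ s / (s * (s - 1))) := by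
    rw [← one_div_mul_one_div, Real.mul_rpow (by positivity) (by positivity), one_div N,
      Real.inv_rpow hN.le, Real.rpow_neg hN.le, mul_div_assoc]
  rw [hsplit, ENNReal.ofReal_mul hNs.le] at hbound
  rw [← ENNReal.mul_le_mul_iff_right (by simpa using hNs) (ENNReal.ofReal_ne_top (r := N ^ (-s)))]
  exact (mul_left_comm _ _ _).trans_le (hbound.trans_eq (by ring))

lemma ofReal_classNumber_mul_le_mul_dedekindSeries {s : ℝ} (hs : 1 < s) :
    ENNReal.ofReal (classNumber K *
        (2 ^ nrRealPlaces K * Real.pi ^ nrComplexPlaces K * regulator K) *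
        ((1 / √|(discr K : ℝ)|) ^ s / (s * (s - 1)))) ≤
      ENNReal.ofReal (torsionOrder K * ((2 / (s * (s + 1))) ^ nrRealPlaces K *
        (Real.pi * ((2 * Real.pi) ^ (-s) * Real.Gamma s)) ^ nrComplexPlaces K)) *
        dedekindSeries K s := by
  have := regulator_pos K
  have hclasses := Finset.sum_le_sum fun C (_ : C ∈ Finset.univ) ↦
    volume_normLeOne_mul_le_torsionOrder_mul_tsum (K := K) hs C
  rw [Finset.sum_const, ← Finset.mul_sum, sum_classGroup_tsum_eq_dedekindSeries, Finset.card_univ,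
    nsmul_eq_mul, volume_normLeOne_eq_ofReal] at hclasses
  rw [ENNReal.ofReal_mul (by positivity), ENNReal.ofReal_mul (by positivity),
    ENNReal.ofReal_mul (Nat.cast_nonneg _), ENNReal.ofReal_natCast, ENNReal.ofReal_natCast,
    mul_assoc]
  exact hclasses

end ClassSums

section DedekindSeries

open UniqueFactorizationMonoid

lemma tsum_pi_prod_eq_tsum_pow {X : Type*} (a : X → ℝ≥0∞) (n : ℕ) :
    ∑' f : Fin n → X, ∏ i, a (f i) = (∑' x, a x) ^ n := by
  induction n with
  | zero => simp
  | succ n ih =>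
    rw [← (Fin.consEquiv fun _ : Fin (n + 1) ↦ X).tsum_eq, ENNReal.tsum_prod']
    simp only [Fin.consEquiv_apply, Fin.prod_univ_succ, Fin.cons_zero, Fin.cons_succ]
    simp_rw [ENNReal.tsum_mul_left, ih, ENNReal.tsum_mul_right]
    rw [pow_succ']

lemma prod_prod_map_filter_eq {X ι M : Type*} [Fintype ι] [DecidableEq ι] [CommMonoid M]
    (c : X → ι) (f : X → M) (s : Multiset X) :
    ∏ i, ((s.filter fun x ↦ c x = i).map f).prod = (s.map f).prod := by
  induction s using Multiset.induction with
  | empty => simp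
  | cons a s ih =>
    have hcons (i : ι) : (((a ::ₘ s).filter fun x ↦ c x = i).map f).prod =
        (if c a = i then f a else 1) * ((s.filter fun x ↦ c x = i).map f).prod := by
      by_cases h : c a = i <;> simp [h]
    simp_rw [hcons]
    rw [Finset.prod_mul_distrib, ih]
    simp

lemma encard_primesOver_le_finrank {R : Type*} [CommRing R] [IsDomain R] (p : Ideal R) [p.IsPrime]
    (S : Type*) [CommRing S] [Algebra R S] [Module.Finite R S] [Module.Flat R S] :
    (p.primesOver S).encard ≤ finrank R S := by
  have hfin : (p.primesOver S).Finite := Algebra.QuasiFinite.finite_primesOver p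
  let := hfin.fintype
  rw [← Ideal.sum_ramification_inertia_eq_finrank p S, Set.encard_eq_coe_toFinset_card,
    Set.toFinset_card, Nat.cast_le, ← Finset.card_univ, Finset.card_eq_sum_ones]
  refine Finset.sum_le_sum fun q _ ↦ ?_
  have : q.1.IsPrime := q.2.1
  exact Nat.mul_pos (q.1.ramificationIdx_pos R) (q.1.inertiaDeg_pos R)

variable {K : Type*} [Field K] [NumberField K]

/-- The rational prime below a nonzero prime ideal. -/
noncomputable def primeBelow (P : Ideal (𝓞 K)) : ℕ := Ideal.absNorm (Ideal.under ℤ P)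

lemma prime_primeBelow {P : Ideal (𝓞 K)} (hP : Prime P) : (primeBelow P).Prime := by
  have : P.IsPrime := Ideal.isPrime_of_prime hP
  have : NeZero P := ⟨hP.ne_zero⟩
  exact Nat.absNorm_under_prime P

lemma exists_injOn_primeBelow_eq (K : Type*) [Field K] [NumberField K] (q : ℕ) :
    ∃ f : Ideal (𝓞 K) → Fin (finrank ℚ K), Set.InjOn f {P | Prime P ∧ primeBelow P = q} := by
  have : Nonempty (Fin (finrank ℚ K)) := ⟨⟨0, finrank_pos⟩⟩
  by_cases hq : q.Prime
  · have : (Ideal.span {(q : ℤ)}).IsPrime :=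
      (Ideal.span_singleton_prime (by simpa using hq.ne_zero)).2 (Nat.prime_iff_prime_int.1 hq)
    have hcard := encard_primesOver_le_finrank (Ideal.span {(q : ℤ)}) (𝓞 K)
    have hfin := Algebra.QuasiFinite.finite_primesOver (S := 𝓞 K) (Ideal.span {(q : ℤ)})
    obtain ⟨f, -, hf⟩ := hfin.exists_injOn_of_encard_le
      (t := (Set.univ : Set (Fin (finrank ℚ K)))) (by simpa [RingOfIntegers.rank] using hcard)
    refine ⟨f, hf.mono fun P ⟨hP, hPq⟩ ↦ ?_⟩
    exact ⟨Ideal.isPrime_of_prime hP, hPq ▸ Int.liesOver_span_absNorm P⟩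
  · refine ⟨fun _ ↦ Classical.arbitrary _, fun P hP ↦ ?_⟩
    exact absurd (hP.2 ▸ prime_primeBelow hP.1) hq

/-- A colouring of the ideals that separates any two primes above the same rational prime. -/
def SeparatesPrimes {ι : Type*} (c : Ideal (𝓞 K) → ι) : Prop :=
  ∀ ⦃P Q : Ideal (𝓞 K)⦄, Prime P → Prime Q → primeBelow P = primeBelow Q → c P = c Q → P = Q

lemma exists_separatesPrimes (K : Type*) [Field K] [NumberField K] :
    ∃ c : Ideal (𝓞 K) → Fin (finrank ℚ K), SeparatesPrimes c := by
  choose f hf using exists_injOn_primeBelow_eq K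
  refine ⟨fun P ↦ f (primeBelow P) P, fun P Q hP hQ hPQ hc ↦ ?_⟩
  dsimp only at hc
  rw [hPQ] at hc
  exact hf (primeBelow Q) ⟨hP, hPQ⟩ ⟨hQ, rfl⟩ hc

/-- The rational primes, with multiplicity, below the prime factors of `I` of colour `i`. -/
noncomputable def primesBelow {ι : Type*} (c : Ideal (𝓞 K) → ι) (I : Ideal (𝓞 K)) (i : ι) :
    Multiset ℕ :=
  ((normalizedFactors I).filter fun P ↦ c P = i).map primeBelow

section Colouring

variable {ι : Type*} {c : Ideal (𝓞 K) → ι}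

lemma prime_of_mem_primesBelow {I : Ideal (𝓞 K)} {i : ι} {p : ℕ} (hp : p ∈ primesBelow c I i) :
    p.Prime := by
  obtain ⟨P, hP, rfl⟩ := Multiset.mem_map.1 hp
  exact prime_primeBelow (prime_of_normalized_factor P (Multiset.mem_of_mem_filter hP))

lemma prod_primesBelow_pos (c : Ideal (𝓞 K) → ι) (I : Ideal (𝓞 K)) (i : ι) :
    0 < (primesBelow c I i).prod :=
  Nat.pos_of_ne_zero <| Multiset.prod_ne_zero fun h ↦ (prime_of_mem_primesBelow h).ne_zero rfl

lemma normalizedFactors_prod_primesBelow (c : Ideal (𝓞 K) → ι) (I : Ideal (𝓞 K)) (i : ι) :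
    normalizedFactors (primesBelow c I i).prod = primesBelow c I i :=
  normalizedFactors_prod_of_prime fun _ hp ↦ (prime_of_mem_primesBelow hp).prime

lemma count_primeBelow_primesBelow (hc : SeparatesPrimes c) (I : Ideal (𝓞 K)) {P : Ideal (𝓞 K)}
    (hP : Prime P) :
    (primesBelow c I (c P)).count (primeBelow P) = (normalizedFactors I).count P := by
  rw [primesBelow, Multiset.count_map, Multiset.filter_filter, ← Multiset.countP_eq_card_filter,
    Multiset.count]
  refine Multiset.countP_congr rfl fun Q hQ ↦ propext ⟨fun h ↦ ?_, ?_⟩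
  · exact hc hP (prime_of_normalized_factor Q hQ) h.1 h.2.symm
  · rintro rfl
    exact ⟨rfl, rfl⟩

lemma injective_prod_primesBelow (hc : SeparatesPrimes c) :
    Function.Injective fun (I : (Ideal (𝓞 K))⁰) i ↦ (primesBelow c (I : Ideal (𝓞 K)) i).prod := by
  intro I J hIJ
  have hprimes (i : ι) : primesBelow c (I : Ideal (𝓞 K)) i = primesBelow c J i := by
    rw [← normalizedFactors_prod_primesBelow c I, ← normalizedFactors_prod_primesBelow c J]
    exact congrArg normalizedFactors (congrFun hIJ i)
  have hfactors : normalizedFactors (I : Ideal (𝓞 K)) = normalizedFactors (J : Ideal (𝓞 K)) := by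
    ext P
    by_cases hP : Prime P
    · rw [← count_primeBelow_primesBelow hc I hP, ← count_primeBelow_primesBelow hc J hP, hprimes]
    · rw [Multiset.count_eq_zero_of_notMem fun h ↦ hP (prime_of_normalized_factor P h),
        Multiset.count_eq_zero_of_notMem fun h ↦ hP (prime_of_normalized_factor P h)]
  exact Subtype.ext <| associated_iff_eq.1 <|
    (associated_iff_normalizedFactors_eq_normalizedFactors (nonZeroDivisors.ne_zero I.2)
      (nonZeroDivisors.ne_zero J.2)).2 hfactors

lemma primeBelow_le_absNorm {P : Ideal (𝓞 K)} (hP : P ≠ 0) : primeBelow P ≤ Ideal.absNorm P :=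
  Nat.le_of_dvd (Nat.pos_of_ne_zero (mt Ideal.absNorm_eq_zero_iff.1 hP))
    (Int.absNorm_under_dvd_absNorm P)

lemma prod_prod_primesBelow_le_absNorm [Fintype ι] (c : Ideal (𝓞 K) → ι) {I : Ideal (𝓞 K)}
    (hI : I ≠ 0) :
    ∏ i, (primesBelow c I i).prod ≤ Ideal.absNorm I :=
  calc ∏ i, (primesBelow c I i).prod
      = ((normalizedFactors I).map primeBelow).prod := prod_prod_map_filter_eq c primeBelow _
    _ ≤ ((normalizedFactors I).map Ideal.absNorm).prod :=
        Multiset.prod_map_le_prod_map₀ _ _ (fun _ _ ↦ Nat.zero_le _) fun P hP ↦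
          primeBelow_le_absNorm (prime_of_normalized_factor P hP).ne_zero
    _ = Ideal.absNorm I := by rw [← map_multiset_prod, Ideal.prod_normalizedFactors_eq_self hI]

end Colouring

/-- Splitting the prime factors of an ideal by colour encodes it injectively as
an `n`-tuple of positive integers whose product is at most its norm. -/
lemma dedekindSeries_le_tsum_pow {s : ℝ} (hs : 0 ≤ s) :
    dedekindSeries K s ≤ (∑' m : ℕ, ENNReal.ofReal ((m : ℝ) ^ (-s))) ^ finrank ℚ K := by
  obtain ⟨c, hc⟩ := exists_separatesPrimes K
  rw [← tsum_pi_prod_eq_tsum_pow]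
  refine (ENNReal.tsum_le_tsum fun I ↦ ?_).trans
    (ENNReal.tsum_comp_le_tsum_of_injective (injective_prod_primesBelow hc) _)
  rw [← ENNReal.ofReal_prod_of_nonneg fun _ _ ↦ by positivity]
  apply ENNReal.ofReal_le_ofReal
  rw [Real.finsetProd_rpow _ _ fun _ _ ↦ by positivity, ← Nat.cast_prod]
  refine Real.rpow_le_rpow_of_nonpos ?_ ?_ (neg_nonpos.2 hs)
  · exact_mod_cast Finset.prod_pos fun i _ ↦ prod_primesBelow_pos c I i
  · exact_mod_cast prod_prod_primesBelow_le_absNorm c (nonZeroDivisors.ne_zero I.2)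

end DedekindSeries

section ZetaMajorant

lemma two_mul_mul_le_rpow_sub_rpow {σ t : ℝ} (hσ : 0 ≤ σ) (ht₀ : 0 ≤ t) (ht₁ : t < 1) :
    2 * σ * t ≤ (1 - t) ^ (-σ) - (1 + t) ^ (-σ) := by
  have hsub : 0 < 1 - t := by linarith
  have hadd : 0 < 1 + t := by linarith
  rw [Real.rpow_def_of_pos hsub, Real.rpow_def_of_pos hadd]
  set x := Real.log (1 - t) with hx
  set y := Real.log (1 + t) with hy
  have hxy_add : x + y ≤ 0 := by
    rw [hx, hy, ← Real.log_mul hsub.ne' hadd.ne']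
    exact Real.log_nonpos (by positivity) (by nlinarith)
  have hxy_sub : 2 * t ≤ y - x := by
    have := Real.sum_range_le_log_div ht₀ ht₁ 1
    rw [Real.log_div hadd.ne' hsub.ne'] at this
    norm_num at this
    linarith
  have hsinh : Real.exp (x * -σ) - Real.exp (y * -σ) =
      Real.exp (-(σ * (x + y) / 2)) * (2 * Real.sinh (σ * (y - x) / 2)) := by
    rw [Real.sinh_eq, mul_div_cancel₀ _ two_ne_zero, mul_sub, ← Real.exp_add, ← Real.exp_add]
    ring_nf
  have hself_le : σ * (y - x) / 2 ≤ Real.sinh (σ * (y - x) / 2) :=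
    Real.self_le_sinh_iff.2 (by nlinarith)
  have hone_le : 1 ≤ Real.exp (-(σ * (x + y) / 2)) := Real.one_le_exp (by nlinarith)
  have hle : 2 * σ * t ≤ σ * (y - x) := by nlinarith
  have hnonneg : 0 ≤ 2 * σ * t := by positivity
  rw [hsinh]
  nlinarith

lemma mul_rpow_neg_one_add_le_rpow_sub_rpow {σ m : ℝ} (hσ : 0 ≤ σ) (hm : 1 / 2 < m) :
    σ * m ^ (-(1 + σ)) ≤ (m - 1 / 2) ^ (-σ) - (m + 1 / 2) ^ (-σ) := by
  have hm₀ : 0 < m := by linarith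
  have ht : 1 / (2 * m) < 1 := by rw [div_lt_one (by positivity)]; linarith
  have hsub : m - 1 / 2 = m * (1 - 1 / (2 * m)) := by field_simp
  have hadd : m + 1 / 2 = m * (1 + 1 / (2 * m)) := by field_simp
  have hlhs : σ * m ^ (-(1 + σ)) = m ^ (-σ) * (2 * σ * (1 / (2 * m))) := by
    rw [neg_add, Real.rpow_add hm₀, Real.rpow_neg_one]
    field_simp
  rw [hsub, hadd, Real.mul_rpow hm₀.le (by linarith), Real.mul_rpow hm₀.le (by positivity),
    ← mul_sub, hlhs]
  exact mul_le_mul_of_nonneg_left (two_mul_mul_le_rpow_sub_rpow hσ (by positivity) ht)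
    (by positivity)

/-- An elementary majorant of `σ ζ(1 + σ)`, obtained by comparing the terms `m ≥ 2` of the series
with `∫ x ^ (-1 - σ)` over `[3/2, ∞)`. -/
noncomputable def zetaMajorant (σ : ℝ) : ℝ := σ + (2 / 3 : ℝ) ^ σ

lemma zetaMajorant_pos {σ : ℝ} (hσ : 0 ≤ σ) : 0 < zetaMajorant σ := by
  unfold zetaMajorant
  positivity

lemma zetaMajorant_le {σ : ℝ} (hσ : 0 ≤ σ) : zetaMajorant σ ≤ 1 + σ := by
  have : (2 / 3 : ℝ) ^ σ ≤ 1 := Real.rpow_le_one (by norm_num) (by norm_num) hσ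
  unfold zetaMajorant
  linarith

lemma sum_range_rpow_le {σ : ℝ} (hσ : 0 < σ) (N : ℕ) :
    ∑ m ∈ Finset.range (N + 2), (m : ℝ) ^ (-(1 + σ)) ≤
      (zetaMajorant σ - ((N : ℝ) + 3 / 2) ^ (-σ)) / σ := by
  induction N with
  | zero =>
    have hzero : (0 : ℝ) ^ (-(1 + σ)) = 0 := Real.zero_rpow (by linarith)
    have hinv : (2 / 3 : ℝ) ^ σ = (3 / 2 : ℝ) ^ (-σ) := by
      rw [Real.rpow_neg (by norm_num), ← Real.inv_rpow (by norm_num), inv_div]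
    simp [Finset.sum_range_succ, hzero, zetaMajorant, hinv, hσ.ne', -neg_add_rev]
  | succ N ih =>
    have hterm := mul_rpow_neg_one_add_le_rpow_sub_rpow (m := (N + 2 : ℕ)) hσ.le
      (by push_cast; linarith [(Nat.cast_nonneg N : (0 : ℝ) ≤ N)])
    rw [show ((N + 2 : ℕ) : ℝ) - 1 / 2 = N + 3 / 2 by push_cast; ring,
      show ((N + 2 : ℕ) : ℝ) + 1 / 2 = (N + 1 : ℕ) + 3 / 2 by push_cast; ring] at hterm
    rw [le_div_iff₀ hσ] at ih ⊢
    rw [Finset.sum_range_succ, add_mul]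
    linarith

lemma tsum_ofReal_rpow_le {σ : ℝ} (hσ : 0 < σ) :
    ∑' m : ℕ, ENNReal.ofReal ((m : ℝ) ^ (-(1 + σ))) ≤ ENNReal.ofReal (zetaMajorant σ / σ) := by
  refine ENNReal.tsum_le_of_sum_range_le fun N ↦ ?_
  rw [← ENNReal.ofReal_sum_of_nonneg fun _ _ ↦ by positivity]
  apply ENNReal.ofReal_le_ofReal
  calc ∑ m ∈ Finset.range N, (m : ℝ) ^ (-(1 + σ))
      ≤ ∑ m ∈ Finset.range (N + 2), (m : ℝ) ^ (-(1 + σ)) :=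
        Finset.sum_le_sum_of_subset_of_nonneg (Finset.range_subset_range.2 (by lia))
          fun _ _ _ ↦ by positivity
    _ ≤ (zetaMajorant σ - ((N : ℝ) + 3 / 2) ^ (-σ)) / σ := sum_range_rpow_le hσ N
    _ ≤ zetaMajorant σ / σ := by
        gcongr
        exact sub_le_self _ (by positivity)

end ZetaMajorant

section GammaFactor

/-- The logarithm of `Γ(2 + x) (2π)⁻ˣ (zetaMajorant x)²`, with the concave `log (zetaMajorant x)`
replaced by its tangent at `zetaMajorant x = c`. This makes it convex in `x`, so that its sign on
an interval is decided at the endpoints. -/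
noncomputable def logGammaTangent (c x : ℝ) : ℝ :=
  Real.log (Real.Gamma (2 + x)) - x * Real.log (2 * Real.pi) +
    2 * (Real.log c + zetaMajorant x / c - 1)

lemma convexOn_zetaMajorant : ConvexOn ℝ Set.univ zetaMajorant :=
  (convexOn_id convex_univ).add (convexOn_rpow_left (by norm_num))

lemma convexOn_logGammaTangent {c : ℝ} (hc : 0 ≤ c) :
    ConvexOn ℝ (Set.Ici 0) (logGammaTangent c) := by
  have hGamma : ConvexOn ℝ (Set.Ici (0 : ℝ)) fun x ↦ Real.log (Real.Gamma (2 + x)) :=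
    (Real.convexOn_log_Gamma.translate_right (2 : ℝ)).subset
      (fun x (hx : 0 ≤ x) ↦ show 0 < 2 + x by linarith) (convex_Ici 0)
  have hmajorant : ConvexOn ℝ (Set.Ici (0 : ℝ)) fun x ↦ 2 / c * zetaMajorant x :=
    (convexOn_zetaMajorant.smul (by positivity)).subset (Set.subset_univ _) (convex_Ici 0)
  have hlinear : ConvexOn ℝ (Set.Ici (0 : ℝ)) fun x ↦ x * -Real.log (2 * Real.pi) :=
    (LinearMap.mulRight ℝ (-Real.log (2 * Real.pi))).convexOn (convex_Ici 0)
  refine (((hGamma.add hlinear).add hmajorant).add_const (2 * (Real.log c - 1))).congr fun x _ ↦ ?_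
  simp only [logGammaTangent, Pi.add_apply]
  ring

lemma log_Gamma_add_two_mul_log_le_logGammaTangent {c σ : ℝ} (hc : 0 < c) (hσ : 0 ≤ σ) :
    Real.log (Real.Gamma (2 + σ)) - σ * Real.log (2 * Real.pi) +
      2 * Real.log (zetaMajorant σ) ≤ logGammaTangent c σ := by
  have hpos := zetaMajorant_pos hσ
  have htangent := Real.log_le_sub_one_of_pos (div_pos hpos hc)
  rw [Real.log_div hpos.ne' hc.ne'] at htangent
  unfold logGammaTangent
  linarith

lemma logGammaTangent_nonpos_of_mem_Icc {a b c σ : ℝ} (ha : 0 ≤ a) (hc : 0 ≤ c)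
    (hfa : logGammaTangent c a ≤ 0) (hfb : logGammaTangent c b ≤ 0) (hσ : σ ∈ Set.Icc a b) :
    logGammaTangent c σ ≤ 0 :=
  ((convexOn_logGammaTangent hc).le_max_of_mem_Icc ha (ha.trans (hσ.1.trans hσ.2)) hσ).trans
    (max_le hfa hfb)

lemma log_two_mul_pi_gt : 1.835 < Real.log (2 * Real.pi) := by
  have hmono : Real.log 3.14 ≤ Real.log Real.pi :=
    Real.log_le_log (by norm_num) Real.pi_gt_d2.le
  have hratio := Real.log_le_sub_one_of_pos (by norm_num : (0 : ℝ) < 3 / 3.14)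
  rw [Real.log_div (by norm_num) (by norm_num)] at hratio
  rw [Real.log_mul two_ne_zero Real.pi_pos.ne']
  linarith [Real.log_two_gt_d9, Real.log_three_gt_d9]

lemma Gamma_two_add_half : Real.Gamma (2 + 1 / 2) = 3 / 4 * √Real.pi := by
  rw [show (2 + 1 / 2 : ℝ) = (1 / 2 + 1) + 1 by norm_num, Real.Gamma_add_one (by norm_num),
    Real.Gamma_add_one (by norm_num), Real.Gamma_one_half_eq]
  ring

lemma Gamma_two_add_five_halves : Real.Gamma (2 + 5 / 2) = 105 / 16 * √Real.pi := by
  rw [show (2 + 5 / 2 : ℝ) = ((2 + 1 / 2) + 1) + 1 by norm_num, Real.Gamma_add_one (by norm_num),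
    Real.Gamma_add_one (by norm_num), Gamma_two_add_half]
  ring

lemma log_mul_sqrt_pi {a : ℝ} (ha : a ≠ 0) :
    Real.log (a * √Real.pi) = Real.log a + (Real.log (2 * Real.pi) - Real.log 2) / 2 := by
  rw [Real.log_mul ha (Real.sqrt_pos.2 Real.pi_pos).ne', Real.log_sqrt Real.pi_pos.le,
    Real.log_mul two_ne_zero Real.pi_pos.ne']
  ring

lemma rpow_half_two_thirds_lt : (2 / 3 : ℝ) ^ (1 / 2 : ℝ) < 0.8165 := by
  rw [← Real.sqrt_eq_rpow, Real.sqrt_lt' (by norm_num)]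
  norm_num

lemma zetaMajorant_half_lt : zetaMajorant (1 / 2) < 1.3165 := by
  have := rpow_half_two_thirds_lt
  unfold zetaMajorant
  linarith

lemma zetaMajorant_one : zetaMajorant 1 = 5 / 3 := by
  norm_num [zetaMajorant]

lemma zetaMajorant_two : zetaMajorant 2 = 22 / 9 := by
  norm_num [zetaMajorant]

lemma zetaMajorant_five_halves_lt : zetaMajorant (5 / 2) < 2.863 := by
  have hsplit : (2 / 3 : ℝ) ^ (5 / 2 : ℝ) = 4 / 9 * (2 / 3 : ℝ) ^ (1 / 2 : ℝ) := by
    rw [show (5 / 2 : ℝ) = 2 + 1 / 2 by norm_num, Real.rpow_add (by norm_num), Real.rpow_two]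
    norm_num
  have := rpow_half_two_thirds_lt
  rw [zetaMajorant, hsplit]
  linarith

lemma log_three_halves : Real.log (3 / 2) = Real.log 3 - Real.log 2 :=
  Real.log_div (by norm_num) (by norm_num)

lemma log_eight_thirds : Real.log (8 / 3) = 3 * Real.log 2 - Real.log 3 := by
  rw [Real.log_div (by norm_num) (by norm_num), show (8 : ℝ) = 2 ^ 3 by norm_num, Real.log_pow]
  norm_num

lemma log_six : Real.log 6 = Real.log 2 + Real.log 3 := by
  rw [← Real.log_mul (by norm_num) (by norm_num)]
  norm_num

lemma log_three_quarters : Real.log (3 / 4) = Real.log 3 - 2 * Real.log 2 := by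
  rw [Real.log_div (by norm_num) (by norm_num), show (4 : ℝ) = 2 ^ 2 by norm_num, Real.log_pow]
  norm_num

lemma log_105_div_16_le : Real.log (105 / 16) ≤ 3 * Real.log 3 - 2 * Real.log 2 - 1 / 36 := by
  have hratio := Real.log_le_sub_one_of_pos (by norm_num : (0 : ℝ) < 105 / 108)
  rw [show (105 / 108 : ℝ) = 105 / 16 * 2 ^ 2 / 3 ^ 3 by norm_num,
    Real.log_div (by norm_num) (by norm_num), Real.log_mul (by norm_num) (by norm_num),
    Real.log_pow, Real.log_pow] at hratio
  norm_num at hratio ⊢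
  linarith

lemma logGammaTangent_zero : logGammaTangent 1 0 = 0 := by
  simp [logGammaTangent, zetaMajorant]

lemma logGammaTangent_half_nonpos :
    logGammaTangent 1 (1 / 2) ≤ 0 ∧ logGammaTangent (3 / 2) (1 / 2) ≤ 0 := by
  have := zetaMajorant_half_lt
  rw [logGammaTangent, logGammaTangent, Gamma_two_add_half, log_mul_sqrt_pi (by norm_num),
    log_three_quarters, log_three_halves, Real.log_one]
  constructor <;> linarith [Real.log_two_gt_d9, Real.log_three_lt_d9]

lemma logGammaTangent_one_nonpos :
    logGammaTangent (3 / 2) 1 ≤ 0 ∧ logGammaTangent 2 1 ≤ 0 := by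
  have hGamma : Real.Gamma (2 + 1) = 2 := by
    rw [Real.Gamma_add_one two_ne_zero, Real.Gamma_two, mul_one]
  rw [logGammaTangent, logGammaTangent, hGamma, zetaMajorant_one, log_three_halves]
  constructor <;>
    linarith [log_two_mul_pi_gt, Real.log_two_gt_d9, Real.log_two_lt_d9, Real.log_three_lt_d9]

lemma logGammaTangent_two_nonpos :
    logGammaTangent 2 2 ≤ 0 ∧ logGammaTangent (8 / 3) 2 ≤ 0 := by
  have hGamma : Real.Gamma (2 + 2) = 6 := by
    rw [show (2 + 2 : ℝ) = (2 + 1) + 1 by norm_num, Real.Gamma_add_one (by norm_num),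
      Real.Gamma_add_one two_ne_zero, Real.Gamma_two]
    norm_num
  rw [logGammaTangent, logGammaTangent, hGamma, zetaMajorant_two, log_six, log_eight_thirds]
  constructor <;>
    linarith [log_two_mul_pi_gt, Real.log_two_lt_d9, Real.log_three_gt_d9, Real.log_three_lt_d9]

lemma logGammaTangent_five_halves_nonpos : logGammaTangent (8 / 3) (5 / 2) ≤ 0 := by
  have := zetaMajorant_five_halves_lt
  rw [logGammaTangent, Gamma_two_add_five_halves, log_mul_sqrt_pi (by norm_num), log_eight_thirds]
  linarith [log_two_mul_pi_gt, Real.log_two_lt_d9, Real.log_three_lt_d9, log_105_div_16_le]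

lemma exists_logGammaTangent_nonpos {σ : ℝ} (hσ : σ ∈ Set.Icc 0 (5 / 2)) :
    ∃ c > 0, logGammaTangent c σ ≤ 0 := by
  rcases le_total σ (1 / 2) with hhalf | hhalf
  · exact ⟨1, one_pos, logGammaTangent_nonpos_of_mem_Icc le_rfl (by norm_num)
      logGammaTangent_zero.le logGammaTangent_half_nonpos.1 ⟨hσ.1, hhalf⟩⟩
  rcases le_total σ 1 with hone | hone
  · exact ⟨3 / 2, by norm_num, logGammaTangent_nonpos_of_mem_Icc (by norm_num) (by norm_num)
      logGammaTangent_half_nonpos.2 logGammaTangent_one_nonpos.1 ⟨hhalf, hone⟩⟩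
  rcases le_total σ 2 with htwo | htwo
  · exact ⟨2, two_pos, logGammaTangent_nonpos_of_mem_Icc (by norm_num) (by norm_num)
      logGammaTangent_one_nonpos.2 logGammaTangent_two_nonpos.1 ⟨hone, htwo⟩⟩
  · exact ⟨8 / 3, by norm_num, logGammaTangent_nonpos_of_mem_Icc (by norm_num) (by norm_num)
      logGammaTangent_two_nonpos.2 logGammaTangent_five_halves_nonpos ⟨htwo, hσ.2⟩⟩

lemma Gamma_mul_rpow_mul_zetaMajorant_sq_le_one {σ : ℝ} (hσ : σ ∈ Set.Icc 0 (5 / 2)) :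
    Real.Gamma (2 + σ) * (2 * Real.pi) ^ (-σ) * zetaMajorant σ ^ 2 ≤ 1 := by
  obtain ⟨c, hc, hle⟩ := exists_logGammaTangent_nonpos hσ
  have hlog := (log_Gamma_add_two_mul_log_le_logGammaTangent hc hσ.1).trans hle
  have hGamma : 0 < Real.Gamma (2 + σ) := Real.Gamma_pos_of_pos (by linarith [hσ.1])
  have hmajorant := zetaMajorant_pos hσ.1
  rw [← Real.log_nonpos_iff (by positivity), Real.log_mul (by positivity) (by positivity),
    Real.log_mul (by positivity) (by positivity), Real.log_rpow (by positivity), Real.log_pow]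
  push_cast
  linarith

end GammaFactor

section ResidueUpperBound

/-- The factor that a real place contributes to the bound for the residue. -/
noncomputable def realPlaceFactor (σ : ℝ) : ℝ := 2 * zetaMajorant σ / ((1 + σ) * (2 + σ))

/-- The factor that a complex place contributes to the bound for the residue. -/
noncomputable def complexPlaceFactor (σ : ℝ) : ℝ :=
  (2 * Real.pi) ^ (-σ) * Real.Gamma (1 + σ) * zetaMajorant σ ^ 2

lemma realPlaceFactor_pos {σ : ℝ} (hσ : 0 ≤ σ) : 0 < realPlaceFactor σ := by
  have := zetaMajorant_pos hσ
  unfold realPlaceFactor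
  positivity

lemma complexPlaceFactor_pos {σ : ℝ} (hσ : 0 ≤ σ) : 0 < complexPlaceFactor σ := by
  have := zetaMajorant_pos hσ
  have := Real.Gamma_pos_of_pos (by linarith : 0 < 1 + σ)
  unfold complexPlaceFactor
  positivity

lemma realPlaceFactor_le {σ : ℝ} (hσ : 0 ≤ σ) : realPlaceFactor σ ≤ 2 / (2 + σ) := by
  have := zetaMajorant_le hσ
  rw [realPlaceFactor, div_le_div_iff₀ (by positivity) (by positivity)]
  nlinarith

lemma realPlaceFactor_le_one {σ : ℝ} (hσ : 0 ≤ σ) : realPlaceFactor σ ≤ 1 :=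
  (realPlaceFactor_le hσ).trans <| (div_le_one (by positivity)).2 (by linarith)

lemma one_add_mul_realPlaceFactor_sq_le_one {σ : ℝ} (hσ : 0 ≤ σ) :
    (1 + σ) * realPlaceFactor σ ^ 2 ≤ 1 :=
  calc (1 + σ) * realPlaceFactor σ ^ 2
      ≤ (1 + σ) * (2 / (2 + σ)) ^ 2 := by
        gcongr
        exacts [(realPlaceFactor_pos hσ).le, realPlaceFactor_le hσ]
    _ ≤ 1 := by
        rw [div_pow, ← mul_div_assoc, div_le_one (by positivity)]
        nlinarith

lemma one_add_mul_complexPlaceFactor_le_one {σ : ℝ} (hσ : σ ∈ Set.Icc 0 (5 / 2)) :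
    (1 + σ) * complexPlaceFactor σ ≤ 1 := by
  have hGamma : Real.Gamma (2 + σ) = (1 + σ) * Real.Gamma (1 + σ) := by
    rw [show 2 + σ = (1 + σ) + 1 by ring, Real.Gamma_add_one (by linarith [hσ.1])]
  have hle := Gamma_mul_rpow_mul_zetaMajorant_sq_le_one hσ
  rw [hGamma] at hle
  unfold complexPlaceFactor
  linarith

lemma one_add_mul_pow_mul_pow_le_one {σ : ℝ} (hσ : σ ∈ Set.Icc 0 (5 / 2)) {r₁ r₂ : ℕ}
    (hr : 2 ≤ r₁ + 2 * r₂) :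
    (1 + σ) * (realPlaceFactor σ ^ r₁ * complexPlaceFactor σ ^ r₂) ≤ 1 := by
  have hσ₀ := hσ.1
  have hreal_pos := realPlaceFactor_pos hσ₀
  have hreal_le := realPlaceFactor_le_one hσ₀
  have hcomplex_pos := complexPlaceFactor_pos hσ₀
  have hcomplex := one_add_mul_complexPlaceFactor_le_one hσ
  rcases Nat.eq_zero_or_pos r₂ with rfl | hr₂
  · calc (1 + σ) * (realPlaceFactor σ ^ r₁ * complexPlaceFactor σ ^ 0)
        ≤ (1 + σ) * realPlaceFactor σ ^ 2 := by
          rw [pow_zero, mul_one]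
          gcongr ?_ * ?_
          exact pow_le_pow_of_le_one hreal_pos.le hreal_le (by lia)
      _ ≤ 1 := one_add_mul_realPlaceFactor_sq_le_one hσ₀
  · calc (1 + σ) * (realPlaceFactor σ ^ r₁ * complexPlaceFactor σ ^ r₂)
        ≤ (1 + σ) * (1 * complexPlaceFactor σ) := by
          gcongr ?_ * (?_ * ?_)
          · exact pow_le_one₀ hreal_pos.le hreal_le
          · exact pow_le_of_le_one hcomplex_pos.le (by nlinarith) hr₂.ne'
      _ ≤ 1 := by rwa [one_mul]

lemma exp_four_fifths_lt : Real.exp (4 / 5) < 3 * Real.pi / 4 := by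
  have hpow : Real.exp (4 / 5) ^ 5 < 2.355 ^ 5 :=
    calc Real.exp (4 / 5) ^ 5
        = Real.exp 1 ^ 4 := by rw [← Real.exp_nat_mul, ← Real.exp_nat_mul]; norm_num
      _ < 2.7182818286 ^ 4 :=
          pow_lt_pow_left₀ Real.exp_one_lt_d9 (Real.exp_pos _).le (by norm_num)
      _ ≤ 2.355 ^ 5 := by norm_num
  linarith [lt_of_pow_lt_pow_left₀ 5 (by norm_num) hpow, Real.pi_gt_d2]

variable {K : Type*} [Field K] [NumberField K]

lemma mul_finrank_sub_one_le_log_abs_discr (hn : 1 < finrank ℚ K) :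
    4 / 5 * ((finrank ℚ K : ℝ) - 1) ≤ Real.log |(discr K : ℝ)| := by
  have hdiscr : (4 / 9 * (3 * Real.pi / 4) ^ finrank ℚ K : ℝ) ≤ |(discr K : ℝ)| := by
    exact_mod_cast abs_discr_ge hn
  obtain ⟨N, hN⟩ : ∃ N, finrank ℚ K = N + 1 := ⟨finrank ℚ K - 1, by lia⟩
  rw [hN] at hdiscr ⊢
  rw [Real.le_log_iff_exp_le (lt_of_lt_of_le (by positivity) hdiscr)]
  calc Real.exp (4 / 5 * (((N + 1 : ℕ) : ℝ) - 1))
      = Real.exp (4 / 5) ^ N := by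
        rw [← Real.exp_nat_mul]
        push_cast
        ring_nf
    _ ≤ (3 * Real.pi / 4) ^ N := by
        gcongr
        exact exp_four_fifths_lt.le
    _ = 1 * (3 * Real.pi / 4) ^ N := (one_mul _).symm
    _ ≤ (4 / 9 * (3 * Real.pi / 4)) * (3 * Real.pi / 4) ^ N := by
        gcongr
        linarith [Real.pi_gt_three]
    _ = 4 / 9 * (3 * Real.pi / 4) ^ (N + 1) := by ring
    _ ≤ |(discr K : ℝ)| := hdiscr

lemma classNumber_mul_le_mul_zetaMajorant_pow {σ : ℝ} (hσ : 0 < σ) :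
    classNumber K * (2 ^ nrRealPlaces K * Real.pi ^ nrComplexPlaces K * regulator K) *
      ((1 / √|(discr K : ℝ)|) ^ (1 + σ) / ((1 + σ) * σ)) ≤
    torsionOrder K * ((2 / ((1 + σ) * (2 + σ))) ^ nrRealPlaces K *
        (Real.pi * ((2 * Real.pi) ^ (-(1 + σ)) * Real.Gamma (1 + σ))) ^ nrComplexPlaces K) *
      (zetaMajorant σ / σ) ^ finrank ℚ K := by
  have hmaster := ofReal_classNumber_mul_le_mul_dedekindSeries (K := K)
    (by linarith : 1 < 1 + σ)
  have hseries := (dedekindSeries_le_tsum_pow (K := K) (by linarith : 0 ≤ 1 + σ)).trans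
    (pow_le_pow_left' (tsum_ofReal_rpow_le hσ) _)
  have := Real.Gamma_pos_of_pos (by linarith : 0 < 1 + σ)
  have hmajorant := zetaMajorant_pos hσ.le
  replace hmaster := hmaster.trans (mul_le_mul_right hseries _)
  rw [← ENNReal.ofReal_pow (by positivity), ← ENNReal.ofReal_mul (by positivity),
    ENNReal.ofReal_le_ofReal_iff (by positivity), add_sub_cancel_left,
    show 1 + σ + 1 = 2 + σ by ring] at hmaster
  exact hmaster

lemma pow_mul_pow_mul_zetaMajorant_pow_eq {σ : ℝ} (hσ : 0 < σ) (r₁ r₂ : ℕ) :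
    2 ^ r₂ * ((2 / ((1 + σ) * (2 + σ))) ^ r₁ *
        (Real.pi * ((2 * Real.pi) ^ (-(1 + σ)) * Real.Gamma (1 + σ))) ^ r₂) *
      (zetaMajorant σ / σ) ^ (r₁ + 2 * r₂) * σ ^ (r₁ + 2 * r₂) =
    realPlaceFactor σ ^ r₁ * complexPlaceFactor σ ^ r₂ := by
  have hrpow : (2 * Real.pi) ^ (-(1 + σ)) = (2 * Real.pi) ^ (-σ) / (2 * Real.pi) := by
    rw [neg_add_rev, Real.rpow_add (by positivity), Real.rpow_neg_one, div_eq_mul_inv]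
  have hreal : realPlaceFactor σ = 2 / ((1 + σ) * (2 + σ)) * zetaMajorant σ := by
    rw [realPlaceFactor, mul_div_right_comm]
  have hcomplex : complexPlaceFactor σ = 2 * (Real.pi * ((2 * Real.pi) ^ (-(1 + σ)) *
      Real.Gamma (1 + σ))) * zetaMajorant σ ^ 2 := by
    rw [complexPlaceFactor, hrpow]
    field_simp
  rw [mul_assoc _ (_ ^ _) (σ ^ _), ← mul_pow, div_mul_cancel₀ _ hσ.ne', hreal, hcomplex]
  ring

lemma kappa_mul_pow_le {σ : ℝ} (hσ : 0 < σ) :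
    kappa K * σ ^ (finrank ℚ K - 1) ≤
      (1 + σ) * (realPlaceFactor σ ^ nrRealPlaces K * complexPlaceFactor σ ^ nrComplexPlaces K) *
        √|(discr K : ℝ)| ^ σ := by
  have hmaster := classNumber_mul_le_mul_zetaMajorant_pow (K := K) hσ
  have hq := sqrt_abs_discr_pos (K := K)
  have hw : (0 : ℝ) < torsionOrder K := by exact_mod_cast torsionOrder_pos K
  have hσn : σ ^ finrank ℚ K = σ ^ (finrank ℚ K - 1) * σ := (pow_sub_one_mul finrank_pos.ne' σ).symm
  rw [← pow_mul_pow_mul_zetaMajorant_pow_eq hσ, card_add_two_mul_card_eq_rank, kappa]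
  set q := √|(discr K : ℝ)|
  set X : ℝ := classNumber K * (2 ^ nrRealPlaces K * Real.pi ^ nrComplexPlaces K * regulator K)
    with hX
  set B : ℝ := (2 / ((1 + σ) * (2 + σ))) ^ nrRealPlaces K *
    (Real.pi * ((2 * Real.pi) ^ (-(1 + σ)) * Real.Gamma (1 + σ))) ^ nrComplexPlaces K
  have hpow : (1 / q) ^ (1 + σ) / ((1 + σ) * σ) = 1 / ((1 + σ) * σ * (q * q ^ σ)) := by
    rw [one_div, Real.inv_rpow hq.le, Real.rpow_add hq, Real.rpow_one]
    field_simp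
  rw [hpow, mul_one_div, div_le_iff₀ (by positivity)] at hmaster
  have hkappa : 2 ^ nrRealPlaces K * (2 * Real.pi) ^ nrComplexPlaces K * classNumber K *
      regulator K = 2 ^ nrComplexPlaces K * X := by
    rw [hX, mul_pow]
    ring
  rw [hkappa, div_mul_eq_mul_div, div_le_iff₀ (by positivity)]
  calc 2 ^ nrComplexPlaces K * X * σ ^ (finrank ℚ K - 1)
      ≤ 2 ^ nrComplexPlaces K * (torsionOrder K * B * (zetaMajorant σ / σ) ^ finrank ℚ K *
          ((1 + σ) * σ * (q * q ^ σ))) * σ ^ (finrank ℚ K - 1) := by gcongr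
    _ = (1 + σ) * (2 ^ nrComplexPlaces K * B * (zetaMajorant σ / σ) ^ finrank ℚ K *
          σ ^ finrank ℚ K) * q ^ σ * (torsionOrder K * q) := by
        rw [hσn]
        ring

theorem kappa_le (hn : 2 ≤ finrank ℚ K) :
    kappa K ≤ (Real.exp 1 * Real.log |(discr K : ℝ)| / (2 * ((finrank ℚ K : ℝ) - 1))) ^
      (finrank ℚ K - 1) := by
  have hlog := mul_finrank_sub_one_le_log_abs_discr (K := K) hn
  have hdiscr : 0 < |(discr K : ℝ)| := abs_pos.2 (by exact_mod_cast discr_ne_zero K)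
  have hN : ((finrank ℚ K - 1 : ℕ) : ℝ) = finrank ℚ K - 1 := by
    rw [Nat.cast_sub (by lia), Nat.cast_one]
  have hN_pos : 0 < (finrank ℚ K : ℝ) - 1 := by rw [← hN]; exact_mod_cast Nat.sub_pos_of_lt hn
  set L := Real.log |(discr K : ℝ)| with hL
  have hL_pos : 0 < L := by linarith
  -- This `σ` satisfies `√|Δ_K| ^ σ = e ^ (n - 1)`, and it minimises `√|Δ_K| ^ σ / σ ^ (n - 1)`.
  set σ : ℝ := 2 * ((finrank ℚ K : ℝ) - 1) / L with hσ
  have hσ_pos : 0 < σ := by positivity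
  have hσ_le : σ ≤ 5 / 2 := by rw [hσ, div_le_iff₀ hL_pos]; linarith
  have hsqrt : √|(discr K : ℝ)| ^ σ = Real.exp 1 ^ (finrank ℚ K - 1) := by
    rw [Real.rpow_def_of_pos (Real.sqrt_pos.2 hdiscr), Real.log_sqrt hdiscr.le, ← hL,
      ← Real.exp_nat_mul, hN, hσ]
    congr 1
    field_simp
  have hrhs : Real.exp 1 * L / (2 * ((finrank ℚ K : ℝ) - 1)) = Real.exp 1 / σ := by
    rw [hσ]
    field_simp
  have hfactors := one_add_mul_pow_mul_pow_le_one ⟨hσ_pos.le, hσ_le⟩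
    (hn.trans_eq (card_add_two_mul_card_eq_rank K).symm)
  rw [hrhs, div_pow, ← hsqrt, le_div_iff₀ (by positivity)]
  exact (kappa_mul_pow_le hσ_pos).trans
    (mul_le_of_le_one_left (by positivity) hfactors)

end ResidueUpperBound

end DedekindResidue

/-- Let `g ∈ ℤ[x]` be irreducible with degree `d ≥ 2` and leading coefficient `c`, let `α`
be a root of `g` and `K = ℚ(α)`. With `𝐃_g = |c|^{(d-1)(d-2)} |D_g|`, the Dedekind zeta
residue satisfies `0.36232/√𝐃_g ≤ κ_K ≤ (e log 𝐃_g / (2(d-1)))^{d-1}`. -/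
theorem kappa_bounds (g : Polynomial ℤ) (hirr : Irreducible g)
    (d : ℕ) (hd : d = g.natDegree) (hd2 : 2 ≤ d)
    (c : ℤ) (hc : c = g.leadingCoeff)
    (K : Type*) [Field K] [NumberField K] (α : K)
    (hroot : Polynomial.aeval α g = 0)
    (hgen : IntermediateField.adjoin ℚ {α} = ⊤)
    (Dg : ℝ) (hDg : Dg = (|c| : ℝ) ^ ((d - 1) * (d - 2)) * (|polyDisc g| : ℝ)) :
    0.36232 / Real.sqrt Dg ≤ kappa K ∧
      kappa K ≤ (Real.exp 1 * Real.log Dg / (2 * ((d : ℝ) - 1))) ^ (d - 1) := by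
  subst hd hc
  have hdeg : g.natDegree ≠ 0 := by lia
  have hdiscr_le : |(NumberField.discr K : ℝ)| ≤ Dg := by
    rw [hDg, DedekindResidue.polyDisc_eq_discr (Nat.pos_of_ne_zero hdeg)]
    exact_mod_cast
      DedekindResidue.abs_discr_le_leadingCoeff_pow_mul_abs_discr hirr hdeg hroot hgen
  have hdiscr_one : 1 ≤ |(NumberField.discr K : ℝ)| := by
    exact_mod_cast Int.one_le_abs (NumberField.discr_ne_zero K)
  have hfinrank := DedekindResidue.finrank_eq_natDegree_of_irreducible hirr hdeg hroot hgen
  have hsub_one : 0 < (g.natDegree : ℝ) - 1 := sub_pos.2 (by exact_mod_cast hd2)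
  constructor
  · calc 0.36232 / √Dg ≤ 0.36232 / √|(NumberField.discr K : ℝ)| := by gcongr
      _ ≤ kappa K := DedekindResidue.le_kappa K
  · have hkappa := DedekindResidue.kappa_le (hd2.trans_eq hfinrank.symm)
    rw [hfinrank] at hkappa
    have hlog_nonneg := Real.log_nonneg hdiscr_one
    refine hkappa.trans ?_
    gcongr
end

section
/- Let h ∈ ℤ[x] be monic and irreducible of degree d ≥ 1, let α ∈ ℂ be a root of h, and let K = ℚ(α) with ring of integers O_K. Then for every real x > √|D_h|, | Σ_{N(𝔭) ≤ x} 1/N(𝔭) − Σ_{p ≤ x} ω_h(p)/p | < d·( M_ℚ(√|D_h|) + 0.64 ), where the first sum runs over prime ideals 𝔭 ⊂ O_K of norm N(𝔭) ≤ x and the second over rational primes p ≤ x. -/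
open Polynomial

/-- `ω_f(p)`: the number of `x ∈ ℤ/pℤ` with `f(x) ≡ 0 (mod p)`. -/
noncomputable def omegaPoly (f : Polynomial ℤ) (p : ℕ) : ℕ :=
  {x : ZMod p | Polynomial.aeval x f = 0}.ncard

/-- `M_ℚ(x) = Σ_{p ≤ x} 1/p`, the sum over rational primes `p ≤ x`. -/
noncomputable def MQ (x : ℝ) : ℝ :=
  ∑ p ∈ Finset.filter Nat.Prime (Finset.range (⌊x⌋₊ + 1)), (1 : ℝ) / (p : ℝ)

/-- `Σ_{p ≤ x} ω_f(p)/p`, the sum over rational primes `p ≤ x`. -/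
noncomputable def omegaSum (f : Polynomial ℤ) (x : ℝ) : ℝ :=
  ∑ p ∈ Finset.filter Nat.Prime (Finset.range (⌊x⌋₊ + 1)), (omegaPoly f p : ℝ) / (p : ℝ)

/-- `M_K(x) = Σ_{N(𝔭) ≤ x} 1/N(𝔭)`, the sum over the (nonzero) prime ideals `𝔭` of the
ring of integers of `K` with absolute norm `N(𝔭) ≤ x`. -/
noncomputable def MK (K : Type*) [Field K] [NumberField K] (x : ℝ) : ℝ :=
  ∑' P : {P : Ideal (NumberField.RingOfIntegers K) //
      P.IsPrime ∧ P ≠ ⊥ ∧ (Ideal.absNorm P : ℝ) ≤ x},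
    (1 : ℝ) / (Ideal.absNorm P.1 : ℝ)

/-!
Group the prime ideals by the rational prime `p` below them; let `d = [K : ℚ]`, and let `θ ∈ 𝓞 K` be
the root of `h`. The change-of-basis determinant `m` from an integral basis to the powers of `θ`
lies in the conductor of `ℤ[θ]`, and `|D_h| = m² |disc K|`, so a prime `p > √|D_h|` does not divide
the exponent of `θ`. For such `p`, Kummer–Dedekind matches the prime ideals of degree one above `p`
with the roots of `h` modulo `p`, and the at most `d / 2` remaining ones have norm at least `p²`.
They therefore contribute at most `(d / 2) ∑ 1 / p² < d / 2` in total. For `p ≤ √|D_h|` both local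
terms lie between `0` and `d / p`.
-/

open NumberField IntermediateField

section Resultant

/-- The permutation of `Fin (m + n)` that reverses each of its two blocks, of lengths `m` and `n`.
It relates the columns of `sylvesterMat` to those of `Polynomial.sylvester`. -/
def blockRevPerm (m n : ℕ) : Equiv.Perm (Fin (m + n)) :=
  finSumFinEquiv.symm.trans ((Equiv.sumCongr Fin.revPerm Fin.revPerm).trans finSumFinEquiv)

theorem blockRevPerm_castAdd {m n : ℕ} (j : Fin m) :
    blockRevPerm m n (Fin.castAdd n j) = Fin.castAdd n j.rev := by
  simp [blockRevPerm]

theorem blockRevPerm_natAdd {m n : ℕ} (j : Fin n) :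
    blockRevPerm m n (Fin.natAdd m j) = Fin.natAdd m j.rev := by
  simp [blockRevPerm]

theorem sylvesterMat_submatrix_rev (f g : ℤ[X]) :
    (sylvesterMat f g).submatrix Fin.revPerm (blockRevPerm g.natDegree f.natDegree) =
      sylvester g f g.natDegree f.natDegree := by
  ext i j
  have hi := i.isLt
  induction j using Fin.addCases with
  | left j =>
    have hj := j.isLt
    simp only [Matrix.submatrix_apply, blockRevPerm_castAdd, sylvesterMat, sylvester,
      Matrix.of_apply, Fin.addCases_left, Fin.val_castAdd, Fin.revPerm_apply, Fin.val_rev,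
      Set.mem_Icc]
    grind
  | right j =>
    have hj := j.isLt
    simp only [Matrix.submatrix_apply, blockRevPerm_natAdd, sylvesterMat, sylvester,
      Matrix.of_apply, Fin.addCases_right, Fin.val_natAdd, Fin.revPerm_apply, Fin.val_rev,
      Set.mem_Icc]
    grind

theorem abs_resultantZ (f g : ℤ[X]) : |resultantZ f g| = |resultant f g| := by
  rw [resultant_comm, abs_mul, abs_neg_one_pow, one_mul, resultantZ, resultant,
    ← sylvesterMat_submatrix_rev, Matrix.abs_det_submatrix_equiv_equiv]

theorem abs_polyDisc {f : ℤ[X]} (hf : f.Monic) : |polyDisc f| = |resultant f (derivative f)| := by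
  rw [polyDisc, hf.leadingCoeff, Int.ediv_one, abs_mul, abs_neg_one_pow, one_mul, abs_resultantZ]

end Resultant

section PowerBasis

variable {F L : Type*} [Field F] [Field L] [Algebra F L]

theorem exists_powerBasis_gen_eq {α : L} (hα : IsIntegral F α) (hgen : F⟮α⟯ = ⊤) :
    ∃ pb : PowerBasis F L, pb.gen = α :=
  ⟨PowerBasis.ofAdjoinEqTop hα (by
    rw [← adjoin_simple_toSubalgebra_of_isAlgebraic hα.isAlgebraic, hgen, top_toSubalgebra]),
    PowerBasis.ofAdjoinEqTop_gen _ _⟩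

variable [Algebra.IsSeparable F L] (pb : PowerBasis F L)

theorem norm_aeval_gen_eq_resultant (g : F[X]) :
    Algebra.norm F (aeval pb.gen g) = resultant (minpoly F pb.gen) g := by
  classical
  have := pb.finite
  let E := AlgebraicClosure F
  set μ := minpoly F pb.gen
  have hmonic : μ.Monic := minpoly.monic pb.isIntegral_gen
  have hnodup : (μ.aroots E).Nodup :=
    nodup_roots (Polynomial.Separable.map (Algebra.IsSeparable.isSeparable F pb.gen))
  apply (algebraMap F E).injective
  calc algebraMap F E (Algebra.norm F (aeval pb.gen g))
      = ∏ σ : L →ₐ[F] E, σ (aeval pb.gen g) := Algebra.norm_eq_prod_embeddings F E _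
    _ = ∏ β : {β // β ∈ μ.aroots E}, aeval β.1 g :=
        Fintype.prod_equiv pb.liftEquiv' _ _ fun σ ↦ by
          rw [PowerBasis.liftEquiv'_apply_coe, aeval_algHom_apply]
    _ = ((μ.aroots E).map fun β ↦ aeval β g).prod := by
        rw [Finset.prod_mem_multiset _ _ (fun β ↦ aeval β g) fun _ ↦ rfl,
          Finset.prod_eq_multiset_prod, Multiset.toFinset_val, hnodup.dedup]
    _ = resultant (μ.map (algebraMap F E)) (g.map (algebraMap F E)) μ.natDegree g.natDegree := by
        rw [← natDegree_map (p := μ) (algebraMap F E),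
          resultant_eq_prod_eval _ _ _ natDegree_map_le (IsAlgClosed.splits _),
          (hmonic.map _).leadingCoeff, one_pow, one_mul]
        simp only [eval_map_algebraMap, aroots_def]
    _ = algebraMap F E (resultant μ g) := resultant_map_map _ _ _ _ _

theorem discr_powerBasis_eq_resultant :
    Algebra.discr F pb.basis = (-1) ^ (pb.dim * (pb.dim - 1) / 2) *
      resultant (minpoly F pb.gen) (derivative (minpoly F pb.gen)) := by
  have := pb.finite
  rw [Algebra.discr_powerBasis_eq_norm, norm_aeval_gen_eq_resultant, pb.finrank]

end PowerBasis

section Conductor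

variable {R ι : Type*} [CommRing R] [Fintype ι] [DecidableEq ι]

-- Cramer's rule: `b.toMatrix v * (b.toMatrix v).adjugate` is the scalar matrix of the determinant.
theorem det_toMatrix_smul_mem_span {M : Type*} [AddCommGroup M] [Module R M]
    (b : Module.Basis ι R M) (v : ι → M) (y : M) :
    (b.toMatrix v).det • y ∈ Submodule.span R (Set.range v) := by
  have hlin : Matrix.toLin b b (b.toMatrix v) = b.constr ℕ v := by
    rw [b.toMatrix_eq_toMatrix_constr, Matrix.toLin_toMatrix]
  have hcramer : (b.toMatrix v).det • y =
      Matrix.toLin b b (b.toMatrix v) (Matrix.toLin b b (b.toMatrix v).adjugate y) := by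
    rw [← LinearMap.comp_apply, ← Matrix.toLin_mul, Matrix.mul_adjugate, map_smul, Matrix.toLin_one,
      LinearMap.smul_apply, LinearMap.id_apply]
  rw [hcramer, hlin, ← b.constr_range ℕ]
  exact LinearMap.mem_range_self _ _

variable {S : Type*} [CommRing S] [Algebra R S]

theorem det_toMatrix_mem_conductor (b : Module.Basis ι R S) {v : ι → S} {θ : S}
    (hv : ∀ i, v i ∈ Algebra.adjoin R {θ}) :
    algebraMap R S (b.toMatrix v).det ∈ conductor R θ := by
  have hspan : Submodule.span R (Set.range v) ≤ (Algebra.adjoin R {θ}).toSubmodule :=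
    Submodule.span_le.mpr (Set.range_subset_iff.mpr hv)
  refine mem_conductor_iff.mpr fun y ↦ ?_
  rw [← Algebra.smul_def]
  exact hspan (det_toMatrix_smul_mem_span b v y)

end Conductor

section Exponent

variable {K : Type*} [Field K] [NumberField K]

theorem coe_discr_int {ι : Type*} [Fintype ι] [DecidableEq ι] (v : ι → 𝓞 K) :
    (Algebra.discr ℤ v : ℚ) = Algebra.discr ℚ fun i ↦ (v i : K) := by
  rw [Algebra.discr_def, Algebra.discr_def, ← eq_intCast (Int.castRingHom ℚ), RingHom.map_det]
  congr 1
  ext i j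
  simp [Algebra.traceMatrix_apply, Algebra.traceForm_apply, Algebra.coe_trace_int]

variable {θ : 𝓞 K} {pb : PowerBasis ℚ K}

theorem finrank_eq_natDegree_minpoly_int (hθ : pb.gen = θ) :
    Module.finrank ℚ K = (minpoly ℤ θ).natDegree := by
  rw [pb.finrank, ← pb.natDegree_minpoly, hθ,
    minpoly.isIntegrallyClosed_eq_field_fractions ℚ K θ.isIntegral,
    (minpoly.monic θ.isIntegral).natDegree_map]

theorem coe_discr_int_pow (hθ : pb.gen = θ) :
    (Algebra.discr ℤ fun i : Fin pb.dim ↦ θ ^ (i : ℕ) : ℚ) = Algebra.discr ℚ pb.basis := by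
  rw [coe_discr_int]
  congr 1
  ext i
  simp [hθ]

theorem abs_polyDisc_minpoly (hθ : pb.gen = θ) :
    |polyDisc (minpoly ℤ θ)| = |Algebra.discr ℤ fun i : Fin pb.dim ↦ θ ^ (i : ℕ)| := by
  have hinj : Function.Injective (algebraMap ℤ ℚ) := (algebraMap ℤ ℚ).injective_int
  rw [abs_polyDisc (minpoly.monic θ.isIntegral), ← Int.cast_inj (α := ℚ), Int.cast_abs,
    Int.cast_abs, coe_discr_int_pow hθ, discr_powerBasis_eq_resultant, abs_mul, abs_neg_one_pow,
    one_mul, hθ, minpoly.isIntegrallyClosed_eq_field_fractions ℚ K θ.isIntegral, derivative_map,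
    natDegree_map_eq_of_injective hinj, natDegree_map_eq_of_injective hinj, resultant_map_map,
    eq_intCast]

theorem polyDisc_minpoly_ne_zero (hθ : pb.gen = θ) : polyDisc (minpoly ℤ θ) ≠ 0 := by
  rw [← abs_ne_zero, abs_polyDisc_minpoly hθ, abs_ne_zero, ← Int.cast_ne_zero (α := ℚ),
    coe_discr_int_pow hθ]
  exact Algebra.discr_not_zero_of_basis ℚ pb.basis

theorem exponent_sq_dvd_polyDisc_minpoly (hθ : pb.gen = θ) :
    (RingOfIntegers.exponent θ : ℤ) ^ 2 ∣ polyDisc (minpoly ℤ θ) := by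
  let b : Module.Basis (Fin pb.dim) ℤ (𝓞 K) :=
    (RingOfIntegers.basis K).reindex ((integralBasis K).indexEquiv pb.basis)
  let v : Fin pb.dim → 𝓞 K := fun i ↦ θ ^ (i : ℕ)
  have hdvd : (RingOfIntegers.exponent θ : ℤ) ∣ (b.toMatrix v).det :=
    Int.cast_mem_ideal_iff.mp <| det_toMatrix_mem_conductor b fun i ↦
      pow_mem (Algebra.self_mem_adjoin_singleton ℤ θ) i
  have hdiscr : Algebra.discr ℤ v = (b.toMatrix v).det ^ 2 * discr K := by
    rw [← discr_eq_discr K b, ← Algebra.discr_of_matrix_vecMul, b.toMatrix_map_vecMul]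
  rw [← dvd_abs, abs_polyDisc_minpoly hθ, dvd_abs, hdiscr]
  exact (pow_dvd_pow_of_dvd hdvd 2).mul_right _

theorem le_sqrt_abs_polyDisc_of_dvd_exponent (hθ : pb.gen = θ) {p : ℕ}
    (hp : p ∣ RingOfIntegers.exponent θ) : (p : ℝ) ≤ √|polyDisc (minpoly ℤ θ)| := by
  have hdvd : (p : ℤ) ^ 2 ∣ |polyDisc (minpoly ℤ θ)| :=
    (dvd_abs _ _).mpr <|
      (pow_dvd_pow_of_dvd (mod_cast hp) 2).trans (exponent_sq_dvd_polyDisc_minpoly hθ)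
  have hle := Int.le_of_dvd (abs_pos.mpr (polyDisc_minpoly_ne_zero hθ)) hdvd
  exact Real.le_sqrt_of_sq_le (mod_cast hle)

end Exponent

section RootsModP

open UniqueFactorizationMonoid

theorem card_filter_normalizedFactors_natDegree_eq_one {F : Type*} [Field F] [DecidableEq F]
    {f : F[X]} (hf : f ≠ 0) :
    ((normalizedFactors f).toFinset.filter fun q ↦ q.natDegree = 1).card =
      f.roots.toFinset.card := by
  symm
  refine Finset.card_bij (fun a _ ↦ X - C a) (fun a ha ↦ ?_) (fun a _ b _ hab ↦ ?_) fun q hq ↦ ?_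
  · have hroot : f.IsRoot a := (mem_roots hf).mp (Multiset.mem_toFinset.mp ha)
    rw [Finset.mem_filter, Multiset.mem_toFinset, Polynomial.mem_normalizedFactors_iff hf]
    exact ⟨⟨irreducible_X_sub_C a, monic_X_sub_C a, dvd_iff_isRoot.mpr hroot⟩, natDegree_X_sub_C a⟩
  · simpa using hab
  · rw [Finset.mem_filter, Multiset.mem_toFinset, Polynomial.mem_normalizedFactors_iff hf] at hq
    obtain ⟨⟨-, hmonic, hdvd⟩, hdeg⟩ := hq
    have hqX : X - C (-q.coeff 0) = q := by
      rw [C_neg, sub_neg_eq_add, ← hmonic.eq_X_add_C hdeg]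
    refine ⟨-q.coeff 0, ?_, hqX⟩
    rw [Multiset.mem_toFinset, mem_roots hf, ← dvd_iff_isRoot, hqX]
    exact hdvd

variable {p : ℕ} [Fact p.Prime] {f : ℤ[X]}

theorem omegaPoly_eq_card_roots (hf : f.map (Int.castRingHom (ZMod p)) ≠ 0) :
    omegaPoly f p = (f.map (Int.castRingHom (ZMod p))).roots.toFinset.card := by
  rw [omegaPoly, ← Set.ncard_coe_finset]
  congr 1
  ext a
  simp [mem_roots hf, eval_map, aeval_def]

theorem omegaPoly_le_natDegree (hf : f.map (Int.castRingHom (ZMod p)) ≠ 0) :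
    omegaPoly f p ≤ f.natDegree := by
  rw [omegaPoly_eq_card_roots hf]
  exact (Multiset.toFinset_card_le _).trans ((card_roots' _).trans natDegree_map_le)

end RootsModP

section PrimesAbove

variable (K : Type*) [Field K] [NumberField K] (p : ℕ)

/-- The prime ideals of `𝓞 K` lying over the rational prime `p`. The definition is meaningful only
for `p` prime, see `mem_primesAbove`. -/
noncomputable def primesAbove : Finset (Ideal (𝓞 K)) :=
  IsDedekindDomain.primesOverFinset (Ideal.span {(p : ℤ)}) (𝓞 K)

variable {K p} [hp : Fact p.Prime] {P : Ideal (𝓞 K)}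

theorem mem_primesAbove : P ∈ primesAbove K p ↔ P ∈ (Ideal.span {(p : ℤ)}).primesOver (𝓞 K) :=
  have := Int.ideal_span_isMaximal_of_prime p
  IsDedekindDomain.mem_primesOverFinset_iff (by simp [hp.out.ne_zero]) _

theorem mem_primesAbove_iff_absNorm_under :
    P ∈ primesAbove K p ↔ P.IsPrime ∧ Ideal.absNorm (P.under ℤ) = p := by
  rw [mem_primesAbove]
  refine and_congr_right fun _ ↦ ⟨fun hover ↦ ?_, fun hnorm ↦ ⟨?_⟩⟩
  · simp [← hover.over]
  · rw [← hnorm, Int.ideal_span_absNorm_eq_self]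

theorem absNorm_of_mem_primesAbove (hP : P ∈ primesAbove K p) :
    Ideal.absNorm P = p ^ P.inertiaDeg ℤ := by
  obtain ⟨_, _⟩ := mem_primesAbove.mp hP
  exact (Ideal.natAbs_pow_inertiaDeg (p : ℤ) P).symm

theorem ne_bot_of_mem_primesAbove (hP : P ∈ primesAbove K p) : P ≠ ⊥ := by
  rintro rfl
  have hnorm := absNorm_of_mem_primesAbove hP
  rw [Ideal.absNorm_bot] at hnorm
  exact pow_ne_zero _ hp.out.ne_zero hnorm.symm

theorem inertiaDeg_pos_of_mem_primesAbove (hP : P ∈ primesAbove K p) : 0 < P.inertiaDeg ℤ :=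
  have := (mem_primesAbove.mp hP).1
  P.inertiaDeg_pos ℤ

variable (K p) in
theorem sum_inertiaDeg_primesAbove_le :
    ∑ P ∈ primesAbove K p, P.inertiaDeg ℤ ≤ Module.finrank ℚ K := by
  have := Int.ideal_span_isMaximal_of_prime p
  have := Fintype.subtype (primesAbove K p) fun _ ↦ mem_primesAbove
  calc ∑ P ∈ primesAbove K p, P.inertiaDeg ℤ
      = ∑ P : (Ideal.span {(p : ℤ)}).primesOver (𝓞 K), P.1.inertiaDeg ℤ :=
        Finset.sum_subtype _ (fun _ ↦ mem_primesAbove) _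
    _ ≤ ∑ P : (Ideal.span {(p : ℤ)}).primesOver (𝓞 K),
          P.1.ramificationIdx ℤ * P.1.inertiaDeg ℤ :=
        Finset.sum_le_sum fun P _ ↦
          have := P.2.1
          Nat.le_mul_of_pos_left _ (P.1.ramificationIdx_pos ℤ)
    _ = Module.finrank ℚ K := by
        rw [Ideal.sum_ramification_inertia_eq_finrank, RingOfIntegers.rank]

theorem sum_one_div_absNorm_le {s : Finset (Ideal (𝓞 K))} (hs : s ⊆ primesAbove K p) {k : ℕ}
    (hk : k ≠ 0) (hdeg : ∀ P ∈ s, k ≤ P.inertiaDeg ℤ) :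
    ∑ P ∈ s, 1 / (Ideal.absNorm P : ℝ) ≤ Module.finrank ℚ K / k * (1 / (p : ℝ) ^ k) := by
  have hk0 : (0 : ℝ) < k := by positivity
  have hp1 : (1 : ℝ) ≤ p := mod_cast hp.out.one_le
  have hterm (P) (hP : P ∈ s) :
      1 / (Ideal.absNorm P : ℝ) ≤ P.inertiaDeg ℤ / k * (1 / (p : ℝ) ^ k) := by
    have hdegP : (1 : ℝ) ≤ P.inertiaDeg ℤ / k := by
      rw [one_le_div hk0]
      exact_mod_cast hdeg P hP
    calc 1 / (Ideal.absNorm P : ℝ) = 1 / (p : ℝ) ^ P.inertiaDeg ℤ := by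
          rw [absNorm_of_mem_primesAbove (hs hP), Nat.cast_pow]
      _ ≤ 1 / (p : ℝ) ^ k := by gcongr; exact hdeg P hP
      _ ≤ P.inertiaDeg ℤ / k * (1 / (p : ℝ) ^ k) := le_mul_of_one_le_left (by positivity) hdegP
  have hsum : ∑ P ∈ s, P.inertiaDeg ℤ ≤ Module.finrank ℚ K :=
    (Finset.sum_le_sum_of_subset hs).trans (sum_inertiaDeg_primesAbove_le K p)
  calc ∑ P ∈ s, 1 / (Ideal.absNorm P : ℝ)
      ≤ ∑ P ∈ s, P.inertiaDeg ℤ / k * (1 / (p : ℝ) ^ k) := Finset.sum_le_sum hterm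
    _ = (∑ P ∈ s, P.inertiaDeg ℤ : ℕ) / k * (1 / (p : ℝ) ^ k) := by
        rw [← Finset.sum_mul, ← Finset.sum_div, Nat.cast_sum]
    _ ≤ Module.finrank ℚ K / k * (1 / (p : ℝ) ^ k) := by gcongr

variable {θ : 𝓞 K}

theorem card_primesAbove_inertiaDeg_eq (hexp : ¬ p ∣ RingOfIntegers.exponent θ) (n : ℕ) :
    ((primesAbove K p).filter fun P ↦ P.inertiaDeg ℤ = n).card =
      ((RingOfIntegers.monicFactorsMod θ p).filter fun q ↦ q.natDegree = n).card := by
  let e := Ideal.primesOverSpanEquivMonicFactorsMod hexp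
  symm
  refine Finset.card_bij (fun q hq ↦ (e.symm ⟨q, (Finset.mem_filter.mp hq).1⟩ : Ideal (𝓞 K)))
    (fun q hq ↦ ?_) (fun q _ r _ hqr ↦ ?_) fun P hP ↦ ?_
  · obtain ⟨hmem, hdeg⟩ := Finset.mem_filter.mp hq
    rw [Finset.mem_filter, mem_primesAbove,
      Ideal.inertiaDeg_primesOverSpanEquivMonicFactorsMod_symm_apply' hexp hmem]
    exact ⟨Subtype.coe_prop _, hdeg⟩
  · simpa using e.symm.injective (Subtype.ext hqr)
  · obtain ⟨hmem, hdeg⟩ := Finset.mem_filter.mp hP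
    have hPe : (e.symm (e ⟨P, mem_primesAbove.mp hmem⟩) : Ideal (𝓞 K)) = P := by
      rw [e.symm_apply_apply]
    refine ⟨e ⟨P, mem_primesAbove.mp hmem⟩, ?_, hPe⟩
    rw [Finset.mem_filter, ← hdeg,
      ← Ideal.inertiaDeg_primesOverSpanEquivMonicFactorsMod_symm_apply' hexp (Subtype.coe_prop _)]
    exact ⟨Subtype.coe_prop _, congrArg (Ideal.inertiaDeg · ℤ) hPe⟩

theorem card_primesAbove_inertiaDeg_eq_one (hexp : ¬ p ∣ RingOfIntegers.exponent θ) :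
    ((primesAbove K p).filter fun P ↦ P.inertiaDeg ℤ = 1).card = omegaPoly (minpoly ℤ θ) p := by
  have hne : (minpoly ℤ θ).map (Int.castRingHom (ZMod p)) ≠ 0 :=
    map_monic_ne_zero (minpoly.monic θ.isIntegral)
  rw [card_primesAbove_inertiaDeg_eq hexp, omegaPoly_eq_card_roots hne,
    card_filter_normalizedFactors_natDegree_eq_one hne]

end PrimesAbove

section LocalContribution

variable (K : Type*) [Field K] [NumberField K]

/-- The contribution to `M_K(x)` of the prime ideals lying over the rational prime `p`. -/
noncomputable def localMK (p : ℕ) (x : ℝ) : ℝ :=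
  ∑ P ∈ primesAbove K p with (Ideal.absNorm P : ℝ) ≤ x, 1 / (Ideal.absNorm P : ℝ)

theorem finite_setOf_isPrime_absNorm_le (x : ℝ) :
    {P : Ideal (𝓞 K) | P.IsPrime ∧ P ≠ ⊥ ∧ (Ideal.absNorm P : ℝ) ≤ x}.Finite :=
  (Ideal.finite_setOfPred_absNorm_le ⌊x⌋₊).subset fun _ hP ↦ Nat.le_floor hP.2.2

theorem MK_eq_sum_localMK (x : ℝ) : MK K x = ∑ p ∈ Nat.primesLE ⌊x⌋₊, localMK K p x := by
  let T : Finset (Ideal (𝓞 K)) := (finite_setOf_isPrime_absNorm_le K x).toFinset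
  have hmaps (P) (hP : P ∈ T) : Ideal.absNorm (P.under ℤ) ∈ Nat.primesLE ⌊x⌋₊ := by
    obtain ⟨_, hne, hnorm⟩ := (Set.Finite.mem_toFinset _).mp hP
    have : NeZero P := ⟨hne⟩
    have hpos : 0 < Ideal.absNorm P := Nat.pos_of_ne_zero (Ideal.absNorm_eq_zero_iff.not.mpr hne)
    exact Nat.mem_primesLE.mpr ⟨(Nat.le_of_dvd hpos (Int.absNorm_under_dvd_absNorm P)).trans
      (Nat.le_floor hnorm), Nat.absNorm_under_prime P⟩
  have hfiber (p) (hp : p ∈ Nat.primesLE ⌊x⌋₊) :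
      T.filter (fun P ↦ Ideal.absNorm (P.under ℤ) = p) =
        (primesAbove K p).filter fun P ↦ (Ideal.absNorm P : ℝ) ≤ x := by
    have : Fact p.Prime := ⟨(Nat.mem_primesLE.mp hp).2⟩
    ext P
    have hne : P ∈ primesAbove K p → P ≠ ⊥ := ne_bot_of_mem_primesAbove
    simp only [T, Finset.mem_filter, Set.Finite.mem_toFinset, Set.mem_ofPred_eq,
      mem_primesAbove_iff_absNorm_under] at hne ⊢
    tauto
  calc MK K x = ∑' P : (T : Set (Ideal (𝓞 K))), 1 / (Ideal.absNorm P.1 : ℝ) := by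
        rw [Set.Finite.coe_toFinset]; rfl
    _ = ∑ P ∈ T, 1 / (Ideal.absNorm P : ℝ) := T.tsum_subtype' fun P ↦ 1 / (Ideal.absNorm P : ℝ)
    _ = ∑ p ∈ Nat.primesLE ⌊x⌋₊, localMK K p x := by
        rw [← Finset.sum_fiberwise_of_maps_to hmaps]
        exact Finset.sum_congr rfl fun p hp ↦ by rw [localMK, hfiber p hp]

variable {K} {p : ℕ} [hp : Fact p.Prime]

theorem abs_localMK_sub_le {f : ℤ[X]} (hf : f.Monic) (hdeg : f.natDegree ≤ Module.finrank ℚ K)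
    (x : ℝ) : |localMK K p x - omegaPoly f p / p| ≤ Module.finrank ℚ K * (1 / (p : ℝ)) := by
  have hlocal : localMK K p x ≤ Module.finrank ℚ K * (1 / (p : ℝ)) := by
    have hsum := sum_one_div_absNorm_le (p := p) (k := 1)
      (Finset.filter_subset (fun P : Ideal (𝓞 K) ↦ (Ideal.absNorm P : ℝ) ≤ x) _) one_ne_zero
      fun P hP ↦ inertiaDeg_pos_of_mem_primesAbove (Finset.mem_of_mem_filter P hP)
    rwa [Nat.cast_one, div_one, pow_one] at hsum
  have homega : (omegaPoly f p / p : ℝ) ≤ Module.finrank ℚ K * (1 / (p : ℝ)) := by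
    rw [mul_one_div]
    gcongr
    exact (omegaPoly_le_natDegree (map_monic_ne_zero hf)).trans hdeg
  exact abs_sub_le_of_nonneg_of_le (Finset.sum_nonneg fun _ _ ↦ by positivity) hlocal
    (by positivity) homega

theorem sum_one_div_absNorm_inertiaDeg_eq_one {θ : 𝓞 K}
    (hexp : ¬ p ∣ RingOfIntegers.exponent θ) :
    ∑ P ∈ primesAbove K p with P.inertiaDeg ℤ = 1, 1 / (Ideal.absNorm P : ℝ) =
      omegaPoly (minpoly ℤ θ) p / p := by
  rw [← card_primesAbove_inertiaDeg_eq_one hexp, Finset.sum_congr rfl (g := fun _ ↦ 1 / (p : ℝ)),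
    Finset.sum_const, nsmul_eq_mul, mul_one_div]
  intro P hP
  obtain ⟨hmem, hdeg⟩ := Finset.mem_filter.mp hP
  rw [absNorm_of_mem_primesAbove hmem, hdeg, pow_one]

theorem abs_localMK_sub_le_of_not_dvd_exponent {θ : 𝓞 K}
    (hexp : ¬ p ∣ RingOfIntegers.exponent θ) {x : ℝ} (hpx : p ≤ x) :
    |localMK K p x - omegaPoly (minpoly ℤ θ) p / p| ≤
      Module.finrank ℚ K / 2 * (1 / (p : ℝ) ^ 2) := by
  have hdegOne : ((primesAbove K p).filter fun P ↦ (Ideal.absNorm P : ℝ) ≤ x).filter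
      (fun P ↦ P.inertiaDeg ℤ = 1) = (primesAbove K p).filter fun P ↦ P.inertiaDeg ℤ = 1 := by
    rw [Finset.filter_filter]
    refine Finset.filter_congr fun P hP ↦ and_iff_right_of_imp fun hdeg ↦ ?_
    rwa [absNorm_of_mem_primesAbove hP, hdeg, pow_one]
  rw [localMK, ← Finset.sum_filter_add_sum_filter_not _ fun P ↦ P.inertiaDeg ℤ = 1, hdegOne,
    sum_one_div_absNorm_inertiaDeg_eq_one hexp, add_sub_cancel_left,
    abs_of_nonneg (Finset.sum_nonneg fun _ _ ↦ by positivity)]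
  refine mod_cast sum_one_div_absNorm_le (k := 2)
    ((Finset.filter_subset _ _).trans (Finset.filter_subset _ _)) two_ne_zero fun P hP ↦ ?_
  simp only [Finset.mem_filter] at hP
  have hpos := inertiaDeg_pos_of_mem_primesAbove hP.1.1
  lia

end LocalContribution

section Main

theorem sum_primesLE_one_div_sq_lt_one (N : ℕ) :
    ∑ p ∈ Nat.primesLE N, 1 / (p : ℝ) ^ 2 < 1 := by
  rcases N.eq_zero_or_pos with rfl | hN
  · simp
  · calc ∑ p ∈ Nat.primesLE N, 1 / (p : ℝ) ^ 2
        ≤ ∑ n ∈ Finset.Ioc 1 N, ((n : ℝ) ^ 2)⁻¹ := by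
          simp only [one_div]
          rw [Nat.primesLE_eq_filter_Ioc_one]
          exact Finset.sum_le_sum_of_subset_of_nonneg (Finset.filter_subset _ _)
            fun _ _ _ ↦ by positivity
      _ ≤ ((1 : ℕ) : ℝ)⁻¹ - (N : ℝ)⁻¹ := sum_Ioc_inv_sq_le_sub one_ne_zero hN
      _ < 1 := by simpa using hN

theorem sum_primesLE_filter_le_MQ (N : ℕ) (s : ℝ) :
    ∑ p ∈ Nat.primesLE N with ((p : ℕ) : ℝ) ≤ s, 1 / (p : ℝ) ≤ MQ s := by
  refine Finset.sum_le_sum_of_subset_of_nonneg (t := Nat.primesLE ⌊s⌋₊) (fun p hp ↦ ?_)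
    fun _ _ _ ↦ by positivity
  obtain ⟨hmem, hps⟩ := Finset.mem_filter.mp hp
  exact Nat.mem_primesLE.mpr ⟨Nat.le_floor hps, (Nat.mem_primesLE.mp hmem).2⟩

theorem minpoly_int_eq_of_irreducible {S : Type*} [CommRing S] [IsDomain S] [CharZero S] {h : ℤ[X]}
    (hmonic : h.Monic) (hirr : Irreducible h) {θ : S} (hroot : aeval θ h = 0) :
    minpoly ℤ θ = h := by
  have hint : IsIntegral ℤ θ := ⟨h, hmonic, hroot⟩
  exact eq_of_monic_of_associated (minpoly.monic hint) hmonic <|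
    (minpoly.irreducible hint).associated_of_dvd hirr (minpoly.isIntegrallyClosed_dvd hint hroot)

variable {K : Type*} [Field K] [NumberField K]

theorem abs_localMK_sub_le_of_mem_primesLE {θ : 𝓞 K} {pb : PowerBasis ℚ K} (hθ : pb.gen = θ)
    {x : ℝ} {p : ℕ} (hp : p ∈ Nat.primesLE ⌊x⌋₊) :
    |localMK K p x - omegaPoly (minpoly ℤ θ) p / p| ≤
      Module.finrank ℚ K * (if (p : ℝ) ≤ √|polyDisc (minpoly ℤ θ)| then 1 / (p : ℝ) else 0) +
        Module.finrank ℚ K / 2 * (1 / (p : ℝ) ^ 2) := by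
  obtain ⟨hpx, hprime⟩ := Nat.mem_primesLE.mp hp
  have : Fact p.Prime := ⟨hprime⟩
  split_ifs with hps
  · refine (abs_localMK_sub_le (minpoly.monic θ.isIntegral)
      (finrank_eq_natDegree_minpoly_int hθ).ge x).trans (le_add_of_nonneg_right ?_)
    positivity
  · rw [mul_zero, zero_add]
    exact abs_localMK_sub_le_of_not_dvd_exponent
      (fun hexp ↦ hps (le_sqrt_abs_polyDisc_of_dvd_exponent hθ hexp))
      ((Nat.le_floor_iff' hprime.ne_zero).mp hpx)

theorem abs_MK_sub_omegaSum_minpoly_lt {θ : 𝓞 K} {pb : PowerBasis ℚ K} (hθ : pb.gen = θ) (x : ℝ) :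
    |MK K x - omegaSum (minpoly ℤ θ) x| <
      Module.finrank ℚ K * (MQ √|polyDisc (minpoly ℤ θ)| + 1 / 2) := by
  have hd : (0 : ℝ) < Module.finrank ℚ K := mod_cast Module.finrank_pos
  let s := √|polyDisc (minpoly ℤ θ)|
  let d := (Module.finrank ℚ K : ℝ)
  calc |MK K x - omegaSum (minpoly ℤ θ) x|
      = |∑ p ∈ Nat.primesLE ⌊x⌋₊, (localMK K p x - omegaPoly (minpoly ℤ θ) p / p)| := by
        rw [MK_eq_sum_localMK, Finset.sum_sub_distrib]; rfl
    _ ≤ ∑ p ∈ Nat.primesLE ⌊x⌋₊,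
          (d * (if (p : ℝ) ≤ s then 1 / (p : ℝ) else 0) + d / 2 * (1 / (p : ℝ) ^ 2)) :=
        (Finset.abs_sum_le_sum_abs _ _).trans <|
          Finset.sum_le_sum fun _ hp ↦ abs_localMK_sub_le_of_mem_primesLE hθ hp
    _ = d * ∑ p ∈ Nat.primesLE ⌊x⌋₊ with ((p : ℕ) : ℝ) ≤ s, 1 / (p : ℝ) +
          d / 2 * ∑ p ∈ Nat.primesLE ⌊x⌋₊, 1 / (p : ℝ) ^ 2 := by
        rw [Finset.sum_add_distrib, ← Finset.mul_sum, ← Finset.mul_sum, Finset.sum_filter]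
    _ < d * MQ s + d / 2 * 1 :=
        add_lt_add_of_le_of_lt
          (mul_le_mul_of_nonneg_left (sum_primesLE_filter_le_MQ _ s) hd.le)
          (mul_lt_mul_of_pos_left (sum_primesLE_one_div_sq_lt_one _) (half_pos hd))
    _ = d * (MQ s + 1 / 2) := by ring

theorem MK_sub_omegaSum_lt_general {h : ℤ[X]} (hmonic : h.Monic) (hirr : Irreducible h) {α : K}
    (hroot : aeval α h = 0) (hgen : ℚ⟮α⟯ = ⊤) (x : ℝ) :
    |MK K x - omegaSum h x| < h.natDegree * (MQ √|polyDisc h| + 1 / 2) := by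
  obtain ⟨θ, rfl⟩ : ∃ θ : 𝓞 K, (θ : K) = α := ⟨⟨α, h, hmonic, hroot⟩, rfl⟩
  obtain rfl : minpoly ℤ θ = h :=
    minpoly_int_eq_of_irreducible hmonic hirr ((aeval_algebraMap_eq_zero_iff K θ h).mp hroot)
  obtain ⟨pb, hθ⟩ := exists_powerBasis_gen_eq (IsIntegral.of_finite ℚ (θ : K)) hgen
  rw [← finrank_eq_natDegree_minpoly_int hθ]
  exact abs_MK_sub_omegaSum_minpoly_lt hθ x

end Main

/-- Let `h ∈ ℤ[x]` be monic and irreducible of degree `d ≥ 1`, `α` a root of `h`, and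
`K = ℚ(α)`. For every real `x > √|D_h|`,
`|Σ_{N(𝔭) ≤ x} 1/N(𝔭) − Σ_{p ≤ x} ω_h(p)/p| < d (M_ℚ(√|D_h|) + 0.64)`. -/
theorem MK_sub_omegaSum_lt (h : Polynomial ℤ) (hmonic : h.Monic)
    (hirr : Irreducible h) (d : ℕ) (hd : d = h.natDegree) (hd1 : 1 ≤ d)
    (K : Type*) [Field K] [NumberField K] (α : K)
    (hroot : Polynomial.aeval α h = 0)
    (hgen : IntermediateField.adjoin ℚ {α} = ⊤)
    (x : ℝ) (hx : x > Real.sqrt (|polyDisc h| : ℝ)) :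
    |MK K x - omegaSum h x|
      < (d : ℝ) * (MQ (Real.sqrt (|polyDisc h| : ℝ)) + 0.64) := by
  subst hd
  refine (MK_sub_omegaSum_lt_general hmonic hirr hroot hgen x).trans_le ?_
  gcongr
  norm_num
end
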